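/- Let n ≥ 1, m ∈ ℝ and 1 ≥ ρ > δ ≥ 0. Assume σ ∈ S^m_{ρ,δ}(ℝⁿ) is real-valued and satisfies the ellipticity condition σ(x,ξ) ≥ c (1+|ξ|²)^{m/2} for all (x,ξ) ∈ ℝⁿ×ℝⁿ, for some constant c > 0. Then there exists a constant C > 0 such that for all f ∈ 𝒮(ℝⁿ): Re ∫_{ℝⁿ} Op^{KN}(σ)f(x) · conj(f(x)) dx ≥ −C ‖f‖²_{H^{(m−(ρ−δ))/2}(ℝⁿ)}. (Theorem A.3: Gårding inequality for the Hörmander calculus on ℝⁿ.) -/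

import Mathlib

open MeasureTheory Complex

noncomputable section

/-- `e^{2πit}`. -/
def expi (t : ℝ) : ℂ := Complex.exp (2 * (Real.pi : ℂ) * Complex.I * (t : ℂ))

/-- Dot product on `ℝⁿ`. -/
def dotp {n : ℕ} (x y : Fin n → ℝ) : ℝ := ∑ i, x i * y i

/-- Euclidean Fourier transform `𝓕f(ξ) = ∫ f(y) e^{-2πi y·ξ} dy`. -/
def FT {n : ℕ} (f : (Fin n → ℝ) → ℂ) (ξ : Fin n → ℝ) : ℂ :=
  ∫ y, f y * expi (-(dotp y ξ))

/-- Bargmann-type transform `B_a[f](x,ξ) = ∫ f(y) a(y-x) e^{-2πi y·ξ} dy`. -/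
def Barg {n : ℕ} (a f : (Fin n → ℝ) → ℂ) (x ξ : Fin n → ℝ) : ℂ :=
  ∫ y, f y * a (y - x) * expi (-(dotp y ξ))

/-- Wick quantization with window `a`. -/
def WickOp {n : ℕ} (a : (Fin n → ℝ) → ℂ) (σ : (Fin n → ℝ) → (Fin n → ℝ) → ℂ)
    (f : (Fin n → ℝ) → ℂ) (y : Fin n → ℝ) : ℂ :=
  ∫ p : (Fin n → ℝ) × (Fin n → ℝ),
    σ p.1 p.2 * Barg a f p.1 p.2 * (starRingEnd ℂ) (a (y - p.1)) * expi (dotp y p.2)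

/-- Kohn–Nirenberg quantization. -/
def OpKN {n : ℕ} (σ : (Fin n → ℝ) → (Fin n → ℝ) → ℂ) (f : (Fin n → ℝ) → ℂ)
    (x : Fin n → ℝ) : ℂ :=
  ∫ ξ, expi (dotp x ξ) * σ x ξ * FT f ξ

/-- Partial derivative in the `i`-th coordinate direction. -/
def pd {n : ℕ} (i : Fin n) (F : (Fin n → ℝ) → ℂ) : (Fin n → ℝ) → ℂ :=
  fun x => fderiv ℝ F x (Pi.single i 1)

/-- Multi-index derivative `∂^α`. -/
def md {n : ℕ} (α : Fin n → ℕ) (F : (Fin n → ℝ) → ℂ) : (Fin n → ℝ) → ℂ :=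
  (((List.finRange n).map fun i => (pd i)^[α i]).foldr (· ∘ ·) id) F

/-- Mixed derivative `∂_x^β ∂_ξ^α σ`. -/
def mixedD {n : ℕ} (β α : Fin n → ℕ) (σ : (Fin n → ℝ) → (Fin n → ℝ) → ℂ) :
    (Fin n → ℝ) → (Fin n → ℝ) → ℂ :=
  fun x ξ => md β (fun x' => md α (fun ξ' => σ x' ξ') ξ) x

/-- The weight `1 + |ξ|²` (Euclidean norm squared). -/
def wt {n : ℕ} (ξ : Fin n → ℝ) : ℝ := 1 + ∑ i, ξ i ^ 2

/-- Length `|α|` of a multi-index, as a real number. -/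
def mOrd {n : ℕ} (α : Fin n → ℕ) : ℝ := ∑ i, (α i : ℝ)

/-- The Hörmander class `S^m_{ρ,δ}(ℝⁿ)`. -/
def SymbolClass {n : ℕ} (m ρ δ : ℝ) (σ : (Fin n → ℝ) → (Fin n → ℝ) → ℂ) : Prop :=
  (ContDiff ℝ (⊤ : ℕ∞) fun p : (Fin n → ℝ) × (Fin n → ℝ) => σ p.1 p.2) ∧
  ∀ α β : Fin n → ℕ, ∃ C > 0, ∀ x ξ,
    ‖mixedD β α σ x ξ‖ ≤ C * wt ξ ^ ((m - ρ * mOrd α + δ * mOrd β) / 2)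

/-- The seminorm `‖σ‖_{S^m_{ρ,δ},α,β}`. -/
def hSem {n : ℕ} (m ρ δ : ℝ) (α β : Fin n → ℕ)
    (σ : (Fin n → ℝ) → (Fin n → ℝ) → ℂ) : ℝ :=
  ⨆ p : (Fin n → ℝ) × (Fin n → ℝ),
    wt p.2 ^ (-(m - ρ * mOrd α + δ * mOrd β) / 2) * ‖mixedD β α σ p.1 p.2‖

/-- Squared Sobolev norm `‖f‖²_{H^s}`. -/
def sobSq {n : ℕ} (s : ℝ) (f : (Fin n → ℝ) → ℂ) : ℝ :=
  ∫ ξ, wt ξ ^ s * ‖FT f ξ‖ ^ 2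

end


noncomputable section

/-- Inverse Fourier transform. -/
def IFT {n : ℕ} (G : (Fin n → ℝ) → ℂ) (x : Fin n → ℝ) : ℂ :=
  ∫ ξ, expi (dotp x ξ) * G ξ

lemma norm_expi (t : ℝ) : ‖expi t‖ = 1 := by
  unfold expi
  rw [show 2 * (Real.pi : ℂ) * Complex.I * (t : ℂ) = ((2 * Real.pi * t : ℝ) : ℂ) * Complex.I by
    push_cast; ring]
  exact Complex.norm_exp_ofReal_mul_I _

lemma expi_add (s t : ℝ) : expi (s + t) = expi s * expi t := by
  unfold expi
  rw [← Complex.exp_add]; congr 1; push_cast; ring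

lemma expi_zero : expi 0 = 1 := by simp [expi]

lemma conj_expi (t : ℝ) : (starRingEnd ℂ) (expi t) = expi (-t) := by
  unfold expi
  rw [← Complex.exp_conj]; congr 1
  simp [Complex.conj_ofReal, Complex.conj_ofNat]

lemma continuous_expi : Continuous expi := by
  unfold expi; fun_prop

lemma continuous_dotp {n : ℕ} : Continuous (fun p : (Fin n → ℝ) × (Fin n → ℝ) => dotp p.1 p.2) := by
  unfold dotp; fun_prop

lemma Continuous.edot {n : ℕ} {X : Type*} [TopologicalSpace X] {f g : X → (Fin n → ℝ)}
    (hf : Continuous f) (hg : Continuous g) : Continuous fun a => expi (dotp (f a) (g a)) :=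
  continuous_expi.comp (continuous_dotp.comp (hf.prodMk hg))

lemma dotp_comm {n : ℕ} (x y : Fin n → ℝ) : dotp x y = dotp y x := by
  simp [dotp, mul_comm]

lemma dotp_neg_left {n : ℕ} (x y : Fin n → ℝ) : dotp (-x) y = -dotp x y := by
  simp [dotp]

lemma dotp_add_left {n : ℕ} (x y z : Fin n → ℝ) : dotp (x + y) z = dotp x z + dotp y z := by
  simp [dotp, add_mul, Finset.sum_add_distrib]

lemma dotp_add_right {n : ℕ} (x y z : Fin n → ℝ) : dotp x (y + z) = dotp x y + dotp x z := by
  simp [dotp, mul_add, Finset.sum_add_distrib]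

lemma dotp_sub_left {n : ℕ} (x y z : Fin n → ℝ) : dotp (x - y) z = dotp x z - dotp y z := by
  simp [dotp, sub_mul, Finset.sum_sub_distrib]

lemma dotp_smul_left {n : ℕ} (c : ℝ) (x y : Fin n → ℝ) : dotp (c • x) y = c * dotp x y := by
  simp [dotp, Finset.mul_sum, mul_assoc]

lemma dotp_smul_right {n : ℕ} (c : ℝ) (x y : Fin n → ℝ) : dotp x (c • y) = c * dotp x y := by
  simp [dotp, Finset.mul_sum, mul_left_comm]

lemma dotp_single {n : ℕ} (i : Fin n) (c : ℝ) (y : Fin n → ℝ) :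
    dotp (Pi.single i c) y = c * y i := by
  simp [dotp, Pi.single_apply]

lemma IFT_eq_FT_neg {n : ℕ} (G : (Fin n → ℝ) → ℂ) (x : Fin n → ℝ) : IFT G x = FT G (-x) := by
  unfold IFT FT
  refine integral_congr_ae (Filter.Eventually.of_forall fun ξ => ?_)
  simp only [dotp_comm ξ, dotp_neg_left, neg_neg, mul_comm]

open FourierTransform in
lemma FT_eq {n : ℕ} (f : (Fin n → ℝ) → ℂ) (ξ : Fin n → ℝ) :
    FT f ξ = 𝓕 (fun y : EuclideanSpace ℝ (Fin n) => f (WithLp.ofLp y)) (WithLp.toLp 2 ξ) := by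
  rw [Real.fourier_eq']
  unfold FT
  rw [← (PiLp.volume_preserving_ofLp (Fin n)).integral_comp
    (MeasurableEquiv.toLp 2 (Fin n → ℝ)).symm.measurableEmbedding]
  refine integral_congr_ae (Filter.Eventually.of_forall fun y => ?_)
  simp only [expi, smul_eq_mul]
  rw [mul_comm]
  congr 2
  have : inner ℝ y (WithLp.toLp 2 ξ) = dotp (WithLp.ofLp y) ξ := by
    simp [PiLp.inner_apply, dotp, mul_comm]
  rw [this]
  push_cast; ring

lemma integrable_ofLp {n : ℕ} {E : Type*} [NormedAddCommGroup E] {f : (Fin n → ℝ) → E} :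
    Integrable (fun y : EuclideanSpace ℝ (Fin n) => f (WithLp.ofLp y)) ↔ Integrable f :=
  (PiLp.volume_preserving_ofLp (Fin n)).integrable_comp_emb
    (MeasurableEquiv.toLp 2 (Fin n → ℝ)).symm.measurableEmbedding

lemma integral_ofLp {n : ℕ} {E : Type*} [NormedAddCommGroup E] [NormedSpace ℝ E]
    (f : (Fin n → ℝ) → E) :
    ∫ y : EuclideanSpace ℝ (Fin n), f (WithLp.ofLp y) = ∫ y, f y :=
  (PiLp.volume_preserving_ofLp (Fin n)).integral_comp
    (MeasurableEquiv.toLp 2 (Fin n → ℝ)).symm.measurableEmbedding f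

open FourierTransform in
lemma FT_IFT {n : ℕ} {F : (Fin n → ℝ) → ℂ} (hc : Continuous F) (hi : Integrable F)
    (hk : Integrable (IFT F)) : FT (IFT F) = F := by
  have hk' : Integrable (FT F) := by
    have := hk.comp_neg
    simpa [IFT_eq_FT_neg] using this
  set F' := fun y : EuclideanSpace ℝ (Fin n) => F (WithLp.ofLp y) with hF'
  have e1 : 𝓕 F' = fun y : EuclideanSpace ℝ (Fin n) => FT F (WithLp.ofLp y) := by
    ext y; rw [FT_eq]
  have e2 : 𝓕⁻ F' = fun y : EuclideanSpace ℝ (Fin n) => IFT F (WithLp.ofLp y) := by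
    ext y
    rw [Real.fourierInv_eq_fourier_neg, e1, IFT_eq_FT_neg]; rfl
  have hc' : Continuous F' := hc.comp (PiLp.continuous_ofLp 2 _)
  have key := hc'.fourier_fourierInv_eq (integrable_ofLp.2 hi)
    (by rw [e1]; exact integrable_ofLp.2 hk')
  ext x
  rw [FT_eq, ← e2, key]

open FourierTransform SchwartzMap in
lemma planch_E {E : Type*} [NormedAddCommGroup E] [InnerProductSpace ℝ E] [FiniteDimensional ℝ E]
    [MeasurableSpace E] [BorelSpace E] (f : E → ℂ) (h1 : Integrable f) (h2 : MemLp f 2) :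
    ∃ u : Lp ℂ 2 (volume : Measure E), (u =ᵐ[volume] 𝓕 f) ∧ ‖u‖ = ‖h2.toLp f‖ := by
  refine ⟨𝓕 (h2.toLp f), ?_, Lp.norm_fourier_eq _⟩
  have hcont : Continuous (𝓕 f) :=
    VectorFourier.fourierIntegral_continuous Real.continuous_fourierChar
      (by exact continuous_inner) h1
  have l1 : LocallyIntegrable (𝓕 (h2.toLp f) : Lp ℂ 2 (volume : Measure E)) (volume : Measure E) :=
    (Lp.memLp (𝓕 (h2.toLp f) : Lp ℂ 2 (volume : Measure E))).locallyIntegrable (by norm_num)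
  have l2 : LocallyIntegrable (𝓕 f) (volume : Measure E) := hcont.locallyIntegrable
  refine ae_eq_of_integral_contDiff_smul_eq l1 l2 ?_
  intro g hg hgs
  have hg' : ContDiff ℝ (⊤ : ℕ∞) (fun x => (g x : ℂ)) := Complex.ofRealCLM.contDiff.comp hg
  have hgs' : HasCompactSupport (fun x => (g x : ℂ)) := hgs.comp_left (g := fun r : ℝ => (r : ℂ)) (by simp)
  let gS : 𝓢(E, ℂ) := hgs'.toSchwartzMap hg'
  have hgS : ∀ x, gS x = (g x : ℂ) := fun x => rfl
  have a1 : ∫ x, g x • (𝓕 (h2.toLp f) : Lp ℂ 2 (volume : Measure E)) x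
      = ((𝓕 (h2.toLp f) : Lp ℂ 2 (volume : Measure E)) : 𝓢'(E, ℂ)) gS := by
    rw [Lp.toTemperedDistribution_apply]
    simp [hgS]
  rw [a1, ← Lp.fourier_toTemperedDistribution_eq, TemperedDistribution.fourier_apply,
    Lp.toTemperedDistribution_apply]
  have a2 : ∫ x, (𝓕 gS) x • (h2.toLp f) x = ∫ x, (𝓕 gS) x • f x := by
    refine integral_congr_ae ?_
    filter_upwards [h2.coeFn_toLp] with x hx
    rw [hx]
  rw [a2]
  have a3 := VectorFourier.integral_fourierIntegral_smul_eq_flip (μ := volume) (ν := volume)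
    (L := innerₗ E) (f := fun x => (g x : ℂ)) (g := f)
    Real.continuous_fourierChar continuous_inner gS.integrable h1
  rw [flip_innerₗ] at a3
  simpa using! a3

lemma memLp_two_iff {n : ℕ} {f : (Fin n → ℝ) → ℂ} (hf : AEStronglyMeasurable f) :
    MemLp f 2 ↔ Integrable (fun x => ‖f x‖ ^ 2) := memLp_two_iff_integrable_sq_norm hf

lemma FT_planch {n : ℕ} {f : (Fin n → ℝ) → ℂ} (h1 : Integrable f)
    (h2 : Integrable fun x => ‖f x‖ ^ 2) :
    Integrable (fun x => ‖FT f x‖ ^ 2) ∧ ∫ x, ‖FT f x‖ ^ 2 = ∫ x, ‖f x‖ ^ 2 := by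
  have h1' := integrable_ofLp.2 h1
  have h2' : MemLp (fun y : EuclideanSpace ℝ (Fin n) => f (WithLp.ofLp y)) 2 := by
    rw [memLp_two_iff_integrable_sq_norm h1'.aestronglyMeasurable]
    exact integrable_ofLp.2 h2
  obtain ⟨u, hu, hn⟩ := planch_E _ h1' h2'
  have hu' : MemLp (fun y : EuclideanSpace ℝ (Fin n) => FT f (WithLp.ofLp y)) 2 := by
    refine (memLp_congr_ae ?_).1 (Lp.memLp u)
    filter_upwards [hu] with y hy
    rw [hy, FT_eq]
  have i1 : ∀ v : Lp (α := EuclideanSpace ℝ (Fin n)) ℂ 2, ‖v‖ ^ 2 = ∫ y, ‖v y‖ ^ 2 := by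
    intro v
    have := L2.inner_def (𝕜 := ℂ) v v
    have h3 := inner_self_eq_norm_sq_to_K (𝕜 := ℂ) v
    rw [this] at h3
    have h4 : ∀ y, inner ℂ (v y) (v y) = ((‖v y‖ ^ 2 : ℝ) : ℂ) := by
      intro y; rw [inner_self_eq_norm_sq_to_K]; push_cast; rfl
    simp_rw [h4] at h3
    rw [integral_complex_ofReal] at h3
    apply Complex.ofReal_injective
    rw [h3]; push_cast; rfl
  constructor
  · refine integrable_ofLp.1 ?_
    exact (memLp_two_iff_integrable_sq_norm hu'.1).1 hu'
  · rw [← integral_ofLp (fun x => ‖FT f x‖ ^ 2), ← integral_ofLp (fun x => ‖f x‖ ^ 2)]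
    have e1 := i1 u
    have e2 := i1 (h2'.toLp _)
    rw [hn] at e1
    rw [e1] at e2
    have e3 : ∫ y, ‖u y‖ ^ 2 = ∫ y : EuclideanSpace ℝ (Fin n), ‖FT f (WithLp.ofLp y)‖ ^ 2 := by
      refine integral_congr_ae ?_
      filter_upwards [hu] with y hy
      rw [hy, FT_eq]
    rw [← e3, e2]
    refine integral_congr_ae ?_
    filter_upwards [h2'.coeFn_toLp] with y hy
    rw [hy]

lemma IFT_planch {n : ℕ} {f : (Fin n → ℝ) → ℂ} (h1 : Integrable f)
    (h2 : Integrable fun x => ‖f x‖ ^ 2) :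
    Integrable (fun x => ‖IFT f x‖ ^ 2) ∧ ∫ x, ‖IFT f x‖ ^ 2 = ∫ x, ‖f x‖ ^ 2 := by
  obtain ⟨a, b⟩ := FT_planch h1 h2
  simp only [IFT_eq_FT_neg]
  refine ⟨a.comp_neg, ?_⟩
  rw [← b]
  exact integral_neg_eq_self (fun x => ‖FT f x‖ ^ 2) volume

lemma IFT_continuous {n : ℕ} {f : (Fin n → ℝ) → ℂ} (h1 : Integrable f) : Continuous (IFT f) := by
  unfold IFT
  refine continuous_of_dominated (bound := fun ξ => ‖f ξ‖) ?_ ?_ h1.norm ?_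
  · intro x
    exact ((continuous_const.edot continuous_id).aestronglyMeasurable).mul h1.aestronglyMeasurable
  · intro x
    exact Filter.Eventually.of_forall fun ξ => by rw [norm_mul, norm_expi, one_mul]
  · exact Filter.Eventually.of_forall fun ξ =>
      (continuous_id.edot continuous_const).mul continuous_const

lemma IFT_bound {n : ℕ} (f : (Fin n → ℝ) → ℂ) (x : Fin n → ℝ) :
    ‖IFT f x‖ ≤ ∫ ξ, ‖f ξ‖ := by
  unfold IFT
  refine (norm_integral_le_integral_norm _).trans (le_of_eq ?_)
  simp [norm_expi]

open FourierTransform in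
/-- The Fourier transform of a Schwartz function is Schwartz, with inversion. -/
lemma schwartz_FT {n : ℕ} (f : SchwartzMap (Fin n → ℝ) ℂ) :
    ∃ g : SchwartzMap (Fin n → ℝ) ℂ, (∀ ξ, g ξ = FT f ξ) ∧ IFT (g) = f := by
  let L := PiLp.continuousLinearEquiv 2 ℝ (fun _ : Fin n => ℝ)
  let f' : SchwartzMap (EuclideanSpace ℝ (Fin n)) ℂ :=
    SchwartzMap.compCLMOfContinuousLinearEquiv ℂ L f
  let g : SchwartzMap (Fin n → ℝ) ℂ :=
    SchwartzMap.compCLMOfContinuousLinearEquiv ℂ L.symm (𝓕 f')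
  have hg : ∀ ξ, g ξ = FT f ξ := by
    intro ξ; rw [FT_eq]; rfl
  refine ⟨g, hg, ?_⟩
  have e0 : ∀ x, IFT g x = FT (IFT f) x := by
    intro x
    rw [IFT_eq_FT_neg]
    unfold FT
    rw [← integral_neg_eq_self]
    refine integral_congr_ae (Filter.Eventually.of_forall fun ξ => ?_)
    simp only [hg, IFT_eq_FT_neg]
    rw [dotp_neg_left, dotp_comm ξ (-x), dotp_neg_left, dotp_comm x ξ]; simp [FT]
  have e1 : FT (IFT f) = f := by
    refine FT_IFT f.continuous f.integrable ?_
    have : Integrable (fun x => g (-x)) := g.integrable.comp_neg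
    refine this.congr (Filter.Eventually.of_forall fun x => ?_)
    simp only [hg, IFT_eq_FT_neg]
  ext x
  rw [e0, e1]

end


noncomputable section

lemma pd_smooth {n : ℕ} (i : Fin n) {F : (Fin n → ℝ) → ℂ} (hF : ContDiff ℝ (⊤ : ℕ∞) F) :
    ContDiff ℝ (⊤ : ℕ∞) (pd i F) := by
  unfold pd
  exact (hF.fderiv_right (m := (⊤ : ℕ∞)) (by simp)).clm_apply contDiff_const

lemma pd_iter_smooth {n : ℕ} (i : Fin n) {F : (Fin n → ℝ) → ℂ} (hF : ContDiff ℝ (⊤ : ℕ∞) F)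
    (k : ℕ) : ContDiff ℝ (⊤ : ℕ∞) ((pd i)^[k] F) := by
  induction k with
  | zero => simpa using hF
  | succ k ih => rw [Function.iterate_succ_apply']; exact pd_smooth i ih

lemma smooth_diff {n : ℕ} {F : (Fin n → ℝ) → ℂ} (hF : ContDiff ℝ (⊤ : ℕ∞) F) :
    Differentiable ℝ F := hF.differentiable (by simp)

lemma pd_add {n : ℕ} (i : Fin n) {F G : (Fin n → ℝ) → ℂ} (hF : ContDiff ℝ (⊤ : ℕ∞) F)
    (hG : ContDiff ℝ (⊤ : ℕ∞) G) : pd i (fun t => F t + G t) = fun t => pd i F t + pd i G t := by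
  ext t
  unfold pd
  rw [fderiv_fun_add (smooth_diff hF t) (smooth_diff hG t)]; rfl

lemma pd_mul {n : ℕ} (i : Fin n) {F G : (Fin n → ℝ) → ℂ} (hF : ContDiff ℝ (⊤ : ℕ∞) F)
    (hG : ContDiff ℝ (⊤ : ℕ∞) G) :
    pd i (fun t => F t * G t) = fun t => pd i F t * G t + F t * pd i G t := by
  ext t
  unfold pd
  rw [fderiv_fun_mul (smooth_diff hF t) (smooth_diff hG t)]
  simp; ring

lemma pd_iter_add {n : ℕ} (i : Fin n) (k : ℕ) {F G : (Fin n → ℝ) → ℂ}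
    (hF : ContDiff ℝ (⊤ : ℕ∞) F) (hG : ContDiff ℝ (⊤ : ℕ∞) G) :
    (pd i)^[k] (fun t => F t + G t) = fun t => (pd i)^[k] F t + (pd i)^[k] G t := by
  induction k generalizing F G with
  | zero => rfl
  | succ k ih =>
    rw [Function.iterate_succ_apply, pd_add i hF hG, ih (pd_smooth i hF) (pd_smooth i hG)]
    rfl

lemma pd_leibniz {n : ℕ} (i : Fin n) (k : ℕ) (s A B : ℝ) (hs : 0 ≤ s) (t : Fin n → ℝ)
    {F G : (Fin n → ℝ) → ℂ}
    (hF : ContDiff ℝ (⊤ : ℕ∞) F) (hG : ContDiff ℝ (⊤ : ℕ∞) G)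
    (hA : ∀ j ≤ k, s ^ j * ‖(pd i)^[j] F t‖ ≤ A) (hB : ∀ j ≤ k, s ^ j * ‖(pd i)^[j] G t‖ ≤ B) :
    s ^ k * ‖(pd i)^[k] (fun t => F t * G t) t‖ ≤ 2 ^ k * A * B := by
  induction k generalizing F G A B with
  | zero =>
    have a := hA 0 le_rfl
    have b := hB 0 le_rfl
    simp only [pow_zero, one_mul, Function.iterate_zero, id, norm_mul] at *
    exact mul_le_mul a b (norm_nonneg _) ((norm_nonneg _).trans a)
  | succ k ih =>
    rcases hs.eq_or_lt with h0 | h0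
    · have a := hA 0 (by omega)
      have b := hB 0 (by omega)
      simp only [pow_zero, one_mul] at a b
      have := (norm_nonneg _).trans a
      have := (norm_nonneg _).trans b
      rw [← h0]; simp; positivity
    rw [Function.iterate_succ_apply, pd_mul i hF hG,
      pd_iter_add i k ((pd_smooth i hF).mul hG) (hF.mul (pd_smooth i hG))]
    have h1 := ih (A / s) B (pd_smooth i hF) hG (fun j hj => by
      have := hA (j+1) (by omega)
      rw [Function.iterate_succ_apply] at this
      rw [le_div_iff₀ h0]; calc _ = _ := by ring
        _ ≤ A := this) (fun j hj => hB j (by omega))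
    have h2 := ih A (B / s) hF (pd_smooth i hG) (fun j hj => hA j (by omega)) (fun j hj => by
      have := hB (j+1) (by omega)
      rw [Function.iterate_succ_apply] at this
      rw [le_div_iff₀ h0]; calc _ = _ := by ring
        _ ≤ B := this)
    calc s ^ (k+1) * ‖_ + _‖ ≤ s ^ (k+1) * (‖(pd i)^[k] (fun t => pd i F t * G t) t‖ +
          ‖(pd i)^[k] (fun t => F t * pd i G t) t‖) := by gcongr; exact norm_add_le _ _
      _ = s * (s ^ k * ‖(pd i)^[k] (fun t => pd i F t * G t) t‖) +
          s * (s ^ k * ‖(pd i)^[k] (fun t => F t * pd i G t) t‖) := by ring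
      _ ≤ s * (2 ^ k * (A / s) * B) + s * (2 ^ k * A * (B / s)) := by gcongr
      _ = 2 ^ (k+1) * A * B := by field_simp; ring

lemma pd_iter_zero_off {n : ℕ} (i : Fin n) (k : ℕ) {b : (Fin n → ℝ) → ℂ} {ζ : Fin n → ℝ} {s : ℝ}
    (hb : ∀ ξ, s < ‖ξ - ζ‖ → b ξ = 0) : ∀ ξ, s < ‖ξ - ζ‖ → (pd i)^[k] b ξ = 0 := by
  induction k with
  | zero => simpa using hb
  | succ k ih =>
    intro ξ hξ
    rw [Function.iterate_succ_apply']
    unfold pd at *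
    have : (fun F x => (fderiv ℝ F x) (Pi.single i 1))^[k] b =ᶠ[nhds ξ] fun _ => 0 := by
      have ho : IsOpen {x : Fin n → ℝ | s < ‖x - ζ‖} := isOpen_lt continuous_const (by fun_prop)
      filter_upwards [ho.mem_nhds hξ] with x hx
      exact ih x hx
    rw [this.fderiv_eq]; simp

lemma hasCompact_off {n : ℕ} {b : (Fin n → ℝ) → ℂ} {ζ : Fin n → ℝ} {s : ℝ}
    (hb : ∀ ξ, s < ‖ξ - ζ‖ → b ξ = 0) : HasCompactSupport b := by
  refine HasCompactSupport.intro (isCompact_closedBall ζ s) ?_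
  intro x hx
  apply hb
  simpa [Metric.mem_closedBall, dist_eq_norm] using hx

lemma expi_hasFDeriv {n : ℕ} (z : Fin n → ℝ) (i : Fin n) (ξ : Fin n → ℝ) :
    DifferentiableAt ℝ (fun ξ => expi (dotp z ξ)) ξ ∧
    fderiv ℝ (fun ξ => expi (dotp z ξ)) ξ (Pi.single i 1)
      = (2 * Real.pi * Complex.I * z i) * expi (dotp z ξ) := by
  have hd : DifferentiableAt ℝ (fun ξ => expi (dotp z ξ)) ξ := by
    unfold expi dotp; fun_prop
  refine ⟨hd, ?_⟩
  rw [← hd.lineDeriv_eq_fderiv]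
  unfold lineDeriv
  have : ∀ t : ℝ, expi (dotp z (ξ + t • Pi.single i 1))
      = expi (dotp z ξ) * Complex.exp ((2 * Real.pi * Complex.I * z i) * t) := by
    intro t
    rw [dotp_add_right, expi_add, dotp_smul_right, dotp_comm z (Pi.single i 1), dotp_single]
    congr 1; unfold expi; congr 1; push_cast; ring
  simp_rw [this]
  have h := (((hasDerivAt_id (0:ℝ)).ofReal_comp.const_mul
    (2 * Real.pi * Complex.I * z i)).cexp.const_mul (expi (dotp z ξ)))
  have h2 := h.deriv
  simp only [id] at h2
  rw [h2]
  simp; ring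

lemma IFT_pd {n : ℕ} (i : Fin n) {b : (Fin n → ℝ) → ℂ} (hb : ContDiff ℝ (⊤ : ℕ∞) b)
    (hc : HasCompactSupport b) (z : Fin n → ℝ) :
    IFT (pd i b) z = -(2 * Real.pi * Complex.I * z i) * IFT b z := by
  unfold IFT
  have hcp : HasCompactSupport (pd i b) := by
    have := hc.fderiv_apply (𝕜 := ℝ) (Pi.single i 1)
    exact this
  have key := integral_mul_fderiv_eq_neg_fderiv_mul_of_integrable (𝕜 := ℂ) (μ := volume)
    (f := fun ξ => expi (dotp z ξ)) (g := b) (v := Pi.single i 1) ?_ ?_ ?_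
    (fun ξ _ => (expi_hasFDeriv z i ξ).1) (fun ξ _ => smooth_diff hb ξ)
  · unfold pd
    rw [key, ← integral_const_mul, ← integral_neg]
    congr 1
    ext ξ
    rw [(expi_hasFDeriv z i ξ).2]; ring
  · simp_rw [(expi_hasFDeriv z i _).2]
    exact Continuous.integrable_of_hasCompactSupport
      ((continuous_const.mul (continuous_const.edot continuous_id)).mul hb.continuous)
      hc.mul_left
  · exact Continuous.integrable_of_hasCompactSupport
      ((continuous_const.edot continuous_id).mul (pd_smooth i hb).continuous)
      hcp.mul_left
  · exact Continuous.integrable_of_hasCompactSupport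
      ((continuous_const.edot continuous_id).mul hb.continuous) hc.mul_left

lemma IFT_pd_iter {n : ℕ} (i : Fin n) {b : (Fin n → ℝ) → ℂ} (hb : ContDiff ℝ (⊤ : ℕ∞) b)
    {ζ : Fin n → ℝ} {s : ℝ} (hz : ∀ ξ, s < ‖ξ - ζ‖ → b ξ = 0) (z : Fin n → ℝ) (k : ℕ) :
    IFT ((pd i)^[k] b) z = (-(2 * Real.pi * Complex.I * z i)) ^ k * IFT b z := by
  induction k with
  | zero => simp
  | succ k ih =>
    rw [Function.iterate_succ_apply', IFT_pd i (pd_iter_smooth i hb k)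
      (hasCompact_off (pd_iter_zero_off i k hz)), ih]; ring

lemma norm_IFT_le {n : ℕ} {b : (Fin n → ℝ) → ℂ} {ζ : Fin n → ℝ} {s A : ℝ} (hs : 0 ≤ s)
    (hz : ∀ ξ, s < ‖ξ - ζ‖ → b ξ = 0) (hA : ∀ ξ, ‖b ξ‖ ≤ A) (z : Fin n → ℝ) :
    ‖IFT b z‖ ≤ (2 * s) ^ n * A := by
  unfold IFT
  have h0 : ∫ ξ, expi (dotp z ξ) * b ξ = ∫ ξ in Metric.closedBall ζ s, expi (dotp z ξ) * b ξ := by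
    rw [setIntegral_eq_integral_of_forall_compl_eq_zero]
    intro x hx
    rw [hz x (by simpa [Metric.mem_closedBall, dist_eq_norm] using hx), mul_zero]
  rw [h0]
  have h1 : (volume : Measure (Fin n → ℝ)) (Metric.closedBall ζ s) = ENNReal.ofReal ((2 * s) ^ n) := by
    rw [Real.volume_pi_closedBall _ hs]; simp
  refine (norm_setIntegral_le_of_norm_le_const (C := A) (by rw [h1]; exact ENNReal.ofReal_lt_top)
    (fun x _ => by rw [norm_mul, norm_expi, one_mul]; exact hA x)).trans ?_
  rw [Measure.real, h1, ENNReal.toReal_ofReal (by positivity), mul_comm]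

/-- Decay of the kernel of a compactly supported symbol. -/
lemma kernel_decay {n : ℕ} (hn : 1 ≤ n) {b : (Fin n → ℝ) → ℂ} (hb : ContDiff ℝ (⊤ : ℕ∞) b)
    {ζ : Fin n → ℝ} {s A : ℝ} (hs : 0 < s) (hz : ∀ ξ, s < ‖ξ - ζ‖ → b ξ = 0) (k : ℕ)
    (hA : ∀ i, ∀ j ≤ k, ∀ ξ, ‖ξ - ζ‖ ≤ s → s ^ j * ‖(pd i)^[j] b ξ‖ ≤ A) (z : Fin n → ℝ) :
    (1 + s * ‖z‖) ^ k * ‖IFT b z‖ ≤ 2 ^ k * 2 ^ n * A * s ^ n := by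
  have hA' : ∀ i, ∀ j ≤ k, ∀ ξ, ‖(pd i)^[j] b ξ‖ ≤ A / s ^ j := by
    intro i j hj ξ
    have hA0 : 0 ≤ A := by
      have := hA i j hj ζ (by simpa using hs.le)
      exact le_trans (by positivity) this
    by_cases h : ‖ξ - ζ‖ ≤ s
    · rw [le_div_iff₀ (by positivity), mul_comm]; exact hA i j hj ξ h
    · rw [pd_iter_zero_off i j hz ξ (not_le.1 h)]; simp; positivity
  haveI : Nonempty (Fin n) := ⟨⟨0, hn⟩⟩
  have i0 : Fin n := ⟨0, hn⟩
  have b0 : ‖IFT b z‖ ≤ (2 * s) ^ n * A := by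
    refine norm_IFT_le hs.le hz (fun ξ => ?_) z
    simpa using hA' i0 0 (by omega) ξ
  rcases le_total (s * ‖z‖) 1 with h | h
  · calc (1 + s * ‖z‖) ^ k * ‖IFT b z‖ ≤ (1 + 1) ^ k * ((2 * s) ^ n * A) := by gcongr
      _ = _ := by rw [mul_pow]; ring
  · obtain ⟨i, hi⟩ : ∃ i, ‖z‖ = ‖z i‖ := by
      obtain ⟨i, _, hi⟩ := Finset.exists_mem_eq_sup' (Finset.univ_nonempty (α := Fin n)) (fun i => ‖z i‖)
      refine ⟨i, le_antisymm ?_ (norm_le_pi_norm z i)⟩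
      rw [pi_norm_le_iff_of_nonneg (norm_nonneg _)]
      intro j
      rw [← hi]
      exact Finset.le_sup' (fun i => ‖z i‖) (Finset.mem_univ j)
    have b1 := norm_IFT_le hs.le (pd_iter_zero_off i k hz) (hA' i k le_rfl) z
    rw [IFT_pd_iter i hb hz, norm_mul, norm_pow, norm_neg] at b1
    have e : ‖(2 * Real.pi * Complex.I * z i : ℂ)‖ = 2 * Real.pi * ‖z i‖ := by
      simp [abs_of_pos Real.pi_pos]
    rw [e, ← hi] at b1
    have hpi : 1 ≤ 2 * Real.pi := by linarith [Real.pi_gt_three]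
    have b2 : ‖z‖ ^ k * ‖IFT b z‖ ≤ (2 * s) ^ n * (A / s ^ k) := by
      refine le_trans ?_ b1
      gcongr
      nlinarith [norm_nonneg z]
    calc (1 + s * ‖z‖) ^ k * ‖IFT b z‖ ≤ (2 * (s * ‖z‖)) ^ k * ‖IFT b z‖ := by
          gcongr; linarith
      _ = 2 ^ k * s ^ k * (‖z‖ ^ k * ‖IFT b z‖) := by rw [mul_pow, mul_pow]; ring
      _ ≤ 2 ^ k * s ^ k * ((2 * s) ^ n * (A / s ^ k)) := by gcongr
      _ = _ := by rw [mul_pow]; field_simp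

/-- mean value -/
lemma pd_mean {n : ℕ} {F : (Fin n → ℝ) → ℂ} (hF : ContDiff ℝ (⊤ : ℕ∞) F) {S : Set (Fin n → ℝ)}
    (hS : Convex ℝ S) {A : ℝ} (hA : ∀ i, ∀ t ∈ S, ‖pd i F t‖ ≤ A) {x y : Fin n → ℝ}
    (hx : x ∈ S) (hy : y ∈ S) : ‖F y - F x‖ ≤ n * A * ‖y - x‖ := by
  refine hS.norm_image_sub_le_of_norm_fderiv_le (𝕜 := ℝ) (fun t _ => smooth_diff hF t) ?_ hx hy
  intro t ht
  rcases Nat.eq_zero_or_pos n with h0 | h0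
  · subst h0
    have : fderiv ℝ F t = 0 := by
      ext v
      have hv : v = 0 := Subsingleton.elim _ _
      rw [hv, map_zero, map_zero]
    rw [this]; simp
  have hA0 : 0 ≤ A := (norm_nonneg _).trans (hA ⟨0, h0⟩ t ht)
  refine ContinuousLinearMap.opNorm_le_bound _ (by positivity) fun v => ?_
  have hv : v = ∑ i, v i • (Pi.single i (1:ℝ) : Fin n → ℝ) := by
    ext j; simp [Finset.sum_apply, Pi.single_apply]
  conv_lhs => rw [hv]
  rw [map_sum]
  refine (norm_sum_le _ _).trans ?_
  calc ∑ i, ‖fderiv ℝ F t (v i • Pi.single i 1)‖ ≤ ∑ i : Fin n, A * ‖v‖ := by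
        refine Finset.sum_le_sum fun i _ => ?_
        rw [map_smul, norm_smul, mul_comm]
        exact mul_le_mul (hA i t ht) (norm_le_pi_norm v i) (norm_nonneg _) hA0
    _ = n * A * ‖v‖ := by simp; ring

lemma pd_iter_affine {n : ℕ} (i : Fin n) (k : ℕ) {F : (Fin n → ℝ) → ℂ}
    (hF : ContDiff ℝ (⊤ : ℕ∞) F) (c : ℝ) (v : Fin n → ℝ) (ξ : Fin n → ℝ) :
    (pd i)^[k] (fun ξ => F (c • (ξ - v))) ξ = c ^ k * (pd i)^[k] F (c • (ξ - v)) := by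
  induction k generalizing ξ with
  | zero => simp
  | succ k ih =>
    rw [Function.iterate_succ_apply', Function.iterate_succ_apply']
    have e : (pd i)^[k] (fun ξ => F (c • (ξ - v))) = fun ξ => (c:ℂ) ^ k * (pd i)^[k] F (c • (ξ - v)) := by
      ext ξ; exact ih ξ
    rw [e]
    set H := (pd i)^[k] F with hH
    have hHs : ContDiff ℝ (⊤ : ℕ∞) H := pd_iter_smooth i hF k
    unfold pd
    have h1 : HasFDerivAt (fun ξ : Fin n → ℝ => c • (ξ - v)) (c • ContinuousLinearMap.id ℝ (Fin n → ℝ)) ξ :=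
      ((hasFDerivAt_id ξ).sub_const v).const_smul c
    have h2 := ((smooth_diff hHs (c • (ξ - v))).hasFDerivAt.comp ξ h1).const_mul ((c:ℂ)^k)
    have h3 := h2.fderiv
    simp only [Function.comp_def] at h3
    rw [h3]
    simp; ring

end


noncomputable section


lemma cs_int {n : ℕ} {w v : (Fin n → ℝ) → ℂ} (hw : Continuous w) (hv : Continuous v)
    (hw2 : Integrable fun x => ‖w x‖ ^ 2) (hv2 : Integrable fun x => ‖v x‖ ^ 2) :
    Integrable (fun x => ‖w x‖ * ‖v x‖) ∧
    ∫ x, ‖w x‖ * ‖v x‖ ≤ √(∫ x, ‖w x‖ ^ 2) * √(∫ x, ‖v x‖ ^ 2) := by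
  have mw : MemLp (fun x => ‖w x‖) 2 (volume : Measure (Fin n → ℝ)) :=
    ((memLp_two_iff hw.aestronglyMeasurable).2 hw2).norm
  have mv : MemLp (fun x => ‖v x‖) 2 (volume : Measure (Fin n → ℝ)) :=
    ((memLp_two_iff hv.aestronglyMeasurable).2 hv2).norm
  refine ⟨MemLp.integrable_mul mw mv, ?_⟩
  have := integral_mul_le_Lp_mul_Lq_of_nonneg (μ := (volume : Measure (Fin n → ℝ))) (p := 2) (q := 2)
    Real.HolderConjugate.two_two (f := fun x => ‖w x‖) (g := fun x => ‖v x‖)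
    (Filter.Eventually.of_forall fun x => norm_nonneg _)
    (Filter.Eventually.of_forall fun x => norm_nonneg _)
    (by simpa using mw) (by simpa using mv)
  simpa [Real.sqrt_eq_rpow] using this

lemma l2_shift {n : ℕ} {w : (Fin n → ℝ) → ℂ} (hw2 : Integrable fun x => ‖w x‖ ^ 2) (z : (Fin n → ℝ)) :
    Integrable (fun x => ‖w (x - z)‖ ^ 2) ∧ ∫ x, ‖w (x - z)‖ ^ 2 = ∫ x, ‖w x‖ ^ 2 :=
  ⟨hw2.comp_sub_right z, integral_sub_right_eq_self (fun x => ‖w x‖ ^ 2) z⟩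

/-- bilinear form of a kernel -/
def Bil {n : ℕ} (K : (Fin n → ℝ) → (Fin n → ℝ) → ℂ) (w v : (Fin n → ℝ) → ℂ) : ℂ :=
  ∫ p : (Fin n → ℝ) × (Fin n → ℝ), K p.1 p.2 * w (p.1 - p.2) * (starRingEnd ℂ) (v p.1)
    ∂((volume : Measure (Fin n → ℝ)).prod volume)

lemma bil_bound {n : ℕ} {K : (Fin n → ℝ) → (Fin n → ℝ) → ℂ} (hK : Continuous fun p : (Fin n → ℝ) × (Fin n → ℝ) => K p.1 p.2)
    {H : (Fin n → ℝ) → ℝ} (hH : Integrable H) (hKH : ∀ x z, ‖K x z‖ ≤ H z)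
    {w v : (Fin n → ℝ) → ℂ} (hw : Continuous w) (hv : Continuous v)
    (hw2 : Integrable fun x => ‖w x‖ ^ 2) (hv2 : Integrable fun x => ‖v x‖ ^ 2) :
    Integrable (fun p : (Fin n → ℝ) × (Fin n → ℝ) => K p.1 p.2 * w (p.1 - p.2) * (starRingEnd ℂ) (v p.1))
      ((volume : Measure (Fin n → ℝ)).prod volume) ∧
    ∫ p : (Fin n → ℝ) × (Fin n → ℝ), ‖K p.1 p.2 * w (p.1 - p.2) * (starRingEnd ℂ) (v p.1)‖
      ∂((volume : Measure (Fin n → ℝ)).prod volume)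
      ≤ (∫ z, H z) * (√(∫ x, ‖w x‖ ^ 2) * √(∫ x, ‖v x‖ ^ 2)) := by
  set W := √(∫ x, ‖w x‖ ^ 2) * √(∫ x, ‖v x‖ ^ 2) with hW
  have hH0 : ∀ z, 0 ≤ H z := fun z => (norm_nonneg _).trans (hKH 0 z)
  have hcs : ∀ z, Integrable (fun x => ‖w (x - z)‖ * ‖v x‖) ∧
      ∫ x, ‖w (x - z)‖ * ‖v x‖ ≤ W := by
    intro z
    have h := cs_int (w := fun x => w (x - z)) (by fun_prop) hv (l2_shift hw2 z).1 hv2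
    rw [(l2_shift hw2 z).2] at h
    exact h
  have hc : Continuous fun p : (Fin n → ℝ) × (Fin n → ℝ) =>
      K p.1 p.2 * w (p.1 - p.2) * (starRingEnd ℂ) (v p.1) :=
    (hK.mul (by fun_prop)).mul (Complex.continuous_conj.comp (by fun_prop))
  have hle : ∀ x z, ‖K x z * w (x - z) * (starRingEnd ℂ) (v x)‖ ≤ H z * (‖w (x - z)‖ * ‖v x‖) := by
    intro x z
    rw [norm_mul, norm_mul, RCLike.norm_conj, mul_assoc]
    gcongr
    exact hKH x z
  have h1 : ∀ z, Integrable (fun x => K x z * w (x - z) * (starRingEnd ℂ) (v x)) := fun z =>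
    ((hcs z).1.const_mul (H z)).mono'
      (hc.comp (continuous_id.prodMk continuous_const)).aestronglyMeasurable
      (Filter.Eventually.of_forall fun x => hle x z)
  have h2 : ∀ z, ∫ x, ‖K x z * w (x - z) * (starRingEnd ℂ) (v x)‖ ≤ H z * W := by
    intro z
    refine (integral_mono (h1 z).norm ((hcs z).1.const_mul (H z)) fun x => hle x z).trans ?_
    rw [integral_const_mul]
    exact mul_le_mul_of_nonneg_left (hcs z).2 (hH0 z)
  have hI : Integrable (fun p : (Fin n → ℝ) × (Fin n → ℝ) => K p.1 p.2 * w (p.1 - p.2) * (starRingEnd ℂ) (v p.1))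
      ((volume : Measure (Fin n → ℝ)).prod volume) := by
    rw [integrable_prod_iff' hc.aestronglyMeasurable]
    refine ⟨Filter.Eventually.of_forall h1, ?_⟩
    refine (hH.mul_const W).mono' ?_ (Filter.Eventually.of_forall fun z => ?_)
    · exact (hc.norm.aestronglyMeasurable.prod_swap (μ := volume) (ν := volume)).integral_prod_right'
    · rw [Real.norm_of_nonneg (integral_nonneg fun x => norm_nonneg _)]
      exact h2 z
  refine ⟨hI, ?_⟩
  rw [integral_prod_symm _ hI.norm, ← integral_mul_const]
  exact integral_mono hI.norm.integral_prod_right (hH.mul_const W) h2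

lemma Bil_le {n : ℕ} {K : (Fin n → ℝ) → (Fin n → ℝ) → ℂ} (hK : Continuous fun p : (Fin n → ℝ) × (Fin n → ℝ) => K p.1 p.2)
    {H : (Fin n → ℝ) → ℝ} (hH : Integrable H) (hKH : ∀ x z, ‖K x z‖ ≤ H z)
    {w v : (Fin n → ℝ) → ℂ} (hw : Continuous w) (hv : Continuous v)
    (hw2 : Integrable fun x => ‖w x‖ ^ 2) (hv2 : Integrable fun x => ‖v x‖ ^ 2) :
    ‖Bil K w v‖ ≤ (∫ z, H z) * (√(∫ x, ‖w x‖ ^ 2) * √(∫ x, ‖v x‖ ^ 2)) :=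
  (norm_integral_le_integral_norm _).trans (bil_bound hK hH hKH hw hv hw2 hv2).2

lemma Bil_sub {n : ℕ} {K K' : (Fin n → ℝ) → (Fin n → ℝ) → ℂ}
    (hK : Continuous fun p : (Fin n → ℝ) × (Fin n → ℝ) => K p.1 p.2)
    (hK' : Continuous fun p : (Fin n → ℝ) × (Fin n → ℝ) => K' p.1 p.2)
    {H H' : (Fin n → ℝ) → ℝ} (hH : Integrable H) (hKH : ∀ x z, ‖K x z‖ ≤ H z)
    (hH' : Integrable H') (hKH' : ∀ x z, ‖K' x z‖ ≤ H' z)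
    {w v : (Fin n → ℝ) → ℂ} (hw : Continuous w) (hv : Continuous v)
    (hw2 : Integrable fun x => ‖w x‖ ^ 2) (hv2 : Integrable fun x => ‖v x‖ ^ 2) :
    Bil K w v - Bil K' w v = Bil (fun x z => K x z - K' x z) w v := by
  unfold Bil
  rw [← integral_sub (bil_bound hK hH hKH hw hv hw2 hv2).1 (bil_bound hK' hH' hKH' hw hv hw2 hv2).1]
  congr 1; ext p; ring

lemma conv_rep {n : ℕ} {k G : (Fin n → ℝ) → ℂ} (hk : Integrable k) (hG : Integrable G) (x : (Fin n → ℝ)) :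
    ∫ z, k z * IFT G (x - z) = IFT (fun ξ => FT k ξ * G ξ) x := by
  have hI : Integrable (fun p : (Fin n → ℝ) × (Fin n → ℝ) => k p.1 * (expi (dotp (x - p.1) p.2) * G p.2))
      ((volume : Measure (Fin n → ℝ)).prod volume) := by
    refine (hk.mul_prod hG).norm.mono' ?_ (Filter.Eventually.of_forall fun p => ?_)
    · refine (hk.aestronglyMeasurable.comp_fst).mul
        (AEStronglyMeasurable.mul ?_ hG.aestronglyMeasurable.comp_snd)
      exact (Continuous.edot (by fun_prop) (by fun_prop)).aestronglyMeasurable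
    · simp [norm_expi]
  calc ∫ z, k z * IFT G (x - z) = ∫ z, ∫ ξ, k z * (expi (dotp (x - z) ξ) * G ξ) := by
        congr 1; ext z; rw [integral_const_mul]; rfl
    _ = ∫ ξ, ∫ z, k z * (expi (dotp (x - z) ξ) * G ξ) := integral_integral_swap hI
    _ = _ := by
        unfold IFT FT
        congr 1; ext ξ
        simp only
        rw [← integral_mul_const, ← integral_const_mul]
        congr 1; ext z
        rw [dotp_sub_left, sub_eq_add_neg, expi_add]; ring

/-- the oscillatory integral as a kernel bilinear form -/
lemma phi_bil {n : ℕ} {b : (Fin n → ℝ) → (Fin n → ℝ) → ℂ} (hb : ∀ x, Continuous (b x))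
    (hbi : ∀ x, Integrable (b x))
    (hK : Continuous fun p : (Fin n → ℝ) × (Fin n → ℝ) => IFT (b p.1) p.2)
    {H : (Fin n → ℝ) → ℝ} (hH : Integrable H) (hKH : ∀ x z, ‖IFT (b x) z‖ ≤ H z)
    {G : (Fin n → ℝ) → ℂ} (hG : Integrable G) (hG2 : Integrable fun x => ‖G x‖ ^ 2)
    {v : (Fin n → ℝ) → ℂ} (hv : Continuous v) (hv2 : Integrable fun x => ‖v x‖ ^ 2) :
    ∫ x, (∫ ξ, expi (dotp x ξ) * b x ξ * G ξ) * (starRingEnd ℂ) (v x)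
      = Bil (fun x z => IFT (b x) z) (IFT G) v := by
  unfold Bil
  rw [integral_prod _ (bil_bound hK hH hKH (IFT_continuous hG) hv (IFT_planch hG hG2).1 hv2).1]
  congr 1; ext x
  simp only
  rw [integral_mul_const]
  have hi : Integrable (IFT (b x)) := hH.mono' (IFT_continuous (hbi x)).aestronglyMeasurable
    (Filter.Eventually.of_forall fun z => hKH x z)
  rw [conv_rep hi hG, FT_IFT (hb x) (hbi x) hi]
  unfold IFT
  congr 2; ext ξ; ring

/-- main term -/
lemma near_bil {n : ℕ} {a k : (Fin n → ℝ) → ℂ} (ha : Continuous a) {A : ℝ} (hA : ∀ x, ‖a x‖ ≤ A)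
    (hk : Continuous k) (hki : Integrable k) (hkc : ∀ z, (starRingEnd ℂ) (k (-z)) = k z)
    {w h : (Fin n → ℝ) → ℂ} (hw : Continuous w) (hw2 : Integrable fun x => ‖w x‖ ^ 2)
    (hh : Integrable h) (hh2 : Integrable fun x => ‖h x‖ ^ 2) :
    Bil (fun x z => a (x - z) * k z) w (IFT h)
      = ∫ x, a x * w x * (starRingEnd ℂ) (IFT (fun ξ => FT k ξ * h ξ) x) := by
  have hv := IFT_continuous hh
  have hv2 := (IFT_planch hh hh2).1
  have I1 := (bil_bound (K := fun x z => a (x - z) * k z) (H := fun z => A * ‖k z‖) (by fun_prop)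
    (hki.norm.const_mul A) (fun x z => by
      rw [norm_mul]; gcongr; exact hA _) hw hv hw2 hv2).1
  have I2 := (bil_bound (K := fun x z => (starRingEnd ℂ) (a x) * k z) (H := fun z => A * ‖k z‖)
    ((Complex.continuous_conj.comp (by fun_prop)).mul (by fun_prop))
    (hki.norm.const_mul A) (fun x z => by
      rw [norm_mul, RCLike.norm_conj]; gcongr; exact hA _) hv hw hv2 hw2).1
  have e1 : Bil (fun x z => a (x - z) * k z) w (IFT h)
      = (starRingEnd ℂ) (Bil (fun x z => (starRingEnd ℂ) (a x) * k z) (IFT h) w) := by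
    unfold Bil
    rw [integral_prod_symm _ I1, integral_prod_symm _ I2, ← integral_conj,
      ← integral_neg_eq_self (fun z => ∫ x, _)]
    congr 1; ext z
    rw [← integral_conj, ← integral_sub_right_eq_self (fun x => _) z]
    congr 1; ext x
    simp only [sub_neg_eq_add, sub_add_cancel, map_mul, Complex.conj_conj]
    rw [← hkc z, Complex.conj_conj]; ring
  rw [e1]
  unfold Bil
  rw [integral_prod _ I2, ← integral_conj]
  congr 1; ext x
  simp only
  rw [integral_mul_const]
  simp_rw [mul_assoc]
  rw [integral_const_mul, conv_rep hki hh]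
  simp; ring

end


noncomputable section

structure IsKap (κ : ℝ → ℂ) : Prop where
  cont : Continuous κ
  int : ∀ j : ℕ, Integrable fun y : ℝ => (y : ℂ) ^ j * κ y
  one : ∫ y, κ y = 1
  mom : ∀ j : ℕ, 1 ≤ j → ∫ y : ℝ, (y : ℂ) ^ j * κ y = 0
  van : ∀ θ : ℝ, 1 ≤ |θ| → ∫ y, κ y * expi (y * θ) = 0

open FourierTransform in
lemma exists_kap : ∃ κ : ℝ → ℂ, IsKap κ := by
  let β : ContDiffBump (0 : ℝ) := ⟨1/2, 1, by norm_num, by norm_num⟩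
  let b : ℝ → ℂ := fun t => ((β t : ℝ) : ℂ)
  have hbs : ContDiff ℝ (⊤ : ℕ∞) b := Complex.ofRealCLM.contDiff.comp β.contDiff
  have hbc : HasCompactSupport b := β.hasCompactSupport.comp_left (g := fun x : ℝ => (x:ℂ)) rfl
  let bS : SchwartzMap ℝ ℂ := hbc.toSchwartzMap hbs
  let k : SchwartzMap ℝ ℂ := 𝓕⁻ bS
  have hk : 𝓕 (k : ℝ → ℂ) = b := by
    have : 𝓕 k = bS := FourierTransform.fourier_fourierInv_eq bS
    rw [← SchwartzMap.fourier_coe, this]; rfl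
  have hint : ∀ j : ℕ, Integrable fun y : ℝ => (y : ℂ) ^ j * k y := by
    intro j
    refine (k.integrable_pow_mul volume j).mono' (by fun_prop) (Filter.Eventually.of_forall fun y => ?_)
    simp
  have h0 : ∀ θ, ∫ y, k y * expi (y * θ) = b (-θ) := by
    intro θ
    rw [← hk, Real.fourier_real_eq_integral_exp_smul]
    congr 1; ext y
    rw [smul_eq_mul, mul_comm]; unfold expi
    congr 2; push_cast; ring
  refine ⟨k, k.continuous, hint, ?_, ?_, ?_⟩
  · have := h0 0
    simp only [mul_zero, expi_zero, mul_one, neg_zero] at this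
    rw [this]
    simp only [b]
    rw [β.one_of_mem_closedBall (by simp [β.rIn_pos.le])]; simp
  · intro j hj
    have h1 := Real.iteratedDeriv_fourier (f := (k : ℝ → ℂ)) (N := ⊤) (n := j) (fun m _ => by
      have := hint m
      refine this.congr (Filter.Eventually.of_forall fun y => ?_)
      simp) le_top
    have h2 := congrFun h1 0
    rw [Real.fourier_real_eq_integral_exp_smul] at h2
    simp only [mul_zero, Complex.ofReal_zero, zero_mul, Complex.exp_zero, one_smul] at h2
    rw [hk] at h2
    have h3 : iteratedDeriv j b 0 = 0 := by
      have : b =ᶠ[nhds 0] fun _ => (1:ℂ) := by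
        filter_upwards [Metric.closedBall_mem_nhds (0:ℝ) β.rIn_pos] with y hy
        simp only [b]
        rw [β.one_of_mem_closedBall hy]; simp
      rw [this.iteratedDeriv_eq, iteratedDeriv_const]
      rw [if_neg (by omega)]
    rw [h3] at h2
    have h4 : ∫ (v : ℝ), (-2 * (Real.pi:ℂ) * I * v) ^ j • k v
       = (-2 * (Real.pi:ℂ) * I) ^ j * ∫ y : ℝ, (y : ℂ) ^ j * k y := by
      rw [← integral_const_mul]; congr 1; ext v
      rw [smul_eq_mul, mul_pow]; ring
    rw [h4] at h2
    have h5 : (-2 * (Real.pi:ℂ) * I) ^ j ≠ 0 := by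
      apply pow_ne_zero; simp [Real.pi_ne_zero]
    exact (mul_eq_zero.1 h2.symm).resolve_left h5
  · intro θ hθ
    rw [h0]
    simp only [b]
    rw [β.zero_of_le_dist (by simpa [β] using hθ)]; simp

lemma taylor_pd {n : ℕ} (i : Fin n) (M : ℕ) {F : (Fin n → ℝ) → ℂ} (hF : ContDiff ℝ (⊤ : ℕ∞) F) {A : ℝ}
    (hA : ∀ x, ‖(pd i)^[M] F x‖ ≤ A) (x : (Fin n → ℝ)) (t : ℝ) :
    ‖F (x + t • Pi.single i 1) -
      ∑ j ∈ Finset.range M, ((t : ℂ) ^ j / (j.factorial : ℂ)) * (pd i)^[j] F x‖ ≤ |t| ^ M * A := by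
  induction M generalizing F t with
  | zero => simpa using hA _
  | succ M ih =>
    have ih' := ih (pd_smooth i hF) hA
    have hd : ∀ u : ℝ, HasDerivAt (fun t : ℝ => F (x + t • Pi.single i 1) -
        ∑ j ∈ Finset.range (M+1), ((t : ℂ) ^ j / (j.factorial : ℂ)) * (pd i)^[j] F x)
        (pd i F (x + u • Pi.single i 1) -
        ∑ j ∈ Finset.range M, ((u : ℂ) ^ j / (j.factorial : ℂ)) * (pd i)^[j] (pd i F) x) u := by
      intro u
      refine HasDerivAt.sub ?_ ?_
      · have h1 : HasDerivAt (fun t : ℝ => x + t • (Pi.single i 1 : (Fin n → ℝ))) (Pi.single i 1) u := by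
          simpa using ((hasDerivAt_id u).smul_const (Pi.single i 1 : (Fin n → ℝ))).const_add x
        exact (smooth_diff hF _).hasFDerivAt.comp_hasDerivAt u h1
      · simp_rw [Finset.sum_range_succ' _ M, pow_zero]
        refine HasDerivAt.add_const (𝕜 := ℝ) (F := ℂ) _ ?_
        refine HasDerivAt.fun_sum (𝕜 := ℝ) (F := ℂ) fun j _ => ?_
        rw [← Function.iterate_succ_apply]
        refine HasDerivAt.mul_const (𝕜 := ℝ) (𝔸 := ℂ) ?_ _
        have h2 : HasDerivAt (fun t : ℝ => (t:ℂ) ^ (j+1)) (((j+1 : ℕ) : ℂ) * (u:ℂ) ^ j * 1) u := by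
          simpa using (hasDerivAt_id u).ofReal_comp.fun_pow (j+1)
        convert h2.div_const ((j+1).factorial : ℂ) using 1
        rw [Nat.factorial_succ]
        have : ((j:ℂ)+1) ≠ 0 := by exact_mod_cast (Nat.succ_ne_zero j)
        have := Nat.cast_ne_zero (R := ℂ).2 (Nat.factorial_ne_zero j)
        push_cast; field_simp
    have := (convex_uIcc (0:ℝ) t).norm_image_sub_le_of_norm_hasDerivWithin_le
      (f := fun t : ℝ => F (x + t • Pi.single i 1) -
        ∑ j ∈ Finset.range (M+1), ((t : ℂ) ^ j / (j.factorial : ℂ)) * (pd i)^[j] F x)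
      (C := |t| ^ M * A) (fun u _ => (hd u).hasDerivWithinAt) (fun u hu => ?_)
      Set.left_mem_uIcc Set.right_mem_uIcc
    · rw [Finset.sum_range_succ' (fun j => (((0:ℝ):ℂ) ^ j / (j.factorial : ℂ)) * (pd i)^[j] F x)] at this
      simp only [Complex.ofReal_zero, zero_smul, add_zero, ne_eq, Nat.add_eq_zero_iff, one_ne_zero, and_false,
        not_false_eq_true, zero_pow, zero_div, zero_mul, Finset.sum_const_zero, zero_add, pow_zero,
        Nat.factorial_zero, Nat.cast_one, div_one, one_mul, Function.iterate_zero, id, sub_self,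
        sub_zero, Real.norm_eq_abs] at this
      calc _ ≤ _ := this
        _ = _ := by ring
    · refine (ih' u).trans ?_
      have hA0 : 0 ≤ A := (norm_nonneg _).trans (hA x)
      have : |u| ≤ |t| := by
        have := Set.abs_sub_left_of_mem_uIcc hu
        simpa using this
      gcongr

lemma kap_diff {n : ℕ} {κ : ℝ → ℂ} (hκ : IsKap κ) (i : Fin n) {M : ℕ} (hM : 1 ≤ M) {F : (Fin n → ℝ) → ℂ}
    (hF : ContDiff ℝ (⊤ : ℕ∞) F) {A A0 : ℝ}
    (hA : ∀ x, ‖(pd i)^[M] F x‖ ≤ A) (hA0 : ∀ x, ‖F x‖ ≤ A0) {r : ℝ} (hr : 0 < r) (x : (Fin n → ℝ)) :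
    ‖F x - ∫ y : ℝ, κ y * F (x - (y / r) • Pi.single i 1)‖
      ≤ (∫ y : ℝ, |y| ^ M * ‖κ y‖) * (A / r ^ M) := by
  have hκi : Integrable κ := by simpa using hκ.int 0
  have i1 : Integrable fun y : ℝ => κ y * F (x - (y / r) • Pi.single i 1) := by
    refine (hκi.norm.mul_const A0).mono' ?_ (Filter.Eventually.of_forall fun y => ?_)
    · have := hF.continuous; have := hκ.cont
      exact Continuous.aestronglyMeasurable (by fun_prop)
    · rw [norm_mul]; gcongr; exact hA0 _
  have i2 : ∀ j : ℕ, Integrable fun y : ℝ =>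
      κ y * ((((-(y / r) : ℝ) : ℂ) ^ j / (j.factorial : ℂ)) * (pd i)^[j] F x) := by
    intro j
    refine ((hκ.int j).mul_const (((-1/(r:ℂ))^j / (j.factorial : ℂ)) * (pd i)^[j] F x)).congr
      (Filter.Eventually.of_forall fun y => ?_)
    simp only
    have : ((-(y / r) : ℝ) : ℂ) = (y:ℂ) * (-1/(r:ℂ)) := by push_cast; ring
    rw [this, mul_pow]; ring
  have e2 : ∀ j : ℕ, 1 ≤ j → ∫ y : ℝ,
      κ y * ((((-(y / r) : ℝ) : ℂ) ^ j / (j.factorial : ℂ)) * (pd i)^[j] F x) = 0 := by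
    intro j hj
    have : ∀ y : ℝ, κ y * ((((-(y / r) : ℝ) : ℂ) ^ j / (j.factorial : ℂ)) * (pd i)^[j] F x)
        = ((y:ℂ)^j * κ y) * (((-1/(r:ℂ))^j / (j.factorial : ℂ)) * (pd i)^[j] F x) := by
      intro y
      have : ((-(y / r) : ℝ) : ℂ) = (y:ℂ) * (-1/(r:ℂ)) := by push_cast; ring
      rw [this, mul_pow]; ring
    simp_rw [this]
    rw [integral_mul_const, hκ.mom j hj, zero_mul]
  have e3 : F x = ∫ y : ℝ, κ y * ∑ j ∈ Finset.range M,
      ((((-(y / r) : ℝ) : ℂ) ^ j / (j.factorial : ℂ)) * (pd i)^[j] F x) := by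
    simp_rw [Finset.mul_sum]
    rw [integral_finsetSum _ (fun j _ => i2 j)]
    obtain ⟨M', rfl⟩ : ∃ M', M = M' + 1 := ⟨M - 1, by omega⟩
    rw [Finset.sum_range_succ', Finset.sum_eq_zero (fun j _ => e2 (j+1) (by omega))]
    simp only [pow_zero, Nat.factorial_zero, Nat.cast_one, div_one, one_mul, Function.iterate_zero,
      id, zero_add]
    rw [integral_mul_const, hκ.one, one_mul]
  have i3 : Integrable fun y : ℝ => κ y * ∑ j ∈ Finset.range M,
      ((((-(y / r) : ℝ) : ℂ) ^ j / (j.factorial : ℂ)) * (pd i)^[j] F x) := by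
    simp_rw [Finset.mul_sum]
    exact integrable_finsetSum _ fun j _ => i2 j
  have i4 : Integrable fun y : ℝ => |y| ^ M * ‖κ y‖ := by
    refine (hκ.int M).norm.congr (Filter.Eventually.of_forall fun y => by simp)
  conv_lhs => rw [e3]
  rw [← integral_sub i3 i1, ← integral_mul_const]
  refine norm_integral_le_of_norm_le (i4.mul_const _) (Filter.Eventually.of_forall fun y => ?_)
  rw [← mul_sub, norm_mul, norm_sub_rev]
  have ht := taylor_pd i M hF hA x (-(y / r))
  rw [neg_smul, ← sub_eq_add_neg] at ht
  refine (mul_le_mul_of_nonneg_left ht (norm_nonneg _)).trans (le_of_eq ?_)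
  rw [abs_neg, abs_div, abs_of_pos hr, div_pow]; ring

end


noncomputable section

lemma IsKap.integrable {κ : ℝ → ℂ} (hκ : IsKap κ) : Integrable κ := by simpa using hκ.int 0

lemma sep_zero {n : ℕ} {κ : ℝ → ℂ} (hκ : IsKap κ) (i : Fin n) {r : ℝ} (hr : 0 < r)
    {G h : (Fin n → ℝ) → ℂ} (hG : Integrable G) (hh : Integrable h)
    (hsep : ∀ ξ η, G ξ ≠ 0 → h η ≠ 0 → r ≤ |ξ i - η i|) (u u' : (Fin n → ℝ)) :
    ∫ y : ℝ, κ y * (IFT G (u + (y / r) • Pi.single i 1) *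
      (starRingEnd ℂ) (IFT h (u' + (y / r) • Pi.single i 1))) = 0 := by
  let T : ℝ → (Fin n → ℝ) × (Fin n → ℝ) → ℂ := fun y p =>
    κ y * ((expi (dotp (u + (y / r) • Pi.single i 1) p.1) * G p.1) *
      (starRingEnd ℂ) (expi (dotp (u' + (y / r) • Pi.single i 1) p.2) * h p.2))
  have e1 : ∀ y : ℝ, κ y * (IFT G (u + (y / r) • Pi.single i 1) *
      (starRingEnd ℂ) (IFT h (u' + (y / r) • Pi.single i 1)))
      = ∫ p, T y p ∂((volume : Measure (Fin n → ℝ)).prod volume) := by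
    intro y
    simp only [T]
    rw [integral_const_mul]
    unfold IFT
    rw [← integral_conj]
    exact congrArg _ (integral_prod_mul (fun ξ => expi (dotp (u + (y / r) • Pi.single i 1) ξ) * G ξ)
      (fun η => (starRingEnd ℂ) (expi (dotp (u' + (y / r) • Pi.single i 1) η) * h η))).symm
  simp_rw [e1]
  have hI : Integrable (Function.uncurry T) ((volume : Measure ℝ).prod ((volume : Measure (Fin n → ℝ)).prod volume)) := by
    refine (hκ.integrable.mul_prod (hG.mul_prod hh)).norm.mono' ?_ (Filter.Eventually.of_forall fun p => ?_)
    · refine (hκ.integrable.aestronglyMeasurable.comp_fst).mul (AEStronglyMeasurable.mul ?_ ?_)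
      · refine AEStronglyMeasurable.mul ?_ (hG.aestronglyMeasurable.comp_fst.comp_snd)
        exact (Continuous.edot (by fun_prop) (by fun_prop)).aestronglyMeasurable
      · refine Complex.continuous_conj.comp_aestronglyMeasurable (AEStronglyMeasurable.mul ?_ (hh.aestronglyMeasurable.comp_snd.comp_snd))
        exact (Continuous.edot (by fun_prop) (by fun_prop)).aestronglyMeasurable
    · simp [T, Function.uncurry, norm_expi]
  rw [integral_integral_swap hI]
  refine integral_eq_zero_of_ae (Filter.Eventually.of_forall fun p => ?_)
  simp only [T, Pi.zero_apply]
  by_cases h1 : G p.1 = 0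
  · simp [h1]
  by_cases h2 : h p.2 = 0
  · simp [h2]
  have h3 := hκ.van ((p.1 i - p.2 i) / r) (by
    rw [abs_div, abs_of_pos hr, le_div_iff₀ hr, one_mul]; exact hsep _ _ h1 h2)
  have e2 : ∀ y : ℝ, κ y * ((expi (dotp (u + (y / r) • Pi.single i 1) p.1) * G p.1) *
      (starRingEnd ℂ) (expi (dotp (u' + (y / r) • Pi.single i 1) p.2) * h p.2))
      = (κ y * expi (y * ((p.1 i - p.2 i) / r))) *
        ((expi (dotp u p.1) * G p.1) * (starRingEnd ℂ) (expi (dotp u' p.2) * h p.2)) := by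
    intro y
    have : y * ((p.1 i - p.2 i) / r) = (y / r) * p.1 i + -((y / r) * p.2 i) := by ring
    rw [this]
    simp only [dotp_add_left, dotp_smul_left, dotp_single, expi_add, map_mul, conj_expi, one_mul]
    ring
  simp_rw [e2]
  rw [integral_mul_const, h3, zero_mul]

/-- averaged kernel -/
def Pk {n : ℕ} (κ : ℝ → ℂ) (i : Fin n) (r : ℝ) (K : (Fin n → ℝ) → (Fin n → ℝ) → ℂ) (x z : (Fin n → ℝ)) : ℂ :=
  ∫ y : ℝ, κ y * K (x - (y / r) • Pi.single i 1) z

lemma Pk_cont {n : ℕ} {κ : ℝ → ℂ} (hκ : IsKap κ) (i : Fin n) (r : ℝ)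
    {K : (Fin n → ℝ) → (Fin n → ℝ) → ℂ} (hK : Continuous fun p : (Fin n → ℝ) × (Fin n → ℝ) => K p.1 p.2)
    {H0 : ℝ} (hH0 : ∀ x z, ‖K x z‖ ≤ H0) :
    Continuous fun p : (Fin n → ℝ) × (Fin n → ℝ) => Pk κ i r K p.1 p.2 := by
  have hc := hκ.cont
  refine continuous_of_dominated (bound := fun y => ‖κ y‖ * H0) ?_ ?_ (hκ.integrable.norm.mul_const _) ?_
  · intro p
    exact (hc.mul (hK.comp (f := fun y : ℝ => (p.1 - (y / r) • Pi.single i 1, p.2))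
      (by fun_prop))).aestronglyMeasurable
  · intro p
    refine Filter.Eventually.of_forall fun y => ?_
    rw [norm_mul]; gcongr; exact hH0 _ _
  · refine Filter.Eventually.of_forall fun y => ?_
    exact continuous_const.mul (hK.comp (f := fun p : (Fin n → ℝ) × (Fin n → ℝ) => (p.1 - (y / r) • Pi.single i 1, p.2))
      (by fun_prop))

lemma Pk_le {n : ℕ} {κ : ℝ → ℂ} (hκ : IsKap κ) (i : Fin n) (r : ℝ)
    {K : (Fin n → ℝ) → (Fin n → ℝ) → ℂ} {z : (Fin n → ℝ)} {B : ℝ} (hB : ∀ x, ‖K x z‖ ≤ B) (x : (Fin n → ℝ)) :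
    ‖Pk κ i r K x z‖ ≤ (∫ y, ‖κ y‖) * B := by
  unfold Pk
  rw [← integral_mul_const]
  refine norm_integral_le_of_norm_le (hκ.integrable.norm.mul_const _) (Filter.Eventually.of_forall fun y => ?_)
  rw [norm_mul]; gcongr; exact hB _

lemma far_zero {n : ℕ} {κ : ℝ → ℂ} (hκ : IsKap κ) (i : Fin n) {r : ℝ} (hr : 0 < r)
    {K : (Fin n → ℝ) → (Fin n → ℝ) → ℂ} (hK : Continuous fun p : (Fin n → ℝ) × (Fin n → ℝ) => K p.1 p.2)
    {H : (Fin n → ℝ) → ℝ} (hH : Integrable H) (hKH : ∀ x z, ‖K x z‖ ≤ H z)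
    {G h : (Fin n → ℝ) → ℂ} (hG : Integrable G) (hG2 : Integrable fun x => ‖G x‖ ^ 2)
    (hh : Integrable h) (hh2 : Integrable fun x => ‖h x‖ ^ 2)
    (hsep : ∀ ξ η, G ξ ≠ 0 → h η ≠ 0 → r ≤ |ξ i - η i|) :
    Bil (Pk κ i r K) (IFT G) (IFT h) = 0 := by
  set w := IFT G with hw_
  set v := IFT h with hv_
  have hw : Continuous w := IFT_continuous hG
  have hv : Continuous v := IFT_continuous hh
  have hw2 := (IFT_planch hG hG2).1
  have hv2 := (IFT_planch hh hh2).1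
  have hc := hκ.cont
  let e : (Fin n → ℝ) := Pi.single i 1
  let μ2 := (volume : Measure (Fin n → ℝ)).prod (volume : Measure (Fin n → ℝ))
  -- first triple integrand
  let T1 : (Fin n → ℝ) × (Fin n → ℝ) → ℝ → ℂ := fun p y =>
    κ y * (K (p.1 - (y / r) • e) p.2 * w (p.1 - p.2) * (starRingEnd ℂ) (v p.1))
  let T2 : (Fin n → ℝ) × (Fin n → ℝ) → ℝ → ℂ := fun p y =>
    κ y * (K p.1 p.2 * w (p.1 + (y / r) • e - p.2) * (starRingEnd ℂ) (v (p.1 + (y / r) • e)))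
  have hvc : Continuous fun x => (starRingEnd ℂ) (v x) := Complex.continuous_conj.comp hv
  have c1 : Continuous (Function.uncurry T1) := by
    have a1 : Continuous fun q : ((Fin n → ℝ) × (Fin n → ℝ)) × ℝ => K (q.1.1 - (q.2 / r) • e) q.1.2 :=
      hK.comp (f := fun q : ((Fin n → ℝ) × (Fin n → ℝ)) × ℝ => (q.1.1 - (q.2 / r) • e, q.1.2)) (by fun_prop)
    exact (by fun_prop : Continuous fun q : ((Fin n → ℝ) × (Fin n → ℝ)) × ℝ => κ q.2).mul
      ((a1.mul (by fun_prop)).mul (hvc.comp (by fun_prop)))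
  have c2 : Continuous (Function.uncurry T2) := by
    have a1 : Continuous fun q : ((Fin n → ℝ) × (Fin n → ℝ)) × ℝ => K q.1.1 q.1.2 :=
      hK.comp (f := fun q : ((Fin n → ℝ) × (Fin n → ℝ)) × ℝ => q.1) (by fun_prop)
    exact (by fun_prop : Continuous fun q : ((Fin n → ℝ) × (Fin n → ℝ)) × ℝ => κ q.2).mul
      ((a1.mul (by fun_prop)).mul (hvc.comp (by fun_prop)))
  have I0 := bil_bound hK hH hKH hw hv hw2 hv2
  have Iabs : Integrable (fun p : (Fin n → ℝ) × (Fin n → ℝ) => H p.2 * (‖w (p.1 - p.2)‖ * ‖v p.1‖)) μ2 := by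
    have hH0 : ∀ z, 0 ≤ H z := fun z => (norm_nonneg _).trans (hKH 0 z)
    -- use continuity via AEStronglyMeasurable
    have hcs : ∀ z, Integrable (fun x => ‖w (x - z)‖ * ‖v x‖) ∧
        ∫ x, ‖w (x - z)‖ * ‖v x‖ ≤ √(∫ x, ‖w x‖ ^ 2) * √(∫ x, ‖v x‖ ^ 2) := by
      intro z
      have h := cs_int (w := fun x => w (x - z)) (by fun_prop) hv (l2_shift hw2 z).1 hv2
      rw [(l2_shift hw2 z).2] at h
      exact h
    have hm : AEStronglyMeasurable (fun p : (Fin n → ℝ) × (Fin n → ℝ) => H p.2 * (‖w (p.1 - p.2)‖ * ‖v p.1‖)) μ2 :=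
      hH.aestronglyMeasurable.comp_snd.mul (Continuous.aestronglyMeasurable (by fun_prop))
    rw [integrable_prod_iff' hm]
    refine ⟨Filter.Eventually.of_forall fun z => (hcs z).1.const_mul (H z), ?_⟩
    refine (hH.mul_const (√(∫ x, ‖w x‖ ^ 2) * √(∫ x, ‖v x‖ ^ 2))).mono'
      (hm.norm.prod_swap (μ := volume) (ν := volume)).integral_prod_right'
      (Filter.Eventually.of_forall fun z => ?_)
    rw [Real.norm_of_nonneg (integral_nonneg fun x => norm_nonneg _)]
    simp only [norm_mul, norm_norm, Real.norm_of_nonneg (hH0 z)]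
    rw [integral_const_mul]
    exact mul_le_mul_of_nonneg_left (hcs z).2 (hH0 z)
  have I1 : Integrable (Function.uncurry T1) (μ2.prod volume) := by
    refine (Iabs.mul_prod hκ.integrable.norm).mono' c1.aestronglyMeasurable
      (Filter.Eventually.of_forall fun q => ?_)
    simp only [T1, Function.uncurry, norm_mul, RCLike.norm_conj]
    calc ‖κ q.2‖ * (‖K (q.1.1 - (q.2 / r) • e) q.1.2‖ * ‖w (q.1.1 - q.1.2)‖ * ‖v q.1.1‖)
        ≤ ‖κ q.2‖ * (H q.1.2 * ‖w (q.1.1 - q.1.2)‖ * ‖v q.1.1‖) := by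
          gcongr; exact hKH _ _
      _ = _ := by ring
  have sh : ∀ a : (Fin n → ℝ), Integrable (fun x => ‖w (x + a)‖ ^ 2) ∧ Integrable (fun x => ‖v (x + a)‖ ^ 2) ∧
      ∫ x, ‖w (x + a)‖ ^ 2 = ∫ x, ‖w x‖ ^ 2 ∧ ∫ x, ‖v (x + a)‖ ^ 2 = ∫ x, ‖v x‖ ^ 2 := fun a =>
    ⟨hw2.comp_add_right a, hv2.comp_add_right a, integral_add_right_eq_self (fun x => ‖w x‖ ^ 2) a,
      integral_add_right_eq_self (fun x => ‖v x‖ ^ 2) a⟩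
  have B2 : ∀ a : (Fin n → ℝ), Integrable (fun p : (Fin n → ℝ) × (Fin n → ℝ) => K p.1 p.2 * w (p.1 + a - p.2) *
      (starRingEnd ℂ) (v (p.1 + a))) μ2 ∧
      ∫ p, ‖K p.1 p.2 * w (p.1 + a - p.2) * (starRingEnd ℂ) (v (p.1 + a))‖ ∂μ2 ≤
      (∫ z, H z) * (√(∫ x, ‖w x‖ ^ 2) * √(∫ x, ‖v x‖ ^ 2)) := by
    intro a
    have := bil_bound hK hH hKH (w := fun x => w (x + a)) (v := fun x => v (x + a)) (by fun_prop)
      (by fun_prop) (sh a).1 (sh a).2.1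
    rw [(sh a).2.2.1, (sh a).2.2.2] at this
    simpa only [sub_add_eq_add_sub] using this
  have I2 : Integrable (Function.uncurry T2) (μ2.prod volume) := by
    rw [integrable_prod_iff' c2.aestronglyMeasurable]
    refine ⟨Filter.Eventually.of_forall fun y => (B2 ((y / r) • e)).1.const_mul (κ y), ?_⟩
    refine (hκ.integrable.norm.mul_const ((∫ z, H z) * (√(∫ x, ‖w x‖ ^ 2) * √(∫ x, ‖v x‖ ^ 2)))).mono'
      ((c2.norm.aestronglyMeasurable (μ := μ2.prod volume)).prod_swap (μ := volume) (ν := μ2)).integral_prod_right'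
      (Filter.Eventually.of_forall fun y => ?_)
    rw [Real.norm_of_nonneg (integral_nonneg fun x => norm_nonneg _)]
    simp only [Function.uncurry, T2, norm_mul (κ y)]
    rw [integral_const_mul]
    exact mul_le_mul_of_nonneg_left (B2 _).2 (norm_nonneg _)
  have E1 : Bil (Pk κ i r K) w v = ∫ p, (∫ y, T1 p y) ∂μ2 := by
    unfold Bil
    refine integral_congr_ae (Filter.Eventually.of_forall fun p => ?_)
    simp only [T1, Pk]
    rw [mul_assoc, ← integral_mul_const]
    congr 1; ext y; ring
  have E2 : ∀ y, ∫ p, T1 p y ∂μ2 = ∫ p, T2 p y ∂μ2 := by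
    intro y
    rw [← integral_add_right_eq_self (μ := μ2) (fun p => T1 p y) (((y / r) • e, 0) : (Fin n → ℝ) × (Fin n → ℝ))]
    simp [T1, T2]
  rw [E1, integral_integral_swap I1]
  simp_rw [E2]
  rw [← integral_integral_swap I2]
  refine integral_eq_zero_of_ae (Filter.Eventually.of_forall fun p => ?_)
  have := sep_zero hκ i hr hG hh hsep (p.1 - p.2) p.1
  simp only [T2, Pi.zero_apply]
  have e3 : ∀ y : ℝ, κ y * (K p.1 p.2 * w (p.1 + (y / r) • e - p.2) * (starRingEnd ℂ) (v (p.1 + (y / r) • e)))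
      = K p.1 p.2 * (κ y * (IFT G (p.1 - p.2 + (y / r) • Pi.single i 1) *
      (starRingEnd ℂ) (IFT h (p.1 + (y / r) • Pi.single i 1)))) := by
    intro y
    rw [← sub_add_eq_add_sub]; ring
  simp_rw [e3]
  rw [integral_const_mul, this, mul_zero]

/-- far interaction bound -/
lemma far_bound {n : ℕ} {κ : ℝ → ℂ} (hκ : IsKap κ) (i : Fin n) {r : ℝ} (hr : 0 < r)
    {K : (Fin n → ℝ) → (Fin n → ℝ) → ℂ} (hK : Continuous fun p : (Fin n → ℝ) × (Fin n → ℝ) => K p.1 p.2)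
    {H H' : (Fin n → ℝ) → ℝ} {H0 : ℝ} (hH : Integrable H) (hKH : ∀ x z, ‖K x z‖ ≤ H z) (hH0 : ∀ z, H z ≤ H0)
    (hH' : Integrable H') (hKH' : ∀ x z, ‖K x z - Pk κ i r K x z‖ ≤ H' z)
    {G h : (Fin n → ℝ) → ℂ} (hG : Integrable G) (hG2 : Integrable fun x => ‖G x‖ ^ 2)
    (hh : Integrable h) (hh2 : Integrable fun x => ‖h x‖ ^ 2)
    (hsep : ∀ ξ η, G ξ ≠ 0 → h η ≠ 0 → r ≤ |ξ i - η i|) :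
    ‖Bil K (IFT G) (IFT h)‖ ≤ (∫ z, H' z) * (√(∫ x, ‖G x‖ ^ 2) * √(∫ x, ‖h x‖ ^ 2)) := by
  have hP := Pk_cont hκ i r hK (fun x z => (hKH x z).trans (hH0 z))
  have hPH : ∀ x z, ‖Pk κ i r K x z‖ ≤ (∫ y, ‖κ y‖) * H z := fun x z =>
    Pk_le hκ i r (fun x => hKH x z) x
  have e := Bil_sub hK hP hH hKH (hH.const_mul _) hPH (IFT_continuous hG) (IFT_continuous hh)
    (IFT_planch hG hG2).1 (IFT_planch hh hh2).1
  rw [far_zero hκ i hr hK hH hKH hG hG2 hh hh2 hsep, sub_zero] at e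
  rw [e, ← (IFT_planch hG hG2).2, ← (IFT_planch hh hh2).2]
  exact Bil_le (hK.sub hP) hH' hKH' (IFT_continuous hG) (IFT_continuous hh)
    (IFT_planch hG hG2).1 (IFT_planch hh hh2).1

end


noncomputable section

lemma md_zero {n : ℕ} (F : (Fin n → ℝ) → ℂ) : md (0 : Fin n → ℕ) F = F := by
  unfold md
  have : ∀ l : List (Fin n), ((l.map fun i => (pd (n := n) i)^[(0 : Fin n → ℕ) i]).foldr (· ∘ ·) id) = id := by
    intro l
    induction l with
    | nil => rfl
    | cons a l ih => simp only [List.map_cons, List.foldr_cons, ih]; rfl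
  rw [this]; rfl

lemma md_single {n : ℕ} (i : Fin n) (j : ℕ) (F : (Fin n → ℝ) → ℂ) :
    md (Pi.single i j) F = (pd i)^[j] F := by
  unfold md
  have : ∀ l : List (Fin n), l.Nodup →
      ((l.map fun i' => (pd (n := n) i')^[(Pi.single i j : Fin n → ℕ) i']).foldr (· ∘ ·) id)
        = if i ∈ l then (pd i)^[j] else id := by
    intro l
    induction l with
    | nil => intro _; simp
    | cons a l ih =>
      intro hl
      have hl' := List.nodup_cons.1 hl
      simp only [List.map_cons, List.foldr_cons, ih hl'.2]
      by_cases h : a = i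
      · subst h
        rw [if_neg hl'.1]
        simp
      · have : (Pi.single i j : Fin n → ℕ) a = 0 := Pi.single_eq_of_ne h _
        rw [this]
        have h' : i ≠ a := fun e => h e.symm
        by_cases h2 : i ∈ l
        · simp [h2]
        · simp [h2, h']
  rw [this _ (List.nodup_finRange n)]
  simp

lemma mOrd_zero {n : ℕ} : mOrd (0 : Fin n → ℕ) = 0 := by simp [mOrd]

lemma mOrd_single {n : ℕ} (i : Fin n) (j : ℕ) : mOrd (Pi.single i j : Fin n → ℕ) = j := by
  unfold mOrd
  rw [Finset.sum_eq_single i]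
  · simp
  · intro b _ hb; simp [Pi.single_eq_of_ne hb]
  · simp

/-- Japanese bracket -/
def jb {n : ℕ} (ξ : (Fin n → ℝ)) : ℝ := √(wt ξ)

lemma wt_ge_one {n : ℕ} (ξ : (Fin n → ℝ)) : 1 ≤ wt ξ := by
  unfold wt; have := Finset.sum_nonneg (s := Finset.univ) (f := fun i => ξ i ^ 2) (fun i _ => sq_nonneg _); linarith

lemma jb_ge_one {n : ℕ} (ξ : (Fin n → ℝ)) : 1 ≤ jb ξ := Real.one_le_sqrt.2 (wt_ge_one ξ)

lemma jb_pos {n : ℕ} (ξ : (Fin n → ℝ)) : 0 < jb ξ := lt_of_lt_of_le one_pos (jb_ge_one ξ)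

lemma jb_sq {n : ℕ} (ξ : (Fin n → ℝ)) : jb ξ ^ 2 = wt ξ := Real.sq_sqrt (by linarith [wt_ge_one ξ])

lemma jb_rpow {n : ℕ} (ξ : (Fin n → ℝ)) (p : ℝ) : wt ξ ^ (p / 2) = jb ξ ^ p := by
  unfold jb
  rw [Real.sqrt_eq_rpow, ← Real.rpow_mul (by linarith [wt_ge_one ξ])]; congr 1; ring

lemma jb_cont {n : ℕ} : Continuous (jb (n := n)) := by
  unfold jb wt; fun_prop

lemma abs_le_jb {n : ℕ} (ξ : (Fin n → ℝ)) (i : Fin n) : |ξ i| ≤ jb ξ := by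
  apply Real.abs_le_sqrt
  unfold wt
  have := Finset.single_le_sum (s := Finset.univ) (f := fun i => ξ i ^ 2) (fun i _ => sq_nonneg _) (Finset.mem_univ i)
  linarith

lemma norm_le_jb {n : ℕ} (ξ : (Fin n → ℝ)) : ‖ξ‖ ≤ jb ξ :=
  (pi_norm_le_iff_of_nonneg (jb_pos ξ).le).2 fun i => abs_le_jb ξ i

lemma jb_lip {n : ℕ} (ξ ζ : (Fin n → ℝ)) : |jb ξ - jb ζ| ≤ n * ‖ξ - ζ‖ := by
  have h1 : (jb ξ - jb ζ) * (jb ξ + jb ζ) = ∑ i, (ξ i - ζ i) * (ξ i + ζ i) := by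
    have : (jb ξ - jb ζ) * (jb ξ + jb ζ) = jb ξ ^ 2 - jb ζ ^ 2 := by ring
    rw [this, jb_sq, jb_sq]; unfold wt
    rw [add_sub_add_left_eq_sub, ← Finset.sum_sub_distrib]
    exact Finset.sum_congr rfl fun i _ => by ring
  have hp : 0 < jb ξ + jb ζ := add_pos (jb_pos _) (jb_pos _)
  have h2 : |jb ξ - jb ζ| * (jb ξ + jb ζ) ≤ n * ‖ξ - ζ‖ * (jb ξ + jb ζ) := by
    rw [← abs_of_pos hp, ← abs_mul, abs_of_pos hp, h1]
    refine (Finset.abs_sum_le_sum_abs _ _).trans ?_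
    calc ∑ i, |(ξ i - ζ i) * (ξ i + ζ i)| ≤ ∑ i : Fin n, ‖ξ - ζ‖ * (jb ξ + jb ζ) := by
          refine Finset.sum_le_sum fun i _ => ?_
          rw [abs_mul]
          refine mul_le_mul (norm_le_pi_norm (ξ - ζ) i) ?_ (abs_nonneg _) (norm_nonneg _)
          exact (abs_add_le _ _).trans (add_le_add (abs_le_jb ξ i) (abs_le_jb ζ i))
      _ = _ := by simp; ring
  exact le_of_mul_le_mul_right h2 hp

lemma rpow_cmp {a b : ℝ} (ha : 0 < a) (hb : 0 < b) (h1 : b ≤ 2 * a) (h2 : a ≤ 2 * b) (p : ℝ) :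
    b ^ p ≤ 2 ^ |p| * a ^ p := by
  rcases le_total 0 p with hp | hp
  · rw [abs_of_nonneg hp, ← Real.mul_rpow (by norm_num) ha.le]
    exact Real.rpow_le_rpow hb.le h1 hp
  · rw [abs_of_nonpos hp]
    have : b ^ p ≤ (a / 2) ^ p := Real.rpow_le_rpow_of_nonpos (by positivity) (by linarith) hp
    refine this.trans (le_of_eq ?_)
    rw [Real.div_rpow ha.le (by norm_num), Real.rpow_neg (by norm_num)]; field_simp

/-- collected pure-derivative symbol bounds -/
lemma symb_bounds {n : ℕ} {m ρ δ : ℝ} {σ : (Fin n → ℝ) → (Fin n → ℝ) → ℂ} (hσ : SymbolClass m ρ δ σ) (k : ℕ) :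
    ∃ A > 0, ∀ i, ∀ j ≤ k, ∀ x ξ,
      ‖(pd i)^[j] (σ x) ξ‖ ≤ A * jb ξ ^ (m - ρ * j) ∧
      ‖(pd i)^[j] (fun x => σ x ξ) x‖ ≤ A * jb ξ ^ (m + δ * j) := by
  choose C hC hb using hσ.2
  let A : ℝ := 1 + ∑ i : Fin n, ∑ j ∈ Finset.range (k+1), (C (Pi.single i j) 0 + C 0 (Pi.single i j))
  have hnn : ∀ i : Fin n, ∀ j : ℕ, 0 ≤ C (Pi.single i j) 0 + C 0 (Pi.single i j) := fun i j =>
    (add_pos (hC _ _) (hC _ _)).le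
  have hA : ∀ i : Fin n, ∀ j ≤ k, C (Pi.single i j) 0 ≤ A ∧ C 0 (Pi.single i j) ≤ A := by
    intro i j hj
    have h1 := Finset.single_le_sum (s := Finset.range (k+1))
      (f := fun j => C (Pi.single i j) 0 + C 0 (Pi.single i j)) (fun j _ => hnn i j)
      (Finset.mem_range.2 (Nat.lt_succ_of_le hj))
    have h2 := Finset.single_le_sum (s := Finset.univ)
      (f := fun i : Fin n => ∑ j ∈ Finset.range (k+1), (C (Pi.single i j) 0 + C 0 (Pi.single i j)))
      (fun i _ => Finset.sum_nonneg fun j _ => hnn i j) (Finset.mem_univ i)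
    have h3 := hC (Pi.single i j) 0
    have h4 := hC 0 (Pi.single i j)
    constructor <;> simp only [A] <;> linarith
  refine ⟨A, by
    have := Finset.sum_nonneg (s := Finset.univ) (f := fun i : Fin n => ∑ j ∈ Finset.range (k+1), (C (Pi.single i j) 0 + C 0 (Pi.single i j)))
      (fun i _ => Finset.sum_nonneg fun j _ => hnn i j)
    simp only [A]; linarith, fun i j hj x ξ => ⟨?_, ?_⟩⟩
  · have := hb (Pi.single i j) 0 x ξ
    unfold mixedD at this
    rw [md_zero, md_single, mOrd_zero, mOrd_single, mul_zero, add_zero, jb_rpow] at this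
    refine this.trans ?_
    exact mul_le_mul_of_nonneg_right (hA i j hj).1 (Real.rpow_nonneg (jb_pos ξ).le _)
  · have := hb 0 (Pi.single i j) x ξ
    unfold mixedD at this
    simp_rw [md_zero] at this
    rw [md_single, mOrd_zero, mOrd_single, mul_zero, sub_zero, jb_rpow] at this
    refine this.trans ?_
    exact mul_le_mul_of_nonneg_right (hA i j hj).2 (Real.rpow_nonneg (jb_pos ξ).le _)

/-- integrable decaying weight -/
def Wn (n : ℕ) (s : ℝ) (z : (Fin n → ℝ)) : ℝ := s ^ n * ((1 + s * ‖z‖) ^ (n + 1))⁻¹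

lemma Wn_int (n : ℕ) {s : ℝ} (hs : 0 < s) : Integrable (Wn n s) ∧ ∫ z, Wn n s z = ∫ z, Wn n 1 z := by
  have h1 : Integrable (Wn n 1) := by
    have := integrable_one_add_norm (E := (Fin n → ℝ)) (μ := volume) (r := (n:ℝ)+1) (by simp)
    refine this.congr (Filter.Eventually.of_forall fun z => ?_)
    unfold Wn
    simp only [one_pow, one_mul]
    rw [Real.rpow_neg (by positivity)]
    congr 1
    rw [← Real.rpow_natCast]; push_cast; rfl
  have e : Wn n s = fun z => s ^ n * Wn n 1 (s • z) := by
    ext z; unfold Wn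
    rw [norm_smul, Real.norm_of_nonneg hs.le]; simp
  rw [e]
  refine ⟨(h1.comp_smul hs.ne').const_mul _, ?_⟩
  rw [integral_const_mul, Measure.integral_comp_smul]
  simp only [Module.finrank_fintype_fun_eq_card, Fintype.card_fin, smul_eq_mul]
  rw [abs_of_pos (by positivity)]
  field_simp

lemma Wn_nonneg (n : ℕ) {s : ℝ} (hs : 0 < s) (z : (Fin n → ℝ)) : 0 ≤ Wn n s z := by unfold Wn; positivity

end


noncomputable section

/-- window scale -/
def sc {n : ℕ} (ρ δ ε : ℝ) (ζ : (Fin n → ℝ)) : ℝ := ε * jb ζ ^ ((ρ + δ) / 2)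

/-- window -/
def cw {n : ℕ} (χ : (Fin n → ℝ) → ℂ) (s : ℝ) (ζ ξ : (Fin n → ℝ)) : ℂ := χ (s⁻¹ • (ξ - ζ))

structure Dat {n : ℕ} (m ρ δ ε : ℝ) (σ : (Fin n → ℝ) → (Fin n → ℝ) → ℂ) (χ : (Fin n → ℝ) → ℂ) : Prop where
  hn : 1 ≤ n
  hρ : ρ ≤ 1
  hδρ : δ < ρ
  hδ0 : 0 ≤ δ
  hσ : SymbolClass m ρ δ σ
  hχ : ContDiff ℝ (⊤ : ℕ∞) χ
  hχ0 : ∀ t, 1 < ‖t‖ → χ t = 0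
  hχr : ∀ t, (starRingEnd ℂ) (χ t) = χ t
  hε : 0 < ε
  hε' : ε * (8 * n) ≤ 1

section
variable {n : ℕ} {m ρ δ ε : ℝ} {σ : (Fin n → ℝ) → (Fin n → ℝ) → ℂ} {χ : (Fin n → ℝ) → ℂ}

lemma Dat.hε1 (D : Dat m ρ δ ε σ χ) : ε ≤ 1 := by
  have := D.hε'; have := D.hε
  have h : (1:ℝ) ≤ n := by exact_mod_cast D.hn
  nlinarith

lemma Dat.sc_pos (D : Dat m ρ δ ε σ χ) (ζ : (Fin n → ℝ)) : 0 < sc ρ δ ε ζ :=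
  mul_pos D.hε (Real.rpow_pos_of_pos (jb_pos ζ) _)

lemma Dat.sc_le (D : Dat m ρ δ ε σ χ) (ζ : (Fin n → ℝ)) : sc ρ δ ε ζ ≤ ε * jb ζ := by
  unfold sc
  refine mul_le_mul_of_nonneg_left ?_ D.hε.le
  calc jb ζ ^ ((ρ + δ) / 2) ≤ jb ζ ^ (1:ℝ) :=
        Real.rpow_le_rpow_of_exponent_le (jb_ge_one ζ) (by linarith [D.hρ, D.hδρ])
    _ = _ := Real.rpow_one _

lemma Dat.sc_le' (D : Dat m ρ δ ε σ χ) (ζ : (Fin n → ℝ)) : sc ρ δ ε ζ ≤ jb ζ ^ ((ρ + δ) / 2) := by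
  unfold sc
  exact mul_le_of_le_one_left (Real.rpow_nonneg (jb_pos ζ).le _) D.hε1

lemma Dat.cmp (D : Dat m ρ δ ε σ χ) {ζ ξ : (Fin n → ℝ)} (h : ‖ξ - ζ‖ ≤ 2 * sc ρ δ ε ζ) :
    |jb ξ - jb ζ| ≤ jb ζ / 4 := by
  refine (jb_lip ξ ζ).trans ?_
  have h1 : ‖ξ - ζ‖ ≤ 2 * (ε * jb ζ) := h.trans (by linarith [D.sc_le ζ])
  have hn : (0:ℝ) ≤ n := Nat.cast_nonneg n
  calc (n:ℝ) * ‖ξ - ζ‖ ≤ n * (2 * (ε * jb ζ)) := by gcongr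
    _ = (ε * (8 * n)) * jb ζ / 4 := by ring
    _ ≤ 1 * jb ζ / 4 := by
      have := jb_pos ζ
      have := D.hε'
      gcongr
    _ = _ := by ring

lemma Dat.cmp2 (D : Dat m ρ δ ε σ χ) {ζ ξ : (Fin n → ℝ)} (h : ‖ξ - ζ‖ ≤ 2 * sc ρ δ ε ζ) :
    jb ξ ≤ 2 * jb ζ ∧ jb ζ ≤ 2 * jb ξ := by
  have := abs_le.1 (D.cmp h)
  have := jb_pos ζ
  constructor <;> linarith

lemma Dat.cmpr (D : Dat m ρ δ ε σ χ) {ζ ξ : (Fin n → ℝ)} (h : ‖ξ - ζ‖ ≤ 2 * sc ρ δ ε ζ) (p : ℝ) :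
    jb ξ ^ p ≤ 2 ^ |p| * jb ζ ^ p :=
  rpow_cmp (jb_pos ζ) (jb_pos ξ) (D.cmp2 h).1 (D.cmp2 h).2 p

lemma cw_zero {s : ℝ} (hs : 0 < s) (D : Dat m ρ δ ε σ χ) (ζ ξ : (Fin n → ℝ)) (h : s < ‖ξ - ζ‖) :
    cw χ s ζ ξ = 0 := by
  apply D.hχ0
  rw [norm_smul, norm_inv, Real.norm_of_nonneg hs.le, ← div_eq_inv_mul, one_lt_div hs]
  exact h

lemma cw_smooth (D : Dat m ρ δ ε σ χ) (s : ℝ) (ζ : (Fin n → ℝ)) : ContDiff ℝ (⊤ : ℕ∞) (cw χ s ζ) := by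
  unfold cw
  exact D.hχ.comp ((contDiff_id.sub contDiff_const).const_smul _)

lemma win_bounds (D : Dat m ρ δ ε σ χ) (k : ℕ) :
    ∃ X > 0, ∀ i, ∀ j ≤ k, ∀ s > 0, ∀ ζ ξ : (Fin n → ℝ), s ^ j * ‖(pd i)^[j] (cw χ s ζ) ξ‖ ≤ X := by
  have h1 : ∀ i : Fin n, ∀ j : ℕ, ∃ X, ∀ t, ‖(pd i)^[j] χ t‖ ≤ X := by
    intro i j
    have hz : ∀ t, 1 < ‖t - 0‖ → χ t = 0 := by simpa using D.hχ0
    exact (hasCompact_off (pd_iter_zero_off i j hz)).exists_bound_of_continuous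
      (pd_iter_smooth i D.hχ j).continuous
  choose X hX using h1
  have hX0 : ∀ i j, 0 ≤ X i j := fun i j => (norm_nonneg _).trans (hX i j 0)
  refine ⟨1 + ∑ i : Fin n, ∑ j ∈ Finset.range (k+1), X i j, ?_, ?_⟩
  · have := Finset.sum_nonneg (s := Finset.univ) (f := fun i : Fin n => ∑ j ∈ Finset.range (k+1), X i j)
      (fun i _ => Finset.sum_nonneg fun j _ => hX0 i j)
    linarith
  · intro i j hj s hs ζ ξ
    have e : (pd i)^[j] (cw χ s ζ) ξ = ((s⁻¹ : ℝ) : ℂ) ^ j * (pd i)^[j] χ (s⁻¹ • (ξ - ζ)) :=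
      pd_iter_affine i j D.hχ s⁻¹ ζ ξ
    have h2 := Finset.single_le_sum (s := Finset.range (k+1))
      (f := fun j => X i j) (fun j _ => hX0 i j) (Finset.mem_range.2 (Nat.lt_succ_of_le hj))
    have h3 := Finset.single_le_sum (s := Finset.univ)
      (f := fun i : Fin n => ∑ j ∈ Finset.range (k+1), X i j)
      (fun i _ => Finset.sum_nonneg fun j _ => hX0 i j) (Finset.mem_univ i)
    rw [e, norm_mul, norm_pow, Complex.norm_real, Real.norm_of_nonneg (by positivity), ← mul_assoc,
      ← mul_pow, mul_inv_cancel₀ hs.ne', one_pow, one_mul]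
    have := hX i j (s⁻¹ • (ξ - ζ))
    linarith

lemma symb_smooth1 (D : Dat m ρ δ ε σ χ) (x : (Fin n → ℝ)) : ContDiff ℝ (⊤ : ℕ∞) (σ x) :=
  D.hσ.1.comp (contDiff_const.prodMk contDiff_id)

lemma symb_smooth2 (D : Dat m ρ δ ε σ χ) (ξ : (Fin n → ℝ)) : ContDiff ℝ (⊤ : ℕ∞) (fun x => σ x ξ) :=
  D.hσ.1.comp (contDiff_id.prodMk contDiff_const)

lemma symb_near (D : Dat m ρ δ ε σ χ) (k : ℕ) :
    ∃ A > 0, (∀ i, ∀ j ≤ k, ∀ x ξ ζ : (Fin n → ℝ), ‖ξ - ζ‖ ≤ sc ρ δ ε ζ →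
      sc ρ δ ε ζ ^ j * ‖(pd i)^[j] (σ x) ξ‖ ≤ A * jb ζ ^ (m - (ρ - δ) / 2 * j)) ∧
      (∀ i, ∀ j ≤ k, ∀ x ξ ζ : (Fin n → ℝ), ‖ξ - ζ‖ ≤ sc ρ δ ε ζ →
       ‖(pd i)^[j] (fun x => σ x ξ) x‖ ≤ A * jb ζ ^ (m + δ * j)) := by
  obtain ⟨A, hA, hb⟩ := symb_bounds D.hσ k
  have hρ0 : 0 ≤ ρ := D.hδ0.trans D.hδρ.le
  refine ⟨A * 2 ^ (|m| + k), by positivity, ?_, ?_⟩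
  · intro i j hj x ξ ζ h
    have hs := D.sc_pos ζ
    have hR := jb_pos ζ
    have h1 := (hb i j hj x ξ).1
    have h2 := D.cmpr (h.trans (by linarith)) (m - ρ * j) (ξ := ξ)
    have h3 : (2:ℝ) ^ |m - ρ * j| ≤ 2 ^ (|m| + k) := by
      apply Real.rpow_le_rpow_of_exponent_le (by norm_num)
      refine (abs_sub _ _).trans ?_
      rw [abs_of_nonneg (by positivity : (0:ℝ) ≤ ρ * j)]
      have : (j:ℝ) ≤ k := by exact_mod_cast hj
      have : ρ * j ≤ 1 * j := by gcongr; exact D.hρ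
      linarith
    have h4 : sc ρ δ ε ζ ^ j ≤ jb ζ ^ ((ρ + δ) / 2 * j) := by
      rw [Real.rpow_mul hR.le, Real.rpow_natCast]
      exact pow_le_pow_left₀ hs.le (D.sc_le' ζ) j
    calc sc ρ δ ε ζ ^ j * ‖(pd i)^[j] (σ x) ξ‖
        ≤ jb ζ ^ ((ρ + δ) / 2 * j) * (A * (2 ^ (|m| + k) * jb ζ ^ (m - ρ * j))) := by
          gcongr
          refine h1.trans ?_
          gcongr
          exact h2.trans (by gcongr)
      _ = A * 2 ^ (|m| + k) * (jb ζ ^ ((ρ + δ) / 2 * j) * jb ζ ^ (m - ρ * j)) := by ring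
      _ = _ := by rw [← Real.rpow_add hR]; ring_nf
  · intro i j hj x ξ ζ h
    have hs := D.sc_pos ζ
    have hR := jb_pos ζ
    have h1 := (hb i j hj x ξ).2
    have h2 := D.cmpr (h.trans (by linarith)) (m + δ * j) (ξ := ξ)
    have h3 : (2:ℝ) ^ |m + δ * j| ≤ 2 ^ (|m| + k) := by
      apply Real.rpow_le_rpow_of_exponent_le (by norm_num)
      refine (abs_add_le _ _).trans ?_
      have hδ0 := D.hδ0
      rw [abs_of_nonneg (by positivity : (0:ℝ) ≤ δ * j)]
      have : (j:ℝ) ≤ k := by exact_mod_cast hj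
      have : δ * j ≤ 1 * j := by gcongr; linarith [D.hρ, D.hδρ]
      linarith
    calc _ ≤ A * jb ξ ^ (m + δ * j) := h1
      _ ≤ A * (2 ^ (|m| + k) * jb ζ ^ (m + δ * j)) := by
        gcongr
        exact h2.trans (by gcongr)
      _ = _ := by ring

/-- localized symbol -/
def bs (ρ δ ε : ℝ) (σ : (Fin n → ℝ) → (Fin n → ℝ) → ℂ) (χ : (Fin n → ℝ) → ℂ) (ζ x ξ : (Fin n → ℝ)) : ℂ :=
  σ x ξ * cw χ (sc ρ δ ε ζ) ζ ξ

lemma bs_zero (D : Dat m ρ δ ε σ χ) (ζ x ξ : (Fin n → ℝ)) (h : sc ρ δ ε ζ < ‖ξ - ζ‖) :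
    bs ρ δ ε σ χ ζ x ξ = 0 := by
  unfold bs; rw [cw_zero (D.sc_pos ζ) D ζ ξ h, mul_zero]

lemma bs_smooth (D : Dat m ρ δ ε σ χ) (ζ x : (Fin n → ℝ)) : ContDiff ℝ (⊤ : ℕ∞) (bs ρ δ ε σ χ ζ x) := by
  unfold bs
  exact (symb_smooth1 D x).mul (cw_smooth D _ ζ)

lemma bs_cont (D : Dat m ρ δ ε σ χ) (ζ : (Fin n → ℝ)) :
    Continuous fun p : (Fin n → ℝ) × (Fin n → ℝ) => bs ρ δ ε σ χ ζ p.1 p.2 := by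
  unfold bs
  exact D.hσ.1.continuous.mul ((cw_smooth D _ ζ).continuous.comp continuous_snd)

lemma bs_int (D : Dat m ρ δ ε σ χ) (ζ x : (Fin n → ℝ)) : Integrable (bs ρ δ ε σ χ ζ x) :=
  (bs_smooth D ζ x).continuous.integrable_of_hasCompactSupport (hasCompact_off (bs_zero D ζ x))

lemma cw_int (D : Dat m ρ δ ε σ χ) (ζ : (Fin n → ℝ)) : Integrable (cw χ (sc ρ δ ε ζ) ζ) :=
  (cw_smooth D _ ζ).continuous.integrable_of_hasCompactSupport
    (hasCompact_off (cw_zero (D.sc_pos ζ) D ζ))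

/-- kernel -/
def Kb (ρ δ ε : ℝ) (σ : (Fin n → ℝ) → (Fin n → ℝ) → ℂ) (χ : (Fin n → ℝ) → ℂ) (ζ x z : (Fin n → ℝ)) : ℂ :=
  IFT (bs ρ δ ε σ χ ζ x) z

lemma Kb_cont (D : Dat m ρ δ ε σ χ) (ζ : (Fin n → ℝ)) :
    Continuous fun p : (Fin n → ℝ) × (Fin n → ℝ) => Kb ρ δ ε σ χ ζ p.1 p.2 := by
  have e : ∀ p : (Fin n → ℝ) × (Fin n → ℝ), Kb ρ δ ε σ χ ζ p.1 p.2 =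
      ∫ ξ in Metric.closedBall ζ (sc ρ δ ε ζ), expi (dotp p.2 ξ) * bs ρ δ ε σ χ ζ p.1 ξ := by
    intro p
    unfold Kb IFT
    rw [setIntegral_eq_integral_of_forall_compl_eq_zero]
    intro ξ hξ
    rw [bs_zero D ζ _ ξ (by simpa [Metric.mem_closedBall, dist_eq_norm] using hξ), mul_zero]
  simp_rw [e]
  refine continuous_parametric_integral_of_continuous
    (f := fun p : (Fin n → ℝ) × (Fin n → ℝ) => fun ξ => expi (dotp p.2 ξ) * bs ρ δ ε σ χ ζ p.1 ξ) ?_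
    (isCompact_closedBall _ _)
  refine Continuous.mul (Continuous.edot (by fun_prop) (by fun_prop)) ?_
  exact (bs_cont D ζ).comp (f := fun q : ((Fin n → ℝ) × (Fin n → ℝ)) × (Fin n → ℝ) => (q.1.1, q.2)) (by fun_prop)

lemma inv_form {k : ℕ} {t u a : ℝ} (ht : 0 ≤ t) (h : (1 + t) ^ k * u ≤ a) : u ≤ a * ((1 + t) ^ k)⁻¹ := by
  rw [← div_eq_mul_inv, le_div_iff₀ (by positivity), mul_comm]; exact h

lemma pd_iter_sub_const (i : Fin n) {j : ℕ} (hj : 1 ≤ j) (F : (Fin n → ℝ) → ℂ) (c : ℂ) :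
    (pd i)^[j] (fun ξ => F ξ - c) = (pd i)^[j] F := by
  obtain ⟨j, rfl⟩ : ∃ j', j = j' + 1 := ⟨j - 1, by omega⟩
  rw [Function.iterate_succ_apply, Function.iterate_succ_apply]
  congr 1
  ext ξ
  unfold pd
  rw [fderiv_sub_const]

end
end


noncomputable section
section
variable {n : ℕ} {m ρ δ ε : ℝ} {σ : (Fin n → ℝ) → (Fin n → ℝ) → ℂ} {χ : (Fin n → ℝ) → ℂ}

lemma win_ker (D : Dat m ρ δ ε σ χ) (k : ℕ) :
    ∃ X > 0, ∀ (ζ : (Fin n → ℝ)) (F : (Fin n → ℝ) → ℂ) (B : ℝ), ContDiff ℝ (⊤ : ℕ∞) F →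
      (∀ i, ∀ j ≤ k, ∀ ξ, ‖ξ - ζ‖ ≤ sc ρ δ ε ζ → sc ρ δ ε ζ ^ j * ‖(pd i)^[j] F ξ‖ ≤ B) →
      ∀ z, ‖IFT (fun ξ => F ξ * cw χ (sc ρ δ ε ζ) ζ ξ) z‖ ≤
        X * B * sc ρ δ ε ζ ^ n * ((1 + sc ρ δ ε ζ * ‖z‖) ^ k)⁻¹ := by
  obtain ⟨X, hX, hb⟩ := win_bounds D k
  refine ⟨2 ^ k * 2 ^ n * 2 ^ k * X, by positivity, fun ζ F B hF hB z => ?_⟩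
  have hs := D.sc_pos ζ
  have hB0 : 0 ≤ B := le_trans (by positivity) (hB ⟨0, D.hn⟩ 0 (Nat.zero_le _) ζ (by simpa using hs.le))
  refine inv_form (by positivity) ?_
  refine (kernel_decay D.hn (hF.mul (cw_smooth D _ ζ)) hs (A := 2 ^ k * B * X)
    (fun ξ h => by rw [cw_zero hs D ζ ξ h, mul_zero]) k ?_ z).trans (le_of_eq (by ring))
  intro i j hj ξ hξ
  refine (pd_leibniz i j _ B X hs.le ξ hF (cw_smooth D _ ζ) (fun l hl => hB i l (hl.trans hj) ξ hξ)
    (fun l hl => hb i l (hl.trans hj) _ hs ζ ξ)).trans ?_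
  gcongr
  norm_num

lemma jb_mono (ζ : (Fin n → ℝ)) {p q : ℝ} (h : p ≤ q) : jb ζ ^ p ≤ jb ζ ^ q :=
  Real.rpow_le_rpow_of_exponent_le (jb_ge_one ζ) h

lemma Kb_bound (D : Dat m ρ δ ε σ χ) (k : ℕ) :
    ∃ C > 0, ∀ ζ x z : (Fin n → ℝ), ‖Kb ρ δ ε σ χ ζ x z‖ ≤
      C * jb ζ ^ m * sc ρ δ ε ζ ^ n * ((1 + sc ρ δ ε ζ * ‖z‖) ^ k)⁻¹ := by
  obtain ⟨X, hX, hw⟩ := win_ker D k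
  obtain ⟨A, hA, h1, h2⟩ := symb_near D k
  refine ⟨X * A, by positivity, fun ζ x z => ?_⟩
  refine (hw ζ (σ x) (A * jb ζ ^ m) (symb_smooth1 D x) ?_ z).trans (le_of_eq (by ring))
  intro i j hj ξ hξ
  refine (h1 i j hj x ξ ζ hξ).trans ?_
  refine mul_le_mul_of_nonneg_left (jb_mono ζ ?_) hA.le
  have : 0 ≤ (ρ - δ) / 2 * j := mul_nonneg (by linarith [D.hδρ]) (Nat.cast_nonneg j)
  linarith

lemma kw_bound (D : Dat m ρ δ ε σ χ) (k : ℕ) :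
    ∃ C > 0, ∀ ζ z : (Fin n → ℝ), ‖IFT (cw χ (sc ρ δ ε ζ) ζ) z‖ ≤
      C * sc ρ δ ε ζ ^ n * ((1 + sc ρ δ ε ζ * ‖z‖) ^ k)⁻¹ := by
  obtain ⟨X, hX, hw⟩ := win_ker D k
  refine ⟨X, hX, fun ζ z => ?_⟩
  have := hw ζ (fun _ => 1) 1 contDiff_const ?_ z
  · simpa using this
  intro i j hj ξ hξ
  rcases Nat.eq_zero_or_pos j with h | h
  · subst h; simp
  · have e := pd_iter_sub_const i h (fun _ => (1:ℂ)) 1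
    have e2 : ∀ j, (pd i)^[j] (fun _ : (Fin n → ℝ) => (0:ℂ)) = fun _ => 0 := by
      intro j
      induction j with
      | zero => rfl
      | succ j ih => rw [Function.iterate_succ_apply', ih]; ext t; simp [pd]
    rw [← e]; simp [e2]

lemma near_kernel (D : Dat m ρ δ ε σ χ) :
    ∃ C > 0, ∀ ζ x z : (Fin n → ℝ), ‖Kb ρ δ ε σ χ ζ x z - σ (x - z) ζ * IFT (cw χ (sc ρ δ ε ζ) ζ) z‖ ≤
      C * jb ζ ^ (m - (ρ - δ) / 2) * Wn n (sc ρ δ ε ζ) z := by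
  obtain ⟨X, hX, hw⟩ := win_ker D (n+1)
  obtain ⟨X2, hX2, hw2⟩ := kw_bound D (n+2)
  obtain ⟨A, hA, h1, h2⟩ := symb_near D (n+1)
  have hε := D.hε
  refine ⟨X * ((n + 1) * A) + n * A * ε⁻¹ * X2, by positivity, fun ζ x z => ?_⟩
  have hs := D.sc_pos ζ
  have hR := jb_pos ζ
  have hγ : 0 < (ρ - δ) / 2 := by linarith [D.hδρ]
  set s := sc ρ δ ε ζ with hsdef
  have hn1 : (1:ℝ) ≤ n := by exact_mod_cast D.hn
  -- first piece
  have i1 : ‖IFT (fun ξ => (σ x ξ - σ x ζ) * cw χ s ζ ξ) z‖ ≤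
      X * ((n + 1) * A * jb ζ ^ (m - (ρ - δ) / 2)) * s ^ n * ((1 + s * ‖z‖) ^ (n+1))⁻¹ := by
    refine hw ζ (fun ξ => σ x ξ - σ x ζ) _ ((symb_smooth1 D x).sub contDiff_const) ?_ z
    intro i j hj ξ hξ
    rcases Nat.eq_zero_or_pos j with h | h
    · subst h
      simp only [pow_zero, one_mul, Function.iterate_zero, id]
      have hm := pd_mean (symb_smooth1 D x) (convex_closedBall ζ s)
        (A := A * jb ζ ^ (m - (ρ - δ) / 2) / s) (x := ζ) (y := ξ) ?_ (by simpa using hs.le)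
        (by simpa [dist_eq_norm] using hξ)
      · calc _ ≤ _ := hm
          _ ≤ n * (A * jb ζ ^ (m - (ρ - δ) / 2) / s) * s := by gcongr
          _ = n * (A * jb ζ ^ (m - (ρ - δ) / 2)) := by field_simp
          _ ≤ (n + 1) * (A * jb ζ ^ (m - (ρ - δ) / 2)) := by gcongr; linarith
          _ = _ := by ring
      · intro i t ht
        have := h1 i 1 (by omega) x t ζ (by simpa [dist_eq_norm] using ht)
        rw [le_div_iff₀ hs, mul_comm]
        simpa using this
    · rw [pd_iter_sub_const i h (σ x) (σ x ζ)]
      refine (h1 i j hj x ξ ζ hξ).trans ?_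
      have : jb ζ ^ (m - (ρ - δ) / 2 * j) ≤ jb ζ ^ (m - (ρ - δ) / 2) := by
        apply jb_mono
        have : (1:ℝ) ≤ j := by exact_mod_cast h
        nlinarith
      calc A * jb ζ ^ (m - (ρ - δ) / 2 * j) ≤ A * jb ζ ^ (m - (ρ - δ) / 2) := by gcongr
        _ = 1 * (A * jb ζ ^ (m - (ρ - δ) / 2)) := by ring
        _ ≤ (n + 1) * (A * jb ζ ^ (m - (ρ - δ) / 2)) := by gcongr; linarith
        _ = _ := by ring
  have e1 : Kb ρ δ ε σ χ ζ x z = IFT (fun ξ => (σ x ξ - σ x ζ) * cw χ s ζ ξ) z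
      + σ x ζ * IFT (cw χ s ζ) z := by
    have hc : ∀ b : (Fin n → ℝ) → ℂ, Integrable b → Integrable fun ξ => expi (dotp z ξ) * b ξ := by
      intro b hb
      refine hb.norm.mono' ((Continuous.edot continuous_const continuous_id).aestronglyMeasurable.mul
        hb.aestronglyMeasurable) (Filter.Eventually.of_forall fun ξ => ?_)
      rw [norm_mul, norm_expi, one_mul]
    have hi1 := bs_int D ζ x
    have hi2 := (cw_int D ζ).const_mul (σ x ζ)
    have hi3 : Integrable fun ξ => (σ x ξ - σ x ζ) * cw χ s ζ ξ := by
      have := hi1.sub hi2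
      refine this.congr (Filter.Eventually.of_forall fun ξ => ?_)
      simp [bs, ← hsdef]; ring
    unfold Kb IFT
    rw [← integral_const_mul, ← integral_add (hc _ hi3) ((hc _ (cw_int D ζ)).const_mul _)]
    congr 1; ext ξ; simp only [bs, ← hsdef]; ring
  have i2 : ‖σ x ζ - σ (x - z) ζ‖ ≤ n * (A * jb ζ ^ (m + δ)) * ‖z‖ := by
    have hm := pd_mean (symb_smooth2 D ζ) convex_univ (A := A * jb ζ ^ (m + δ)) (x := x - z) (y := x)
      (fun i t _ => by simpa using h2 i 1 (by omega) t ζ ζ (by simpa using hs.le)) trivial trivial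
    simpa using hm
  have i3 := hw2 ζ z
  rw [← hsdef] at i3
  have e2 : jb ζ ^ (m + δ) = ε⁻¹ * s * jb ζ ^ (m - (ρ - δ) / 2) := by
    rw [hsdef, sc, ← mul_assoc, inv_mul_cancel₀ hε.ne', one_mul, ← Real.rpow_add hR]
    congr 1; ring
  have i4 : s * ‖z‖ * ((1 + s * ‖z‖) ^ (n+2))⁻¹ ≤ ((1 + s * ‖z‖) ^ (n+1))⁻¹ := by
    have hp : 0 < 1 + s * ‖z‖ := by positivity
    rw [pow_succ (1 + s * ‖z‖) (n+1), mul_inv, mul_comm (((1 + s * ‖z‖) ^ (n+1))⁻¹), ← mul_assoc]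
    refine mul_le_of_le_one_left (by positivity) ?_
    rw [← div_eq_mul_inv, div_le_one hp]; linarith
  rw [e1]
  calc _ = ‖IFT (fun ξ => (σ x ξ - σ x ζ) * cw χ s ζ ξ) z + (σ x ζ - σ (x - z) ζ) * IFT (cw χ s ζ) z‖ := by
        congr 1; ring
    _ ≤ X * ((n + 1) * A * jb ζ ^ (m - (ρ - δ) / 2)) * s ^ n * ((1 + s * ‖z‖) ^ (n+1))⁻¹ +
        n * (A * jb ζ ^ (m + δ)) * ‖z‖ * (X2 * s ^ n * ((1 + s * ‖z‖) ^ (n+2))⁻¹) := by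
      refine (norm_add_le _ _).trans (add_le_add i1 ?_)
      rw [norm_mul]; gcongr
    _ = X * ((n + 1) * A * jb ζ ^ (m - (ρ - δ) / 2)) * s ^ n * ((1 + s * ‖z‖) ^ (n+1))⁻¹ +
        n * A * ε⁻¹ * X2 * jb ζ ^ (m - (ρ - δ) / 2) * s ^ n * (s * ‖z‖ * ((1 + s * ‖z‖) ^ (n+2))⁻¹) := by
      rw [e2]; ring
    _ ≤ X * ((n + 1) * A * jb ζ ^ (m - (ρ - δ) / 2)) * s ^ n * ((1 + s * ‖z‖) ^ (n+1))⁻¹ +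
        n * A * ε⁻¹ * X2 * jb ζ ^ (m - (ρ - δ) / 2) * s ^ n * ((1 + s * ‖z‖) ^ (n+1))⁻¹ := by
      gcongr
    _ = _ := by unfold Wn; ring

lemma far_rep (D : Dat m ρ δ ε σ χ) {κ : ℝ → ℂ} (hκ : IsKap κ) (ζ : (Fin n → ℝ)) (i : Fin n) (r : ℝ) (x z : (Fin n → ℝ)) :
    Kb ρ δ ε σ χ ζ x z - Pk κ i r (Kb ρ δ ε σ χ ζ) x z =
      IFT (fun ξ => (σ x ξ - ∫ y : ℝ, κ y * σ (x - (y / r) • Pi.single i 1) ξ) * cw χ (sc ρ δ ε ζ) ζ ξ) z := by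
  obtain ⟨A, hA, h1, h2⟩ := symb_near D 0
  have hs := D.sc_pos ζ
  have hc := hκ.cont
  have hcw := (cw_smooth D (sc ρ δ ε ζ) ζ).continuous
  have hbb : ∀ x ξ, ‖bs ρ δ ε σ χ ζ x ξ‖ ≤ A * jb ζ ^ m * ‖cw χ (sc ρ δ ε ζ) ζ ξ‖ := by
    intro x ξ
    rcases le_or_gt ‖ξ - ζ‖ (sc ρ δ ε ζ) with h | h
    · unfold bs; rw [norm_mul]; gcongr
      simpa using h2 ⟨0, D.hn⟩ 0 le_rfl x ξ ζ h
    · rw [bs_zero D ζ x ξ h, cw_zero hs D ζ ξ h]; simp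
  have hint : Integrable (Function.uncurry fun (y : ℝ) (ξ : (Fin n → ℝ)) =>
      κ y * (expi (dotp z ξ) * bs ρ δ ε σ χ ζ (x - (y / r) • Pi.single i 1) ξ)) (volume.prod volume) := by
    refine (hκ.integrable.norm.mul_prod ((cw_int D ζ).norm.const_mul (A * jb ζ ^ m))).mono' ?_ ?_
    · refine Continuous.aestronglyMeasurable ?_
      refine (hc.comp continuous_fst).mul ((Continuous.edot continuous_const continuous_snd).mul ?_)
      exact (bs_cont D ζ).comp (f := fun p : ℝ × (Fin n → ℝ) => (x - (p.1 / r) • Pi.single i 1, p.2)) (by fun_prop)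
    · refine Filter.Eventually.of_forall fun p => ?_
      simp only [Function.uncurry, norm_mul, norm_expi, one_mul]
      gcongr
      exact hbb _ _
  have e : Pk κ i r (Kb ρ δ ε σ χ ζ) x z =
      ∫ ξ, expi (dotp z ξ) * ((∫ y : ℝ, κ y * σ (x - (y / r) • Pi.single i 1) ξ) * cw χ (sc ρ δ ε ζ) ζ ξ) := by
    unfold Pk Kb IFT
    simp_rw [← integral_const_mul]
    rw [integral_integral_swap hint]
    congr 1; ext ξ
    rw [← integral_mul_const, ← integral_const_mul]
    congr 1; ext y
    unfold bs; ring
  have i2 : Integrable fun ξ => expi (dotp z ξ) * ((∫ y : ℝ, κ y * σ (x - (y / r) • Pi.single i 1) ξ) * cw χ (sc ρ δ ε ζ) ζ ξ) := by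
    refine hint.integral_prod_right.congr (Filter.Eventually.of_forall fun ξ => ?_)
    simp only [Function.uncurry]
    rw [← integral_mul_const, ← integral_const_mul]
    congr 1; ext y
    unfold bs; ring
  have i1 : Integrable fun ξ => expi (dotp z ξ) * bs ρ δ ε σ χ ζ x ξ := by
    refine (bs_int D ζ x).norm.mono' ((Continuous.edot continuous_const continuous_id).aestronglyMeasurable.mul
      (bs_int D ζ x).aestronglyMeasurable) (Filter.Eventually.of_forall fun ξ => ?_)
    rw [norm_mul, norm_expi, one_mul]
  rw [e]
  unfold Kb IFT
  rw [← integral_sub i1 i2]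
  congr 1; ext ξ; unfold bs; ring

lemma far_kernel (D : Dat m ρ δ ε σ χ) {κ : ℝ → ℂ} (hκ : IsKap κ) {L : ℕ} (hL : 1 ≤ L) :
    ∃ C > 0, ∀ (ζ : (Fin n → ℝ)) (i : Fin n) (r : ℝ), 0 < r → ∀ x z : (Fin n → ℝ),
      ‖Kb ρ δ ε σ χ ζ x z - Pk κ i r (Kb ρ δ ε σ χ ζ) x z‖ ≤
      C * jb ζ ^ m * (jb ζ ^ δ / r) ^ L * Wn n (sc ρ δ ε ζ) z := by
  obtain ⟨X, hX, hwb⟩ := win_bounds D 0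
  obtain ⟨C1, hC1, hK⟩ := Kb_bound D (2 * (n+1))
  obtain ⟨A, hA, h1, h2⟩ := symb_near D (2 * L)
  have hκ0 : 0 ≤ ∫ y, ‖κ y‖ := integral_nonneg fun y => norm_nonneg _
  set Mκ := ∫ y : ℝ, |y| ^ (2 * L) * ‖κ y‖ with hM
  have hM0 : 0 ≤ Mκ := integral_nonneg fun y => by positivity
  set c0 := 2 ^ n * (Mκ * A * X) * ((1 + ∫ y, ‖κ y‖) * C1) with hc0
  have hc00 : 0 ≤ c0 := by positivity
  refine ⟨c0 + 1, by positivity, fun ζ i r hr x z => ?_⟩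
  have hs := D.sc_pos ζ
  have hR := jb_pos ζ
  set s := sc ρ δ ε ζ with hsdef
  have b1 : ‖Kb ρ δ ε σ χ ζ x z - Pk κ i r (Kb ρ δ ε σ χ ζ) x z‖ ≤
      (2 * s) ^ n * (Mκ * (A * jb ζ ^ (m + δ * (2 * L : ℕ)) / r ^ (2 * L)) * X) := by
    rw [far_rep D hκ]
    refine norm_IFT_le hs.le (ζ := ζ) (fun ξ h => by rw [cw_zero hs D ζ ξ h, mul_zero]) ?_ z
    intro ξ
    rcases le_or_gt ‖ξ - ζ‖ s with h | h
    · rw [norm_mul]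
      refine mul_le_mul ?_ (by simpa using hwb i 0 le_rfl s hs ζ ξ) (norm_nonneg _) (by positivity)
      exact kap_diff hκ i (by omega) (symb_smooth2 D ξ) (fun x => h2 i _ le_rfl x ξ ζ h)
        (fun x => h2 i 0 (by omega) x ξ ζ h) hr x
    · rw [cw_zero hs D ζ ξ h, mul_zero, norm_zero]; positivity
  have b2 : ‖Kb ρ δ ε σ χ ζ x z - Pk κ i r (Kb ρ δ ε σ χ ζ) x z‖ ≤
      (1 + ∫ y, ‖κ y‖) * (C1 * jb ζ ^ m * s ^ n * ((1 + s * ‖z‖) ^ (2 * (n+1)))⁻¹) := by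
    refine (norm_sub_le _ _).trans ?_
    rw [add_mul, one_mul]
    exact add_le_add (hK ζ x z) (Pk_le hκ i r (fun x => hK ζ x z) x)
  set t := jb ζ ^ m * (jb ζ ^ δ / r) ^ L * Wn n s z with ht
  have ht0 : 0 ≤ t := by have := Wn_nonneg n hs z; positivity
  have key : ‖Kb ρ δ ε σ χ ζ x z - Pk κ i r (Kb ρ δ ε σ χ ζ) x z‖ ^ 2 ≤ c0 * t ^ 2 := by
    rw [sq]
    refine (mul_le_mul b1 b2 (norm_nonneg _) (by positivity)).trans (le_of_eq ?_)
    have e1 : jb ζ ^ (m + δ * (2 * L : ℕ)) = jb ζ ^ m * (jb ζ ^ δ) ^ (2 * L) := by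
      rw [Real.rpow_add hR, Real.rpow_mul hR.le, Real.rpow_natCast]
    rw [e1, hc0, ht]
    unfold Wn
    have hp : (1 + s * ‖z‖) ≠ 0 := by positivity
    rw [mul_pow, div_pow, mul_comm 2 L, mul_comm 2 (n+1), pow_mul, pow_mul, pow_mul]
    field_simp
  have : ‖Kb ρ δ ε σ χ ζ x z - Pk κ i r (Kb ρ δ ε σ χ ζ) x z‖ ≤ (c0 + 1) * t := by
    refine le_of_sq_le_sq ?_ (by positivity)
    refine key.trans ?_
    have h5 : c0 * t ^ 2 ≤ (c0 + 1) ^ 2 * t ^ 2 := mul_le_mul_of_nonneg_right (by nlinarith) (sq_nonneg t)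
    rw [mul_pow (c0 + 1) t 2]; exact h5
  refine this.trans (le_of_eq ?_)
  rw [ht]; ring

end
end


noncomputable section
section
variable {n : ℕ} {m ρ δ ε : ℝ} {σ : (Fin n → ℝ) → (Fin n → ℝ) → ℂ} {χ : (Fin n → ℝ) → ℂ}

def nu (ρ δ ε : ℝ) (ζ : (Fin n → ℝ)) : ℝ := (sc ρ δ ε ζ ^ n)⁻¹

def NN (ρ δ ε : ℝ) (χ : (Fin n → ℝ) → ℂ) (ξ : (Fin n → ℝ)) : ℝ :=
  ∫ ζ, nu ρ δ ε ζ * ‖cw χ (sc ρ δ ε ζ) ζ ξ‖ ^ 2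

lemma Dat.nu_pos (D : Dat m ρ δ ε σ χ) (ζ : (Fin n → ℝ)) : 0 < nu ρ δ ε ζ := by
  have := D.sc_pos ζ
  unfold nu; positivity

lemma sc_cont : Continuous (sc (n := n) ρ δ ε) := by
  unfold sc
  exact continuous_const.mul (jb_cont.rpow_const fun ζ => Or.inl (jb_pos ζ).ne')

lemma Dat.nu_cont (D : Dat m ρ δ ε σ χ) : Continuous (nu (n := n) ρ δ ε) := by
  unfold nu
  exact (sc_cont.pow n).inv₀ fun ζ => (pow_pos (D.sc_pos ζ) n).ne'

lemma Dat.cw_cont2 (D : Dat m ρ δ ε σ χ) :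
    Continuous fun p : (Fin n → ℝ) × (Fin n → ℝ) => cw χ (sc ρ δ ε p.1) p.1 p.2 := by
  unfold cw
  have h1 : Continuous fun p : (Fin n → ℝ) × (Fin n → ℝ) => (sc ρ δ ε p.1)⁻¹ :=
    (sc_cont.comp continuous_fst).inv₀ fun p => (D.sc_pos p.1).ne'
  have h2 : Continuous fun p : (Fin n → ℝ) × (Fin n → ℝ) => (sc ρ δ ε p.1)⁻¹ • (p.2 - p.1) := by fun_prop
  exact D.hχ.continuous.comp h2

lemma Dat.sc_cmp (D : Dat m ρ δ ε σ χ) {ζ ξ : (Fin n → ℝ)} (h : jb ζ ≤ 2 * jb ξ) :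
    sc ρ δ ε ζ ≤ 2 * sc ρ δ ε ξ := by
  have hτ : 0 ≤ (ρ + δ) / 2 := by linarith [D.hδ0, D.hδρ]
  have hτ1 : (ρ + δ) / 2 ≤ 1 := by linarith [D.hρ, D.hδρ]
  have h1 : jb ζ ^ ((ρ + δ) / 2) ≤ 2 * jb ξ ^ ((ρ + δ) / 2) := by
    calc jb ζ ^ ((ρ + δ) / 2) ≤ (2 * jb ξ) ^ ((ρ + δ) / 2) :=
          Real.rpow_le_rpow (jb_pos ζ).le h hτ
      _ = 2 ^ ((ρ + δ) / 2) * jb ξ ^ ((ρ + δ) / 2) := Real.mul_rpow (by norm_num) (jb_pos ξ).le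
      _ ≤ 2 ^ (1:ℝ) * jb ξ ^ ((ρ + δ) / 2) := by
        have := Real.rpow_nonneg (jb_pos ξ).le ((ρ + δ) / 2)
        gcongr; norm_num
      _ = _ := by rw [Real.rpow_one]
  unfold sc
  have := D.hε
  nlinarith

lemma int_scale (ξ : (Fin n → ℝ)) {s : ℝ} (hs : 0 < s) (F : (Fin n → ℝ) → ℝ) :
    ∫ ζ, F ζ = s ^ n * ∫ t, F (ξ - s • t) := by
  have h1 := Measure.integral_comp_smul (volume : Measure (Fin n → ℝ)) (fun t => F (ξ - t)) s
  rw [h1, integral_sub_left_eq_self F volume ξ]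
  simp only [Module.finrank_fintype_fun_eq_card, Fintype.card_fin, smul_eq_mul]
  rw [abs_of_pos (by positivity), ← mul_assoc, mul_inv_cancel₀ (by positivity), one_mul]

lemma rpow_near {a τ : ℝ} (ha : 0 < a) (h0 : 0 ≤ τ) (h1 : τ ≤ 1) : |a ^ τ - 1| ≤ |a - 1| := by
  rcases le_total 1 a with h | h
  · have h2 : 1 ≤ a ^ τ := Real.one_le_rpow h h0
    have h3 : a ^ τ ≤ a := by
      simpa using Real.rpow_le_rpow_of_exponent_le h h1
    rw [abs_of_nonneg (by linarith), abs_of_nonneg (by linarith)]; linarith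
  · have h2 : a ^ τ ≤ 1 := Real.rpow_le_one ha.le h h0
    have h3 : a ≤ a ^ τ := by
      simpa using Real.rpow_le_rpow_of_exponent_ge ha h h1
    rw [abs_of_nonpos (by linarith), abs_of_nonpos (by linarith)]; linarith

lemma Dat.ratio (D : Dat m ρ δ ε σ χ) {ζ ξ : (Fin n → ℝ)} (h : ‖ξ - ζ‖ ≤ 2 * sc ρ δ ε ξ) :
    |sc ρ δ ε ξ / sc ρ δ ε ζ - 1| ≤ 4 * n * ε := by
  have h0 : ‖ζ - ξ‖ ≤ 2 * sc ρ δ ε ξ := by rwa [norm_sub_rev]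
  have hR := jb_pos ξ
  have hR' := jb_pos ζ
  have hc := (D.cmp2 h0)
  have hn : (0:ℝ) ≤ n := Nat.cast_nonneg n
  have e : sc ρ δ ε ξ / sc ρ δ ε ζ = (jb ξ / jb ζ) ^ ((ρ + δ) / 2) := by
    unfold sc
    rw [mul_div_mul_left _ _ D.hε.ne', Real.div_rpow hR.le hR'.le]
  rw [e]
  refine (rpow_near (by positivity) (by linarith [D.hδ0, D.hδρ]) (by linarith [D.hρ, D.hδρ])).trans ?_
  have e2 : jb ξ / jb ζ - 1 = (jb ξ - jb ζ) / jb ζ := by field_simp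
  rw [e2, abs_div, abs_of_pos hR', div_le_iff₀ hR']
  have h1 : ‖ξ - ζ‖ ≤ 2 * (ε * jb ξ) := h.trans (by linarith [D.sc_le ξ])
  have hε := D.hε
  calc |jb ξ - jb ζ| ≤ n * ‖ξ - ζ‖ := jb_lip ξ ζ
    _ ≤ n * (2 * (ε * (2 * jb ζ))) := by gcongr; exact h1.trans (by gcongr; exact hc.2)
    _ = _ := by ring

set_option maxHeartbeats 800000 in
lemma N_close (hχ : Continuous χ) (hχ0 : ∀ t, 1 < ‖t‖ → χ t = 0) (h1 : ∫ t, ‖χ t‖ ^ 2 = 1) {κ0 : ℝ}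
    (hκ : 0 < κ0) : ∃ ε0 > 0, ∀ (m ρ δ ε : ℝ) (σ : (Fin n → ℝ) → (Fin n → ℝ) → ℂ), Dat m ρ δ ε σ χ → ε ≤ ε0 →
      ∀ ξ, |NN ρ δ ε χ ξ - 1| ≤ κ0 := by
  set Φ : ℝ × (Fin n → ℝ) → ℝ := fun p => p.1 ^ n * ‖χ (p.1 • p.2)‖ ^ 2 with hΦ
  have hΦc : Continuous Φ := by fun_prop
  have hcpt : IsCompact (Set.Icc (1/2 : ℝ) 2 ×ˢ Metric.closedBall (0 : (Fin n → ℝ)) 2) :=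
    isCompact_Icc.prod (isCompact_closedBall _ _)
  have hu := hcpt.uniformContinuousOn_of_continuous hΦc.continuousOn
  rw [Metric.uniformContinuousOn_iff] at hu
  obtain ⟨η, hη, hu⟩ := hu (κ0 / 4 ^ n) (by positivity)
  refine ⟨η / (4 * n + 1) / 2, by positivity, fun m ρ δ ε σ D hε ξ => ?_⟩
  have hs := D.sc_pos ξ
  set s := sc ρ δ ε ξ with hsdef
  have e1 : NN ρ δ ε χ ξ = ∫ t, Φ (s / sc ρ δ ε (ξ - s • t), t) := by
    unfold NN
    rw [int_scale ξ hs, ← integral_const_mul]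
    congr 1; ext t
    simp only [hΦ, nu, cw]
    have : (sc ρ δ ε (ξ - s • t))⁻¹ • (ξ - (ξ - s • t)) = (s / sc ρ δ ε (ξ - s • t)) • t := by
      rw [sub_sub_cancel, smul_smul]; congr 1; rw [div_eq_inv_mul]
    rw [this, div_pow]; ring
  have e2 : (1:ℝ) = ∫ t, Φ (1, t) := by simp [hΦ, h1]
  have hz : ∀ t, 2 < ‖t‖ → Φ (s / sc ρ δ ε (ξ - s • t), t) - Φ (1, t) = 0 := by
    intro t ht
    have a1 : χ ((1:ℝ) • t) = 0 := hχ0 _ (by simp; linarith)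
    have a2 : χ ((s / sc ρ δ ε (ξ - s • t)) • t) = 0 := by
      apply hχ0
      by_contra hcon
      push Not at hcon
      set ζ := ξ - s • t with hζ
      have hsz := D.sc_pos ζ
      have hn1 : ‖ξ - ζ‖ = s * ‖t‖ := by
        rw [hζ, sub_sub_cancel, norm_smul, Real.norm_of_nonneg hs.le]
      rw [norm_smul, Real.norm_of_nonneg (by positivity), div_mul_eq_mul_div, div_le_one hsz, ← hn1] at hcon
      have := D.sc_cmp (D.cmp2 (hcon.trans (by linarith))).2
      rw [hn1] at hcon
      nlinarith
    simp only [hΦ, a1, a2]; simp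
  have hb : ∀ t, ‖t‖ ≤ 2 → |Φ (s / sc ρ δ ε (ξ - s • t), t) - Φ (1, t)| ≤ κ0 / 4 ^ n := by
    intro t ht
    have hr := D.ratio (ζ := ξ - s • t) (ξ := ξ) (by
      rw [sub_sub_cancel, norm_smul, Real.norm_of_nonneg hs.le]; nlinarith)
    rw [← hsdef] at hr
    have hε' := D.hε'
    have hr2 : |s / sc ρ δ ε (ξ - s • t) - 1| ≤ 1/2 := hr.trans (by linarith)
    have hr3 : |s / sc ρ δ ε (ξ - s • t) - 1| < η := by
      refine hr.trans_lt ?_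
      have hn : (0:ℝ) ≤ n := Nat.cast_nonneg n
      calc 4 * n * ε ≤ (4 * n + 1) * (η / (4 * n + 1) / 2) := by
            have := D.hε; gcongr; linarith
        _ = η / 2 := by field_simp
        _ < η := by linarith
    rw [abs_le] at hr2
    have := hu (s / sc ρ δ ε (ξ - s • t), t) ⟨⟨by simp only; linarith, by simp only; linarith⟩, by simpa using ht⟩
      (1, t) ⟨⟨by norm_num, by norm_num⟩, by simpa using ht⟩
      (by rw [Prod.dist_eq]; simp only [dist_self]; rw [Real.dist_eq]; exact max_lt hr3 hη)
    rw [Real.dist_eq] at this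
    exact this.le
  have hfar : ∀ t ∉ Metric.closedBall (0 : (Fin n → ℝ)) 2, Φ (s / sc ρ δ ε (ξ - s • t), t) - Φ (1, t) = 0 := by
    intro t ht; exact hz t (by simpa using ht)
  have hcs : Continuous fun t => Φ (s / sc ρ δ ε (ξ - s • t), t) - Φ (1, t) := by
    refine (hΦc.comp ((Continuous.div continuous_const ?_ fun t => (D.sc_pos _).ne').prodMk continuous_id)).sub
      (hΦc.comp (by fun_prop))
    exact sc_cont.comp (by fun_prop)
  have i2 : Integrable fun t => Φ (1, t) := by
    refine (hΦc.comp (by fun_prop : Continuous fun t : (Fin n → ℝ) => ((1:ℝ), t))).integrable_of_hasCompactSupport ?_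
    refine HasCompactSupport.intro (isCompact_closedBall (0 : (Fin n → ℝ)) 1) fun t ht => ?_
    simp only [hΦ, Function.comp]; rw [hχ0 _ (by simpa using ht)]; simp
  have i12 : Integrable fun t => Φ (s / sc ρ δ ε (ξ - s • t), t) - Φ (1, t) :=
    hcs.integrable_of_hasCompactSupport (HasCompactSupport.intro (isCompact_closedBall (0 : (Fin n → ℝ)) 2) hfar)
  have e3 : NN ρ δ ε χ ξ - 1 = ∫ t in Metric.closedBall (0 : (Fin n → ℝ)) 2,
      (Φ (s / sc ρ δ ε (ξ - s • t), t) - Φ (1, t)) := by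
    rw [setIntegral_eq_integral_of_forall_compl_eq_zero hfar]
    conv_lhs => rw [e1, e2]
    rw [← integral_sub _ i2]
    exact (i12.add i2).congr (Filter.Eventually.of_forall fun t => by simp)
  rw [e3, ← Real.norm_eq_abs]
  refine (norm_setIntegral_le_of_norm_le_const (measure_closedBall_lt_top) (C := κ0 / 4 ^ n)
    (fun t ht => by rw [Real.norm_eq_abs]; exact hb t (by simpa using ht))).trans ?_
  rw [measureReal_def, Real.volume_pi_closedBall _ (by norm_num)]
  simp only [Fintype.card_fin]
  rw [ENNReal.toReal_ofReal (by positivity)]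
  norm_num

/-- near-zone count -/
lemma N2_bound (D : Dat m ρ δ ε σ χ) (ξ : (Fin n → ℝ)) :
    Integrable (fun ζ : (Fin n → ℝ) => {ζ : (Fin n → ℝ) | ‖ξ - ζ‖ ≤ 2 * sc ρ δ ε ζ}.indicator (nu ρ δ ε) ζ) ∧
    ∫ ζ, {ζ : (Fin n → ℝ) | ‖ξ - ζ‖ ≤ 2 * sc ρ δ ε ζ}.indicator (nu ρ δ ε) ζ ≤ 16 ^ n := by
  have hs := D.sc_pos ξ
  set s := sc ρ δ ε ξ with hsdef
  have hms : MeasurableSet {ζ : (Fin n → ℝ) | ‖ξ - ζ‖ ≤ 2 * sc ρ δ ε ζ} :=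
    (isClosed_le (by fun_prop) (continuous_const.mul sc_cont)).measurableSet
  have hbd : ∀ ζ, {ζ : (Fin n → ℝ) | ‖ξ - ζ‖ ≤ 2 * sc ρ δ ε ζ}.indicator (nu ρ δ ε) ζ ≤
      (Metric.closedBall ξ (4 * s)).indicator (fun _ => 2 ^ n * (s ^ n)⁻¹) ζ := by
    intro ζ
    by_cases h : ‖ξ - ζ‖ ≤ 2 * sc ρ δ ε ζ
    · have hc := D.cmp2 h
      have h1 := D.sc_cmp hc.1
      have h2 := D.sc_cmp hc.2
      have hsz := D.sc_pos ζ
      rw [Set.indicator_of_mem (by exact h), Set.indicator_of_mem]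
      · unfold nu
        rw [← div_eq_mul_inv, ← one_div, div_le_div_iff₀ (by positivity) (by positivity), one_mul, ← mul_pow]
        exact pow_le_pow_left₀ hs.le h1 n
      · rw [mem_closedBall_iff_norm, norm_sub_rev]; linarith
    · rw [Set.indicator_of_notMem (by exact h)]
      exact Set.indicator_nonneg (fun _ _ => by positivity) _
  have hi : Integrable ((Metric.closedBall ξ (4 * s)).indicator (fun _ : (Fin n → ℝ) => 2 ^ n * (s ^ n)⁻¹)) := by
    rw [integrable_indicator_iff measurableSet_closedBall]
    exact integrableOn_const measure_closedBall_lt_top.ne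
  have h0 : ∀ ζ, 0 ≤ {ζ : (Fin n → ℝ) | ‖ξ - ζ‖ ≤ 2 * sc ρ δ ε ζ}.indicator (nu ρ δ ε) ζ := fun ζ =>
    Set.indicator_nonneg (fun ζ _ => (D.nu_pos ζ).le) _
  have hi1 : Integrable (fun ζ : (Fin n → ℝ) => {ζ : (Fin n → ℝ) | ‖ξ - ζ‖ ≤ 2 * sc ρ δ ε ζ}.indicator (nu ρ δ ε) ζ) := by
    refine hi.mono' (D.nu_cont.aestronglyMeasurable.indicator hms) (Filter.Eventually.of_forall fun ζ => ?_)
    rw [Real.norm_of_nonneg (h0 ζ)]; exact hbd ζ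
  refine ⟨hi1, (integral_mono hi1 hi hbd).trans ?_⟩
  rw [integral_indicator measurableSet_closedBall, setIntegral_const, measureReal_def,
    Real.volume_pi_closedBall _ (by positivity)]
  simp only [Fintype.card_fin]
  rw [ENNReal.toReal_ofReal (by positivity), smul_eq_mul]
  refine le_of_eq ?_
  have : (2 * (4 * s)) ^ n = 8 ^ n * s ^ n := by rw [← mul_pow]; ring_nf
  rw [this]
  have e16 : (16:ℝ) ^ n = 8 ^ n * 2 ^ n := by rw [← mul_pow]; norm_num
  rw [e16]; field_simp

lemma NN_meas (D : Dat m ρ δ ε σ χ) : StronglyMeasurable (NN ρ δ ε χ) := by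
  unfold NN
  refine StronglyMeasurable.integral_prod_right (f := fun ξ ζ => nu ρ δ ε ζ * ‖cw χ (sc ρ δ ε ζ) ζ ξ‖ ^ 2) ?_
  refine Continuous.stronglyMeasurable ?_
  refine (D.nu_cont.comp continuous_snd).mul ((D.cw_cont2.comp
    (f := fun p : (Fin n → ℝ) × (Fin n → ℝ) => (p.2, p.1)) (by fun_prop)).norm.pow 2)

end
end


noncomputable section
section
variable {n : ℕ} {m ρ δ ε : ℝ} {σ : (Fin n → ℝ) → (Fin n → ℝ) → ℂ} {χ : (Fin n → ℝ) → ℂ}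

lemma edot_int {b : (Fin n → ℝ) → ℂ} (hb : Integrable b) (z : (Fin n → ℝ)) :
    Integrable fun ξ => expi (dotp z ξ) * b ξ := by
  refine hb.norm.mono' ((Continuous.edot continuous_const continuous_id).aestronglyMeasurable.mul
    hb.aestronglyMeasurable) (Filter.Eventually.of_forall fun ξ => ?_)
  rw [norm_mul, norm_expi, one_mul]

lemma IFT_add {G E : (Fin n → ℝ) → ℂ} (hG : Integrable G) (hE : Integrable E) (x : (Fin n → ℝ)) :
    IFT (fun ξ => G ξ + E ξ) x = IFT G x + IFT E x := by
  unfold IFT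
  rw [← integral_add (edot_int hG x) (edot_int hE x)]
  congr 1; ext ξ; ring

lemma near_core {K : (Fin n → ℝ) → (Fin n → ℝ) → ℂ} (hK : Continuous fun p : (Fin n → ℝ) × (Fin n → ℝ) => K p.1 p.2)
    {H H' : (Fin n → ℝ) → ℝ} (hH : Integrable H) (hKH : ∀ x z, ‖K x z‖ ≤ H z)
    {ar : (Fin n → ℝ) → ℝ} (ha : Continuous ar) {A c0 κ : ℝ} (hA : ∀ x, |ar x| ≤ A) (hc0 : 0 < c0)
    (hac : ∀ x, c0 ≤ ar x) (hκ : 0 ≤ κ) (hAκ : A * κ ≤ c0 / 2)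
    {k : (Fin n → ℝ) → ℂ} (hk : Continuous k) (hki : Integrable k) (hkc : ∀ z, (starRingEnd ℂ) (k (-z)) = k z)
    (hH' : Integrable H') (hKH' : ∀ x z, ‖K x z - (ar (x - z) : ℂ) * k z‖ ≤ H' z)
    {G E h : (Fin n → ℝ) → ℂ} (hG : Integrable G) (hG2 : Integrable fun x => ‖G x‖ ^ 2)
    (hE : Integrable E) (hE2 : Integrable fun x => ‖E x‖ ^ 2)
    (hh : Integrable h) (hh2 : Integrable fun x => ‖h x‖ ^ 2)
    (hEG : ∫ x, ‖E x‖ ^ 2 ≤ κ ^ 2 * ∫ x, ‖G x‖ ^ 2)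
    (hrel : ∀ ξ, FT k ξ * h ξ = G ξ + E ξ) :
    -((∫ z, H' z) ^ 2 / (2 * c0)) * (∫ x, ‖h x‖ ^ 2) ≤ (Bil K (IFT G) (IFT h)).re := by
  have hA0 : 0 ≤ A := (abs_nonneg _).trans (hA 0)
  obtain ⟨pG1, pG2⟩ := IFT_planch hG hG2
  obtain ⟨pE1, pE2⟩ := IFT_planch hE hE2
  obtain ⟨ph1, ph2⟩ := IFT_planch hh hh2
  have cG := IFT_continuous hG
  have cE := IFT_continuous hE
  have ch := IFT_continuous hh
  have hac' : Continuous fun x => (ar x : ℂ) := Complex.continuous_ofReal.comp ha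
  have hK' : Continuous fun p : (Fin n → ℝ) × (Fin n → ℝ) => (ar (p.1 - p.2) : ℂ) * k p.2 :=
    (hac'.comp (by fun_prop : Continuous fun p : (Fin n → ℝ) × (Fin n → ℝ) => p.1 - p.2)).mul (hk.comp continuous_snd)
  have hk7 : ∀ x z, ‖(ar (x - z) : ℂ) * k z‖ ≤ A * ‖k z‖ := fun x z => by
    rw [norm_mul, Complex.norm_real, Real.norm_eq_abs]
    exact mul_le_mul_of_nonneg_right (hA _) (norm_nonneg _)
  have e1 := Bil_sub (K' := fun x z => (ar (x - z) : ℂ) * k z) hK hK' hH hKH (hki.norm.const_mul A) hk7 cG ch pG1 ph1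
  have b1 := Bil_le (hK.sub hK') hH' hKH' cG ch pG1 ph1
  rw [← e1, pG2, ph2] at b1
  have e2 := near_bil hac' (A := A) (fun x => by rw [Complex.norm_real]; exact hA x) hk hki hkc cG pG1 hh hh2
  have e3 : (fun ξ => FT k ξ * h ξ) = fun ξ => G ξ + E ξ := funext hrel
  rw [e3] at e2
  set P2 := ∫ x, ‖G x‖ ^ 2 with hP2
  set Q2 := ∫ x, ‖h x‖ ^ 2 with hQ2
  have hP0 : 0 ≤ P2 := integral_nonneg fun x => by positivity
  have hQ0 : 0 ≤ Q2 := integral_nonneg fun x => by positivity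
  -- splitting
  have iGG : Integrable fun x => ar x * ‖IFT G x‖ ^ 2 := by
    refine (pG1.const_mul A).mono' (ha.mul (cG.norm.pow 2)).aestronglyMeasurable
      (Filter.Eventually.of_forall fun x => ?_)
    rw [norm_mul, Real.norm_eq_abs, Real.norm_of_nonneg (by positivity)]
    exact mul_le_mul_of_nonneg_right (hA x) (by positivity)
  obtain ⟨cs1, cs2⟩ := cs_int cG cE pG1 pE1
  have nGE : ∀ x, ‖(ar x : ℂ) * IFT G x * (starRingEnd ℂ) (IFT E x)‖ ≤ A * (‖IFT G x‖ * ‖IFT E x‖) := by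
    intro x
    rw [norm_mul, norm_mul, RCLike.norm_conj, Complex.norm_real, Real.norm_eq_abs, mul_assoc]
    exact mul_le_mul_of_nonneg_right (hA x) (by positivity)
  have iGE : Integrable fun x => (ar x : ℂ) * IFT G x * (starRingEnd ℂ) (IFT E x) :=
    (cs1.const_mul A).mono' ((hac'.mul cG).mul (Complex.continuous_conj.comp cE)).aestronglyMeasurable
      (Filter.Eventually.of_forall nGE)
  have e4 : ∫ x, (ar x : ℂ) * IFT G x * (starRingEnd ℂ) (IFT (fun ξ => G ξ + E ξ) x) =
      ((∫ x, ar x * ‖IFT G x‖ ^ 2 : ℝ) : ℂ) + ∫ x, (ar x : ℂ) * IFT G x * (starRingEnd ℂ) (IFT E x) := by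
    have iGG' : Integrable fun x => ((ar x * ‖IFT G x‖ ^ 2 : ℝ) : ℂ) := iGG.ofReal
    rw [← integral_complex_ofReal, ← integral_add iGG' iGE]
    congr 1; ext x
    rw [IFT_add hG hE, map_add, mul_add, mul_assoc, Complex.mul_conj, Complex.normSq_eq_norm_sq]
    push_cast; rfl
  have b2 : c0 * P2 ≤ ∫ x, ar x * ‖IFT G x‖ ^ 2 := by
    rw [← pG2, ← integral_const_mul]
    exact integral_mono (pG1.const_mul c0) iGG fun x => mul_le_mul_of_nonneg_right (hac x) (by positivity)
  have b3 : ‖∫ x, (ar x : ℂ) * IFT G x * (starRingEnd ℂ) (IFT E x)‖ ≤ c0 / 2 * P2 := by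
    refine (norm_integral_le_of_norm_le (cs1.const_mul A) (Filter.Eventually.of_forall nGE)).trans ?_
    rw [integral_const_mul]
    rw [pG2, pE2] at cs2
    have : √(∫ x, ‖E x‖ ^ 2) ≤ κ * √P2 := by
      rw [← Real.sqrt_sq hκ, ← Real.sqrt_mul (sq_nonneg κ)]
      exact Real.sqrt_le_sqrt hEG
    calc A * ∫ x, ‖IFT G x‖ * ‖IFT E x‖ ≤ A * (√P2 * (κ * √P2)) := by
          gcongr; exact cs2.trans (by gcongr)
      _ = (A * κ) * (√P2 * √P2) := by ring
      _ = (A * κ) * P2 := by rw [Real.mul_self_sqrt hP0]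
      _ ≤ _ := by gcongr
  rw [e2, e4] at b1
  set T := ∫ x, (ar x : ℂ) * IFT G x * (starRingEnd ℂ) (IFT E x) with hT
  have r1 := (abs_le.1 ((Complex.abs_re_le_norm _).trans b1)).1
  have r2 := (abs_le.1 ((Complex.abs_re_le_norm _).trans b3)).1
  simp only [Complex.sub_re, Complex.add_re, Complex.ofReal_re] at r1
  set B := ∫ z, H' z with hB
  have hp := Real.sq_sqrt hP0
  have hq := Real.sq_sqrt hQ0
  have key : c0 / 2 * P2 - B * (√P2 * √Q2) ≤ (Bil K (IFT G) (IFT h)).re := by linarith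
  refine le_trans ?_ key
  have e5 : c0 / 2 * P2 - B * (√P2 * √Q2) + (B ^ 2 / (2 * c0)) * Q2
      = (c0 * √P2 - B * √Q2) ^ 2 / (2 * c0) := by
    rw [sub_sq, mul_pow, mul_pow, hp, hq]
    field_simp
  have : 0 ≤ (c0 * √P2 - B * √Q2) ^ 2 / (2 * c0) := by positivity
  linarith

/-- environment: window normalisation holds -/
structure Env (m ρ δ ε κ0 : ℝ) (σ : (Fin n → ℝ) → (Fin n → ℝ) → ℂ) (χ : (Fin n → ℝ) → ℂ) : Prop where
  D : Dat m ρ δ ε σ χ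
  hN : ∀ ξ, |NN ρ δ ε χ ξ - 1| ≤ κ0
  hκ : κ0 ≤ 1 / 2

lemma Env.N_ge {κ0 : ℝ} (E : Env m ρ δ ε κ0 σ χ) (ξ : (Fin n → ℝ)) : 1 / 2 ≤ NN ρ δ ε χ ξ := by
  have := abs_le.1 (E.hN ξ); have := E.hκ; linarith

/-- localized function -/
def GG (ρ δ ε : ℝ) (χ g : (Fin n → ℝ) → ℂ) (ζ ξ : (Fin n → ℝ)) : ℂ :=
  cw χ (sc ρ δ ε ζ) ζ ξ * g ξ / (NN ρ δ ε χ ξ : ℂ)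

/-- near zone -/
def nz (ρ δ ε : ℝ) (ζ : (Fin n → ℝ)) : Set (Fin n → ℝ) := {η | ‖η - ζ‖ ≤ 2 * sc ρ δ ε ζ}

lemma nz_meas (ζ : (Fin n → ℝ)) : MeasurableSet (nz ρ δ ε ζ) :=
  (isClosed_le (by fun_prop) continuous_const).measurableSet

lemma GG_props {κ0 : ℝ} (E : Env m ρ δ ε κ0 σ χ) :
    ∃ X > 0, ∀ (g : (Fin n → ℝ) → ℂ), Integrable g → Integrable (fun x => ‖g x‖ ^ 2) → ∀ ζ : (Fin n → ℝ),
      Integrable (GG ρ δ ε χ g ζ) ∧ Integrable (fun ξ => ‖GG ρ δ ε χ g ζ ξ‖ ^ 2) ∧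
      (∀ ξ, sc ρ δ ε ζ < ‖ξ - ζ‖ → GG ρ δ ε χ g ζ ξ = 0) ∧
      (∀ ξ, ‖GG ρ δ ε χ g ζ ξ‖ ≤ X * ‖g ξ‖) := by
  obtain ⟨X, hX, hb⟩ := win_bounds E.D 0
  refine ⟨2 * X, by positivity, fun g hg hg2 ζ => ?_⟩
  have hm : AEStronglyMeasurable (GG ρ δ ε χ g ζ) := by
    unfold GG
    refine AEStronglyMeasurable.div₀ ((cw_smooth E.D _ ζ).continuous.aestronglyMeasurable.mul hg.aestronglyMeasurable) ?_
    exact (Complex.continuous_ofReal.comp_stronglyMeasurable (NN_meas E.D)).aestronglyMeasurable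
  have hbd : ∀ ξ, ‖GG ρ δ ε χ g ζ ξ‖ ≤ 2 * X * ‖g ξ‖ := by
    intro ξ
    have h1 := hb ⟨0, E.D.hn⟩ 0 le_rfl _ (E.D.sc_pos ζ) ζ ξ
    simp only [pow_zero, one_mul, Function.iterate_zero, id] at h1
    have h2 := E.N_ge ξ
    unfold GG
    rw [norm_div, norm_mul, Complex.norm_real, Real.norm_of_nonneg (by linarith), div_le_iff₀ (by linarith)]
    calc _ ≤ X * ‖g ξ‖ := by gcongr
      _ = 2 * X * ‖g ξ‖ * (1/2) := by ring
      _ ≤ _ := by gcongr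
  refine ⟨(hg.norm.const_mul (2*X)).mono' hm (Filter.Eventually.of_forall hbd), ?_, ?_, hbd⟩
  · refine (hg2.const_mul ((2*X)^2)).mono' (hm.norm.pow 2) (Filter.Eventually.of_forall fun ξ => ?_)
    rw [Real.norm_of_nonneg (by positivity), ← mul_pow]
    exact pow_le_pow_left₀ (norm_nonneg _) (hbd ξ) 2
  · intro ξ h
    unfold GG; rw [cw_zero (E.D.sc_pos ζ) E.D ζ ξ h]; simp

lemma ind_props {g : (Fin n → ℝ) → ℂ} (hg : Integrable g) (hg2 : Integrable fun x => ‖g x‖ ^ 2) {S : Set (Fin n → ℝ)}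
    (hS : MeasurableSet S) : Integrable (S.indicator g) ∧ Integrable (fun x => ‖S.indicator g x‖ ^ 2) := by
  refine ⟨hg.indicator hS, ?_⟩
  refine hg2.mono' ((hg.indicator hS).aestronglyMeasurable.norm.pow 2) (Filter.Eventually.of_forall fun x => ?_)
  rw [Real.norm_of_nonneg (by positivity)]
  exact pow_le_pow_left₀ (norm_nonneg _) (norm_indicator_le_norm_self _ _) 2

lemma Kb_Wn (D : Dat m ρ δ ε σ χ) :
    ∃ C > 0, ∀ ζ x z : (Fin n → ℝ), ‖Kb ρ δ ε σ χ ζ x z‖ ≤ C * jb ζ ^ m * Wn n (sc ρ δ ε ζ) z := by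
  obtain ⟨C, hC, h⟩ := Kb_bound D (n+1)
  exact ⟨C, hC, fun ζ x z => (h ζ x z).trans (le_of_eq (by unfold Wn; ring))⟩

lemma near_bound {κ0 c A : ℝ} {σr : (Fin n → ℝ) → (Fin n → ℝ) → ℝ} (E : Env m ρ δ ε κ0 (fun x ξ => (σr x ξ : ℂ)) χ) (hc : 0 < c)
    (hell : ∀ x ξ, c * jb ξ ^ m ≤ σr x ξ) (hA : ∀ x ξ, |σr x ξ| ≤ A * jb ξ ^ m) (hκ0 : 0 ≤ κ0)
    (hAκ : A * κ0 ≤ c / 2) :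
    ∃ C > 0, ∀ (g : (Fin n → ℝ) → ℂ), Integrable g → Integrable (fun x => ‖g x‖ ^ 2) → ∀ ζ : (Fin n → ℝ),
      -(C * jb ζ ^ (m - (ρ - δ))) * (∫ ξ, ‖(nz ρ δ ε ζ).indicator g ξ‖ ^ 2) ≤
      (Bil (Kb ρ δ ε (fun x ξ => (σr x ξ : ℂ)) χ ζ) (IFT (GG ρ δ ε χ g ζ)) (IFT ((nz ρ δ ε ζ).indicator g))).re := by
  have D := E.D
  obtain ⟨C1, hC1, hk1⟩ := Kb_Wn D
  obtain ⟨C2, hC2, hk2⟩ := near_kernel D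
  obtain ⟨C3, hC3, hk3⟩ := kw_bound D (n+1)
  obtain ⟨X, hX, hGp⟩ := GG_props E
  have hW0 : 0 ≤ ∫ z, Wn n 1 z := integral_nonneg (Wn_nonneg n one_pos)
  refine ⟨(C2 * ∫ z, Wn n 1 z) ^ 2 / (2 * c) + 1, by positivity, fun g hg hg2 ζ => ?_⟩
  obtain ⟨g1, g2, g3, g4⟩ := hGp g hg hg2 ζ
  obtain ⟨h1, h2⟩ := ind_props hg hg2 (nz_meas (ρ := ρ) (δ := δ) (ε := ε) ζ)
  have hs := D.sc_pos ζ
  have hR := jb_pos ζ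
  obtain ⟨w1, w2⟩ := Wn_int n hs
  set s := sc ρ δ ε ζ with hsdef
  have ki : Integrable (IFT (cw χ s ζ)) := by
    refine (w1.const_mul C3).mono' (IFT_continuous (cw_int D ζ)).aestronglyMeasurable
      (Filter.Eventually.of_forall fun z => (hk3 ζ z).trans (le_of_eq (by unfold Wn; ring)))
  have hFT : FT (IFT (cw χ s ζ)) = cw χ s ζ :=
    FT_IFT (cw_smooth D _ ζ).continuous (cw_int D ζ) ki
  have hNm := NN_meas D
  have hE0 : ∀ ξ, ‖((NN ρ δ ε χ ξ : ℂ) - 1) * GG ρ δ ε χ g ζ ξ‖ ≤ κ0 * ‖GG ρ δ ε χ g ζ ξ‖ := by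
    intro ξ
    rw [norm_mul]
    refine mul_le_mul_of_nonneg_right ?_ (norm_nonneg _)
    rw [← Complex.ofReal_one, ← Complex.ofReal_sub, Complex.norm_real]
    exact E.hN ξ
  have hEm : AEStronglyMeasurable (fun ξ => ((NN ρ δ ε χ ξ : ℂ) - 1) * GG ρ δ ε χ g ζ ξ) :=
    ((Complex.continuous_ofReal.comp_stronglyMeasurable hNm).aestronglyMeasurable.sub
      aestronglyMeasurable_const).mul g1.aestronglyMeasurable
  have hE1 : Integrable fun ξ => ((NN ρ δ ε χ ξ : ℂ) - 1) * GG ρ δ ε χ g ζ ξ :=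
    (g1.norm.const_mul κ0).mono' hEm (Filter.Eventually.of_forall hE0)
  have hE0' : ∀ ξ, ‖((NN ρ δ ε χ ξ : ℂ) - 1) * GG ρ δ ε χ g ζ ξ‖ ^ 2 ≤ κ0 ^ 2 * ‖GG ρ δ ε χ g ζ ξ‖ ^ 2 := by
    intro ξ
    rw [← mul_pow]; exact pow_le_pow_left₀ (norm_nonneg _) (hE0 ξ) 2
  have hE2 : Integrable fun ξ => ‖((NN ρ δ ε χ ξ : ℂ) - 1) * GG ρ δ ε χ g ζ ξ‖ ^ 2 := by
    refine (g2.const_mul (κ0 ^ 2)).mono' (hEm.norm.pow 2) (Filter.Eventually.of_forall fun ξ => ?_)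
    rw [Real.norm_of_nonneg (by positivity)]; exact hE0' ξ
  have hcR : 0 < c * jb ζ ^ m := by positivity
  have main := near_core (Kb_cont D ζ) (w1.const_mul (C1 * jb ζ ^ m)) (hk1 ζ)
    (H' := fun z => C2 * jb ζ ^ (m - (ρ - δ) / 2) * Wn n s z)
    (ar := fun x => σr x ζ) (by
      have h5 := Complex.continuous_re.comp (symb_smooth2 D ζ).continuous
      exact h5) (A := A * jb ζ ^ m) (c0 := c * jb ζ ^ m)
    (κ := κ0) (fun x => hA x ζ) hcR (fun x => hell x ζ) hκ0 (by
      have := Real.rpow_nonneg hR.le m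
      calc A * jb ζ ^ m * κ0 = (A * κ0) * jb ζ ^ m := by ring
        _ ≤ c / 2 * jb ζ ^ m := by gcongr
        _ = _ := by ring)
    (IFT_continuous (cw_int D ζ)) ki ?_ (w1.const_mul _) (hk2 ζ) g1 g2 hE1 hE2 h1 h2 ?_ ?_
  · refine le_trans ?_ main
    rw [integral_const_mul, w2]
    have hQ : 0 ≤ ∫ ξ, ‖(nz ρ δ ε ζ).indicator g ξ‖ ^ 2 := integral_nonneg fun x => by positivity
    refine mul_le_mul_of_nonneg_right (neg_le_neg ?_) hQ
    have e1 : jb ζ ^ (m - (ρ - δ) / 2) = jb ζ ^ m * jb ζ ^ (-((ρ - δ) / 2)) := by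
      rw [← Real.rpow_add hR]; congr 1
    have e2 : jb ζ ^ (m - (ρ - δ)) = jb ζ ^ m * (jb ζ ^ (-((ρ - δ) / 2)) * jb ζ ^ (-((ρ - δ) / 2))) := by
      rw [← Real.rpow_add hR, ← Real.rpow_add hR]; congr 1; ring
    have hp := Real.rpow_pos_of_pos hR m
    have hp2 := Real.rpow_pos_of_pos hR (-((ρ - δ) / 2))
    rw [e1, e2]
    set u := jb ζ ^ m
    set v := jb ζ ^ (-((ρ - δ) / 2))
    set W := ∫ z, Wn n 1 z
    have : (C2 * (u * v) * W) ^ 2 / (2 * (c * u)) = (C2 * W) ^ 2 / (2 * c) * (u * (v * v)) := by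
      field_simp
    rw [this]
    refine mul_le_mul_of_nonneg_right (by linarith) (by positivity)
  · intro z
    unfold IFT
    rw [← integral_conj]
    congr 1; ext ξ
    rw [map_mul, conj_expi, dotp_neg_left, neg_neg]
    congr 1
    exact D.hχr _
  · rw [← integral_const_mul]
    exact integral_mono hE2 (g2.const_mul _) hE0'
  · intro ξ
    rw [hFT]
    have hN0 : (NN ρ δ ε χ ξ : ℂ) ≠ 0 := by
      have := E.N_ge ξ
      have h6 : NN ρ δ ε χ ξ ≠ 0 := by intro h; linarith
      exact_mod_cast h6
    have e : cw χ s ζ ξ * (nz ρ δ ε ζ).indicator g ξ = cw χ s ζ ξ * g ξ := by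
      by_cases hξ : ξ ∈ nz ρ δ ε ζ
      · rw [Set.indicator_of_mem hξ]
      · have hξ' : ¬ (‖ξ - ζ‖ ≤ 2 * s) := hξ
        rw [cw_zero hs D ζ ξ (by linarith)]; simp
    rw [e]
    unfold GG
    rw [← hsdef]
    field_simp
    ring

end
end


noncomputable section
section
variable {n : ℕ} {m ρ δ ε : ℝ} {σ : (Fin n → ℝ) → (Fin n → ℝ) → ℂ} {χ : (Fin n → ℝ) → ℂ}

lemma dist_grow (D : Dat m ρ δ ε σ χ) {ζ η : (Fin n → ℝ)} (h : 2 * sc ρ δ ε ζ < ‖η - ζ‖) :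
    (jb ζ + jb η) ^ ((ρ + δ) / 2) ≤ (3 / (2 * ε) + n) * ‖η - ζ‖ := by
  have hτ : 0 ≤ (ρ + δ) / 2 := by linarith [D.hδ0, D.hδρ]
  have hτ1 : (ρ + δ) / 2 ≤ 1 := by linarith [D.hρ, D.hδρ]
  have hε := D.hε
  have hR := jb_pos ζ
  have hn : (0:ℝ) ≤ n := Nat.cast_nonneg n
  set τ := (ρ + δ) / 2 with hτd
  set d := ‖η - ζ‖ with hd
  have hd0 : 0 ≤ d := norm_nonneg _
  have h1 : jb η ≤ jb ζ + n * d := by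
    have := (abs_le.1 (jb_lip η ζ)).2; linarith
  have h2 : jb ζ ^ τ ≤ d / (2 * ε) := by
    rw [le_div_iff₀ (by positivity)]
    unfold sc at h; nlinarith
  have h3 : 1 ≤ jb ζ ^ τ := Real.one_le_rpow (jb_ge_one ζ) hτ
  have h4 : (n * d) ^ τ ≤ 1 + n * d := by
    rcases le_total (n * d) 1 with h | h
    · have := Real.rpow_le_one (by positivity) h hτ; nlinarith [mul_nonneg hn hd0]
    · have : (n * d) ^ τ ≤ n * d := by simpa using Real.rpow_le_rpow_of_exponent_le h hτ1
      linarith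
  calc (jb ζ + jb η) ^ τ ≤ (jb ζ + (jb ζ + n * d)) ^ τ := by
        apply Real.rpow_le_rpow (by linarith [jb_pos η]) (by linarith) hτ
    _ ≤ jb ζ ^ τ + (jb ζ + n * d) ^ τ := Real.rpow_add_le_add_rpow hR.le (by positivity) hτ hτ1
    _ ≤ jb ζ ^ τ + (jb ζ ^ τ + (n * d) ^ τ) := by
        gcongr; exact Real.rpow_add_le_add_rpow hR.le (by positivity) hτ hτ1
    _ ≤ d / (2 * ε) + (d / (2 * ε) + (d / (2 * ε) + n * d)) := by linarith
    _ = _ := by ring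

lemma sqrt_le_mul {a b S : ℝ} (hb : 1 ≤ b) (hS : 0 ≤ S) (h : a ≤ b * S) : √a ≤ b * √S := by
  refine (Real.sqrt_le_sqrt h).trans ?_
  rw [Real.sqrt_mul (by linarith)]
  refine mul_le_mul_of_nonneg_right ?_ (Real.sqrt_nonneg _)
  rw [Real.sqrt_le_left (by linarith)]; nlinarith

lemma weight_le {p B : ℝ} {g h : (Fin n → ℝ) → ℂ} (hB : 0 ≤ B) (hS : Integrable fun ξ => jb ξ ^ p * ‖g ξ‖ ^ 2)
    (hh2 : Integrable fun ξ => ‖h ξ‖ ^ 2) (hb : ∀ ξ, ‖h ξ‖ ^ 2 ≤ B * (jb ξ ^ p * ‖g ξ‖ ^ 2)) :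
    ∫ ξ, ‖h ξ‖ ^ 2 ≤ B * ∫ ξ, jb ξ ^ p * ‖g ξ‖ ^ 2 := by
  rw [← integral_const_mul]
  exact integral_mono hh2 (hS.const_mul B) hb

lemma far_num {C2 J Jm P Q N I cL W X S b u v : ℝ} (hC2 : 0 ≤ C2) (hJ : 0 ≤ J) (hJm : 0 ≤ Jm) (hP : 0 < P)
    (hQ : 0 < Q) (hN : 0 ≤ N) (hI : 0 ≤ I) (hcL : 0 ≤ cL) (hW : 0 ≤ W) (hX : 0 ≤ X) (hS : 0 ≤ S)
    (e3 : J * Jm ≤ 1) (hb : b ≤ cL * (Jm * P⁻¹ * N * (Q⁻¹ * I))) (hb0 : 0 ≤ b) (hu : u ≤ X * P * √S)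
    (hv : v ≤ Q * √S) (hv0 : 0 ≤ v) (hu0 : 0 ≤ u) :
    C2 * J * b * W * (u * v) ≤ C2 * cL * (W + 1) * X * N * I * S := by
  have hs := Real.mul_self_sqrt hS
  have hs0 := Real.sqrt_nonneg S
  calc C2 * J * b * W * (u * v) ≤
      C2 * J * (cL * (Jm * P⁻¹ * N * (Q⁻¹ * I))) * (W + 1) * (X * P * √S * (Q * √S)) := by
        gcongr
        linarith
    _ = (J * Jm) * (C2 * cL * (W + 1) * X * N * I * (√S * √S)) := by field_simp
    _ ≤ 1 * (C2 * cL * (W + 1) * X * N * I * (√S * √S)) := by gcongr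
    _ = _ := by rw [hs, one_mul]

set_option maxHeartbeats 1600000 in
lemma far_piece {κ0 : ℝ} (E : Env m ρ δ ε κ0 σ χ) (p : ℝ) :
    ∃ C > 0, ∀ (g : (Fin n → ℝ) → ℂ), Integrable g → Integrable (fun x => ‖g x‖ ^ 2) →
      Integrable (fun ξ => jb ξ ^ p * ‖g ξ‖ ^ 2) → ∀ (ζ : (Fin n → ℝ)) (i : Fin n) (k : ℕ) (S : Set (Fin n → ℝ)),
      MeasurableSet S → (∀ η ∈ S, 2 * sc ρ δ ε ζ < ‖η - ζ‖ ∧ |η i - ζ i| = ‖η - ζ‖ ∧ (k:ℝ) ≤ jb η ∧ jb η ≤ k + 1) →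
      ‖Bil (Kb ρ δ ε σ χ ζ) (IFT (GG ρ δ ε χ g ζ)) (IFT (S.indicator g))‖ ≤
        C * jb ζ ^ (-((n:ℝ) + 1)) * (((k:ℝ) + 1) ^ 2)⁻¹ * ∫ ξ, jb ξ ^ p * ‖g ξ‖ ^ 2 := by
  have D := E.D
  obtain ⟨κ, hκ⟩ := exists_kap
  have hγ : 0 < (ρ - δ) / 2 := by linarith [D.hδρ]
  obtain ⟨L, hL⟩ := exists_nat_ge ((|m| + |p| + n + 1 + (|p| + 2)) / ((ρ - δ) / 2) + 1)
  have hn : (0:ℝ) ≤ n := Nat.cast_nonneg n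
  have hL1 : 1 ≤ L := by
    have : (1:ℝ) ≤ L := le_trans (by
      have : 0 ≤ (|m| + |p| + n + 1 + (|p| + 2)) / ((ρ - δ) / 2) := by positivity
      linarith) hL
    exact_mod_cast this
  have hL2 : |m| + |p| + n + 1 + (|p| + 2) ≤ (ρ - δ) / 2 * L := by
    have : (|m| + |p| + n + 1 + (|p| + 2)) / ((ρ - δ) / 2) ≤ L := by linarith
    rw [div_le_iff₀ hγ] at this; linarith
  obtain ⟨C1, hC1, hk1⟩ := Kb_Wn D
  obtain ⟨C2, hC2, hk2⟩ := far_kernel D hκ hL1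
  obtain ⟨X, hX, hGp⟩ := GG_props E
  have hε := D.hε
  have hW0 : 0 ≤ ∫ z, Wn n 1 z := integral_nonneg (Wn_nonneg n one_pos)
  set c1 : ℝ := 2 * (3 / (2 * ε) + n) with hc1
  have hc1p : 0 < c1 := by positivity
  refine ⟨C2 * c1 ^ L * ((∫ z, Wn n 1 z) + 1) * ((X ^ 2 + 1) * 2 ^ |p|), by positivity,
    fun g hg hg2 hS ζ i k S hSm hSS => ?_⟩
  obtain ⟨g1, g2, g3, g4⟩ := hGp g hg hg2 ζ
  obtain ⟨h1, h2⟩ := ind_props hg hg2 hSm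
  have hs := D.sc_pos ζ
  have hR := jb_pos ζ
  have hR1 := jb_ge_one ζ
  obtain ⟨w1, w2⟩ := Wn_int n hs
  set s := sc ρ δ ε ζ with hsdef
  set Sg := ∫ ξ, jb ξ ^ p * ‖g ξ‖ ^ 2 with hSg
  have hSg0 : 0 ≤ Sg := integral_nonneg fun ξ => mul_nonneg (Real.rpow_nonneg (jb_pos ξ).le _) (by positivity)
  have hk0 : (0:ℝ) ≤ k := Nat.cast_nonneg k
  set Y := jb ζ + k with hY
  have hY0 : 0 < Y := by positivity
  set r := Y ^ ((ρ + δ) / 2) / c1 with hr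
  have hr0 : 0 < r := div_pos (Real.rpow_pos_of_pos hY0 _) hc1p
  have hτ : 0 ≤ (ρ + δ) / 2 := by linarith [D.hδ0, D.hδρ]
  have main := far_bound hκ i hr0 (Kb_cont D ζ) (w1.const_mul (C1 * jb ζ ^ m)) (hk1 ζ)
    (H0 := C1 * jb ζ ^ m * s ^ n) (fun z => by
      refine mul_le_mul_of_nonneg_left ?_ (by positivity)
      unfold Wn
      refine mul_le_of_le_one_right (by positivity) (inv_le_one_of_one_le₀ ?_)
      exact one_le_pow₀ (by nlinarith [norm_nonneg z, mul_nonneg hs.le (norm_nonneg z)]))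
    (w1.const_mul (C2 * jb ζ ^ m * (jb ζ ^ δ / r) ^ L)) (hk2 ζ i r hr0) g1 g2 h1 h2 ?_
  · rw [integral_const_mul, w2] at main
    have b1 : √(∫ ξ, ‖GG ρ δ ε χ g ζ ξ‖ ^ 2) ≤ ((X ^ 2 + 1) * 2 ^ |p| * jb ζ ^ |p|) * √Sg := by
      refine sqrt_le_mul ?_ hSg0 (weight_le (by positivity) hS g2 fun ξ => ?_)
      · have a1 : (1:ℝ) ≤ 2 ^ |p| := Real.one_le_rpow (by norm_num) (abs_nonneg p)
        have a2 : (1:ℝ) ≤ jb ζ ^ |p| := Real.one_le_rpow hR1 (abs_nonneg p)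
        have a3 : (1:ℝ) ≤ X ^ 2 + 1 := by nlinarith
        exact one_le_mul_of_one_le_of_one_le (one_le_mul_of_one_le_of_one_le a3 a1) a2
      · have hRξ := jb_pos ξ
        rcases le_or_gt ‖ξ - ζ‖ s with h | h
        · have c1 := D.cmpr (ξ := ξ) (ζ := ζ) (by linarith) (-p)
          rw [abs_neg] at c1
          have c2 : jb ζ ^ (-p) ≤ jb ζ ^ |p| := jb_mono ζ (neg_le_abs p)
          have c3 : 1 ≤ 2 ^ |p| * jb ζ ^ |p| * jb ξ ^ p := by
            have : jb ξ ^ (-p) * jb ξ ^ p = 1 := by rw [← Real.rpow_add hRξ]; simp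
            calc 1 = jb ξ ^ (-p) * jb ξ ^ p := this.symm
              _ ≤ _ := mul_le_mul_of_nonneg_right (c1.trans
                (mul_le_mul_of_nonneg_left c2 (by positivity))) (by positivity)
          calc ‖GG ρ δ ε χ g ζ ξ‖ ^ 2 ≤ (X * ‖g ξ‖) ^ 2 := pow_le_pow_left₀ (norm_nonneg _) (g4 ξ) 2
            _ = X ^ 2 * 1 * ‖g ξ‖ ^ 2 := by ring
            _ ≤ (X ^ 2 + 1) * (2 ^ |p| * jb ζ ^ |p| * jb ξ ^ p) * ‖g ξ‖ ^ 2 := by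
                gcongr; linarith
            _ = _ := by ring
        · rw [g3 ξ h]; rw [norm_zero, zero_pow two_ne_zero]; positivity
    have b2 : √(∫ ξ, ‖S.indicator g ξ‖ ^ 2) ≤ (((k:ℝ) + 1) ^ |p|) * √Sg := by
      refine sqrt_le_mul (Real.one_le_rpow (by linarith) (abs_nonneg p)) hSg0
        (weight_le (by positivity) hS h2 fun ξ => ?_)
      have hRξ := jb_pos ξ
      by_cases hξ : ξ ∈ S
      · rw [Set.indicator_of_mem hξ]
        obtain ⟨_, _, _, d4⟩ := hSS ξ hξ
        have c3 : 1 ≤ ((k:ℝ) + 1) ^ |p| * jb ξ ^ p := by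
          have : jb ξ ^ (-p) * jb ξ ^ p = 1 := by rw [← Real.rpow_add hRξ]; simp
          calc 1 = jb ξ ^ (-p) * jb ξ ^ p := this.symm
            _ ≤ _ := mul_le_mul_of_nonneg_right
              ((jb_mono ξ (neg_le_abs p)).trans (Real.rpow_le_rpow hRξ.le d4 (abs_nonneg p))) (by positivity)
        rw [← mul_assoc]
        exact le_mul_of_one_le_left (by positivity) c3
      · rw [Set.indicator_of_notMem hξ]; rw [norm_zero, zero_pow two_ne_zero]; positivity
    have b3 : (jb ζ ^ δ / r) ^ L ≤ c1 ^ L * (jb ζ ^ (-(|m| + |p| + n + 1)) * (((k:ℝ) + 1) ^ (-(|p| + 2)))) := by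
      have a1 : jb ζ ^ δ / r ≤ c1 * Y ^ (-((ρ - δ) / 2)) := by
        rw [hr, div_div_eq_mul_div, mul_comm, mul_div_assoc]
        refine mul_le_mul_of_nonneg_left ?_ hc1p.le
        rw [div_le_iff₀ (Real.rpow_pos_of_pos hY0 _), ← Real.rpow_add hY0]
        have : -((ρ - δ) / 2) + (ρ + δ) / 2 = δ := by ring
        rw [this]
        exact Real.rpow_le_rpow hR.le (by linarith) D.hδ0
      have a2 : (jb ζ ^ δ / r) ^ L ≤ c1 ^ L * Y ^ (-((ρ - δ) / 2 * L)) := by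
        refine (pow_le_pow_left₀ (by positivity) a1 L).trans (le_of_eq ?_)
        rw [mul_pow, ← Real.rpow_natCast (Y ^ _), ← Real.rpow_mul hY0.le]
        congr 2; ring
      refine a2.trans (mul_le_mul_of_nonneg_left ?_ (by positivity))
      have hY1 : 1 ≤ Y := by linarith
      calc Y ^ (-((ρ - δ) / 2 * L)) ≤ Y ^ (-(|m| + |p| + n + 1) + (-(|p| + 2))) :=
            Real.rpow_le_rpow_of_exponent_le hY1 (by linarith)
        _ = Y ^ (-(|m| + |p| + n + 1)) * Y ^ (-(|p| + 2)) := Real.rpow_add hY0 _ _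
        _ ≤ _ := by
          refine mul_le_mul ?_ ?_ (by positivity) (by positivity)
          · refine Real.rpow_le_rpow_of_nonpos hR (by linarith) ?_
            have := abs_nonneg m; have := abs_nonneg p; linarith
          · refine Real.rpow_le_rpow_of_nonpos (by positivity) (by linarith) ?_
            have := abs_nonneg p; linarith
    have e1 : jb ζ ^ (-(|m| + |p| + n + 1)) = jb ζ ^ (-|m|) * (jb ζ ^ |p|)⁻¹ * jb ζ ^ (-((n:ℝ) + 1)) := by
      rw [← Real.rpow_neg hR.le, ← Real.rpow_add hR, ← Real.rpow_add hR]; congr 1; ring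
    have e2 : ((k:ℝ) + 1) ^ (-(|p| + 2)) = (((k:ℝ) + 1) ^ |p|)⁻¹ * (((k:ℝ) + 1) ^ 2)⁻¹ := by
      have : (0:ℝ) < k + 1 := by positivity
      rw [← Real.rpow_natCast ((k:ℝ)+1) 2, ← Real.rpow_neg this.le, ← Real.rpow_neg this.le, ← Real.rpow_add this]
      congr 1; push_cast; ring
    have e3 : jb ζ ^ m * jb ζ ^ (-|m|) ≤ 1 := by
      rw [← Real.rpow_add hR]
      exact Real.rpow_le_one_of_one_le_of_nonpos hR1 (by linarith [le_abs_self m])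
    have hkk : (0:ℝ) < (k:ℝ) + 1 := by positivity
    have hkp := Real.rpow_pos_of_pos hkk |p|
    have hRp := Real.rpow_pos_of_pos hR |p|
    rw [e1, e2] at b3
    refine main.trans (far_num hC2.le (Real.rpow_nonneg hR.le m) (Real.rpow_nonneg hR.le _) hRp hkp
      (Real.rpow_nonneg hR.le _) (inv_nonneg.2 (sq_nonneg _)) (pow_nonneg hc1p.le L) hW0
      (by positivity) hSg0 e3 b3 (by positivity) b1 b2 (Real.sqrt_nonneg _) (Real.sqrt_nonneg _))
  · intro ξ η hξ hη
    have hξ' : ‖ξ - ζ‖ ≤ s := by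
      by_contra hcon; exact hξ (g3 ξ (not_le.1 hcon))
    have hη' : η ∈ S := by
      by_contra hcon; exact hη (Set.indicator_of_notMem hcon g)
    obtain ⟨d1, d2, d3, d4⟩ := hSS η hη'
    have a1 := dist_grow D d1
    have a2 : Y ^ ((ρ + δ) / 2) ≤ (jb ζ + jb η) ^ ((ρ + δ) / 2) :=
      Real.rpow_le_rpow hY0.le (by linarith) hτ
    have a3 : r ≤ ‖η - ζ‖ / 2 := by
      rw [hr, div_le_iff₀ hc1p, hc1]; linarith
    have a4 : |ξ i - ζ i| ≤ s := by
      have := norm_le_pi_norm (ξ - ζ) i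
      rw [Pi.sub_apply, Real.norm_eq_abs] at this; linarith
    have a5 : |η i - ζ i| ≤ |ξ i - η i| + |ξ i - ζ i| := by
      have e : η i - ζ i = -(ξ i - η i) + (ξ i - ζ i) := by ring
      rw [e]; refine (abs_add_le _ _).trans ?_; rw [abs_neg]
    linarith

end
end


noncomputable section
section
variable {n : ℕ} {m ρ δ ε : ℝ} {σ : (Fin n → ℝ) → (Fin n → ℝ) → ℂ} {χ : (Fin n → ℝ) → ℂ}

lemma Bil_add {K : (Fin n → ℝ) → (Fin n → ℝ) → ℂ} (hK : Continuous fun p : (Fin n → ℝ) × (Fin n → ℝ) => K p.1 p.2)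
    {H : (Fin n → ℝ) → ℝ} (hH : Integrable H) (hKH : ∀ x z, ‖K x z‖ ≤ H z)
    {w : (Fin n → ℝ) → ℂ} (hw : Continuous w) (hw2 : Integrable fun x => ‖w x‖ ^ 2)
    {a b : (Fin n → ℝ) → ℂ} (ha : Integrable a) (ha2 : Integrable fun x => ‖a x‖ ^ 2)
    (hb : Integrable b) (hb2 : Integrable fun x => ‖b x‖ ^ 2) :
    Bil K w (IFT fun ξ => a ξ + b ξ) = Bil K w (IFT a) + Bil K w (IFT b) := by
  have i1 := (bil_bound hK hH hKH hw (IFT_continuous ha) hw2 (IFT_planch ha ha2).1).1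
  have i2 := (bil_bound hK hH hKH hw (IFT_continuous hb) hw2 (IFT_planch hb hb2).1).1
  unfold Bil
  rw [← integral_add i1 i2]
  congr 1; ext p
  rw [IFT_add ha hb, map_add, mul_add]

lemma fin_sub {ι : Type*} [DecidableEq ι] (β : Set (Fin n → ℝ) → ℝ) (h0 : β ∅ ≤ 0)
    (hadd : ∀ S T, MeasurableSet S → MeasurableSet T → Disjoint S T → β (S ∪ T) ≤ β S + β T)
    (F : ι → Set (Fin n → ℝ)) (hF : ∀ i, MeasurableSet (F i)) (hd : ∀ i j, i ≠ j → Disjoint (F i) (F j))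
    (s : Finset ι) : β (⋃ i ∈ s, F i) ≤ ∑ i ∈ s, β (F i) := by
  induction s using Finset.induction_on with
  | empty => simpa using h0
  | insert a s ha ih =>
    rw [Finset.set_biUnion_insert, Finset.sum_insert ha]
    refine (hadd _ _ (hF a) (Finset.measurableSet_biUnion s fun i _ => hF i) ?_).trans (by linarith)
    rw [Set.disjoint_iUnion₂_right]
    intro i hi
    exact hd a i (fun h => ha (h ▸ hi))

/-- dyadic-type pieces of the far zone -/
def pc (ρ δ ε : ℝ) (ζ : (Fin n → ℝ)) (q : ℕ × Fin n) : Set (Fin n → ℝ) :=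
  {η | 2 * sc ρ δ ε ζ < ‖η - ζ‖ ∧ ⌊jb η⌋₊ = q.1 ∧ |η q.2 - ζ q.2| = ‖η - ζ‖ ∧
    ∀ j, j < q.2 → |η j - ζ j| ≠ ‖η - ζ‖}

lemma pc_meas (ζ : (Fin n → ℝ)) (q : ℕ × Fin n) : MeasurableSet (pc ρ δ ε ζ q) := by
  unfold pc
  have hm : ∀ j, MeasurableSet {η : (Fin n → ℝ) | |η j - ζ j| = ‖η - ζ‖} := fun j =>
    (isClosed_eq (by fun_prop) (by fun_prop)).measurableSet
  have h1 : MeasurableSet {η : (Fin n → ℝ) | 2 * sc ρ δ ε ζ < ‖η - ζ‖} :=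
    (isOpen_lt continuous_const (by fun_prop)).measurableSet
  have h2 : MeasurableSet {η : (Fin n → ℝ) | ∀ j, j < q.2 → |η j - ζ j| ≠ ‖η - ζ‖} := by
    rw [Set.ofPred_forall]
    refine MeasurableSet.iInter fun j => ?_
    rw [Set.ofPred_forall]
    exact MeasurableSet.iInter fun _ => (hm j).compl
  refine h1.inter (MeasurableSet.inter ?_ (MeasurableSet.inter (hm _) h2))
  exact (Nat.measurable_floor.comp jb_cont.measurable) (measurableSet_singleton q.1)

lemma pc_disj (ζ : (Fin n → ℝ)) (q q' : ℕ × Fin n) (h : q ≠ q') :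
    Disjoint (pc ρ δ ε ζ q) (pc ρ δ ε ζ q') := by
  rw [Set.disjoint_left]
  rintro η ⟨_, a2, a3, a4⟩ ⟨_, b2, b3, b4⟩
  apply h
  refine Prod.ext (a2.symm.trans b2) ?_
  rcases lt_trichotomy q.2 q'.2 with h' | h' | h'
  · exact absurd a3 (b4 _ h')
  · exact h'
  · exact absurd b3 (a4 _ h')

lemma exists_norm_coord (hn : 0 < n) (y : (Fin n → ℝ)) : ∃ i, |y i| = ‖y‖ := by
  by_contra hcon
  push Not at hcon
  have h1 : ∀ i, |y i| < ‖y‖ := fun i => lt_of_le_of_ne (by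
    have := norm_le_pi_norm y i; rwa [Real.norm_eq_abs] at this) (hcon i)
  have h2 : 0 < ‖y‖ := lt_of_le_of_lt (abs_nonneg _) (h1 ⟨0, hn⟩)
  have h3 := (pi_norm_lt_iff (x := y) h2).2 fun i => by rw [Real.norm_eq_abs]; exact h1 i
  exact lt_irrefl _ h3

lemma pc_cover (hn : 0 < n) (ζ : (Fin n → ℝ)) (M : ℕ) :
    (⋃ q ∈ (Finset.range M ×ˢ (Finset.univ : Finset (Fin n))), pc ρ δ ε ζ q) =
      (nz ρ δ ε ζ)ᶜ ∩ {η | ⌊jb η⌋₊ < M} := by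
  ext η
  simp only [Set.mem_iUnion, Finset.mem_product, Finset.mem_range, Finset.mem_univ, and_true,
    exists_prop, Set.mem_inter_iff, Set.mem_compl_iff, Set.mem_ofPred_eq, nz, not_le]
  constructor
  · rintro ⟨q, hq, a1, a2, _⟩
    exact ⟨a1, a2 ▸ hq⟩
  · rintro ⟨a1, a2⟩
    obtain ⟨i0, hi0⟩ := exists_norm_coord hn (η - ζ)
    obtain ⟨i, hi, hmin⟩ := WellFounded.has_min (wellFounded_lt (α := Fin n))
      {i | |η i - ζ i| = ‖η - ζ‖} ⟨i0, hi0⟩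
    exact ⟨(⌊jb η⌋₊, i), a2, a1, rfl, hi, fun j hj hj' => hmin j hj' hj⟩

set_option maxHeartbeats 1600000 in
lemma far_total {κ0 : ℝ} (E : Env m ρ δ ε κ0 σ χ) (p : ℝ) :
    ∃ C > 0, ∀ (g : (Fin n → ℝ) → ℂ), Integrable g → Integrable (fun x => ‖g x‖ ^ 2) →
      Integrable (fun ξ => jb ξ ^ p * ‖g ξ‖ ^ 2) → ∀ (ζ : (Fin n → ℝ)),
      ‖Bil (Kb ρ δ ε σ χ ζ) (IFT (GG ρ δ ε χ g ζ)) (IFT ((nz ρ δ ε ζ)ᶜ.indicator g))‖ ≤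
        C * jb ζ ^ (-((n:ℝ) + 1)) * ∫ ξ, jb ξ ^ p * ‖g ξ‖ ^ 2 := by
  have D := E.D
  obtain ⟨C, hC, hp⟩ := far_piece E p
  obtain ⟨C1, hC1, hk1⟩ := Kb_Wn D
  obtain ⟨X, hX, hGp⟩ := GG_props E
  have hsum : Summable fun k : ℕ => (((k:ℝ) + 1) ^ 2)⁻¹ := by
    have := (summable_nat_add_iff 1).2 (Real.summable_nat_pow_inv.2 (by norm_num : 1 < 2))
    refine this.congr fun k => by push_cast; rfl
  set Z := ∑' k : ℕ, (((k:ℝ) + 1) ^ 2)⁻¹ with hZ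
  have hZ0 : 0 ≤ Z := tsum_nonneg fun k => by positivity
  refine ⟨C * (n * (Z + 1)), mul_pos hC (mul_pos (Nat.cast_pos.2 D.hn) (by positivity)), fun g hg hg2 hS ζ => ?_⟩
  obtain ⟨g1, g2, g3, g4⟩ := hGp g hg hg2 ζ
  obtain ⟨pG1, pG2⟩ := IFT_planch g1 g2
  have cG := IFT_continuous g1
  have hs := D.sc_pos ζ
  obtain ⟨w1, w2⟩ := Wn_int n hs
  set K := Kb ρ δ ε σ χ ζ with hK
  set w := IFT (GG ρ δ ε χ g ζ) with hw
  set Sg := ∫ ξ, jb ξ ^ p * ‖g ξ‖ ^ 2 with hSg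
  have hSg0 : 0 ≤ Sg := integral_nonneg fun ξ => mul_nonneg (Real.rpow_nonneg (jb_pos ξ).le _) (by positivity)
  have hR := Real.rpow_pos_of_pos (jb_pos ζ) (-((n:ℝ) + 1))
  set R := jb ζ ^ (-((n:ℝ) + 1)) with hRdef
  set β : Set (Fin n → ℝ) → ℝ := fun S => ‖Bil K w (IFT (S.indicator g))‖ with hβ
  have hadd : ∀ S T, MeasurableSet S → MeasurableSet T → Disjoint S T → β (S ∪ T) ≤ β S + β T := by
    intro S T hS hT hd
    obtain ⟨a1, a2⟩ := ind_props hg hg2 hS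
    obtain ⟨b1, b2⟩ := ind_props hg hg2 hT
    have := Bil_add (Kb_cont D ζ) (w1.const_mul _) (hk1 ζ) cG pG1 a1 a2 b1 b2
    simp only [hβ]
    rw [Set.indicator_union_of_disjoint hd, this]
    exact norm_add_le _ _
  have h0 : β ∅ ≤ 0 := by
    simp only [hβ, Set.indicator_empty]
    have : IFT (fun _ : (Fin n → ℝ) => (0:ℂ)) = fun _ => 0 := by
      ext x; simp [IFT]
    rw [this]; simp [Bil]
  set B := (∫ z, C1 * jb ζ ^ m * Wn n (sc ρ δ ε ζ) z) * √(∫ x, ‖w x‖ ^ 2) with hB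
  have htail : ∀ S, MeasurableSet S → β S ≤ B * √(∫ x, ‖S.indicator g x‖ ^ 2) := by
    intro S hS
    obtain ⟨a1, a2⟩ := ind_props hg hg2 hS
    have := Bil_le (Kb_cont D ζ) (w1.const_mul _) (hk1 ζ) cG (IFT_continuous a1) pG1 (IFT_planch a1 a2).1
    rw [(IFT_planch a1 a2).2, ← mul_assoc] at this
    exact this
  have hfl : ∀ M : ℕ, MeasurableSet {η : (Fin n → ℝ) | ⌊jb η⌋₊ < M} := fun M =>
    (Nat.measurable_floor.comp jb_cont.measurable) (measurableSet_Iio (a := M))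
  have hn0 := (nz_meas (ρ := ρ) (δ := δ) (ε := ε) ζ).compl
  have hM : ∀ M : ℕ, β (nz ρ δ ε ζ)ᶜ ≤ C * (n * (Z + 1)) * R * Sg +
      B * √(∫ x, ‖((nz ρ δ ε ζ)ᶜ ∩ {η | ⌊jb η⌋₊ < M}ᶜ).indicator g x‖ ^ 2) := by
    intro M
    have e := hadd ((nz ρ δ ε ζ)ᶜ ∩ {η | ⌊jb η⌋₊ < M}) ((nz ρ δ ε ζ)ᶜ ∩ {η | ⌊jb η⌋₊ < M}ᶜ)
      (hn0.inter (hfl M)) (hn0.inter (hfl M).compl)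
      (Set.disjoint_left.2 fun x hx hx' => hx'.2 hx.2)
    rw [Set.inter_union_compl] at e
    refine e.trans (add_le_add ?_ (htail _ (hn0.inter (hfl M).compl)))
    rw [← pc_cover D.hn ζ M]
    refine (fin_sub β h0 hadd (pc ρ δ ε ζ) (pc_meas ζ) (pc_disj ζ) _).trans ?_
    have : ∀ q ∈ (Finset.range M ×ˢ (Finset.univ : Finset (Fin n))), β (pc ρ δ ε ζ q) ≤
        C * R * (((q.1:ℝ) + 1) ^ 2)⁻¹ * Sg := by
      intro q _
      refine hp g hg hg2 hS ζ q.2 q.1 _ (pc_meas ζ q) ?_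
      rintro η ⟨a1, a2, a3, a4⟩
      refine ⟨a1, a3, ?_, ?_⟩
      · rw [← a2]; exact Nat.floor_le (jb_pos η).le
      · rw [← a2]; exact (Nat.lt_floor_add_one _).le
    refine (Finset.sum_le_sum this).trans ?_
    rw [Finset.sum_product]
    simp only [Finset.sum_const, Finset.card_univ, Fintype.card_fin, nsmul_eq_mul]
    have e2 : ∑ k ∈ Finset.range M, (n:ℝ) * (C * R * (((k:ℝ) + 1) ^ 2)⁻¹ * Sg) =
        (n * C * R * Sg) * ∑ k ∈ Finset.range M, (((k:ℝ) + 1) ^ 2)⁻¹ := by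
      rw [Finset.mul_sum]; congr 1; ext k; ring
    rw [e2]
    have e3 : ∑ k ∈ Finset.range M, (((k:ℝ) + 1) ^ 2)⁻¹ ≤ Z + 1 :=
      (hsum.sum_le_tsum _ fun k _ => by positivity).trans (by linarith)
    calc _ ≤ (n * C * R * Sg) * (Z + 1) := mul_le_mul_of_nonneg_left e3 (by positivity)
      _ = _ := by ring
  have hlim : Filter.Tendsto (fun M : ℕ => ∫ x, ‖((nz ρ δ ε ζ)ᶜ ∩ {η | ⌊jb η⌋₊ < M}ᶜ).indicator g x‖ ^ 2)
      Filter.atTop (nhds (∫ _ : (Fin n → ℝ), (0:ℝ))) := by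
    refine tendsto_integral_of_dominated_convergence (fun x => ‖g x‖ ^ 2) (fun M => ?_) hg2 (fun M => ?_) ?_
    · exact (ind_props hg hg2 (hn0.inter (hfl M).compl)).2.aestronglyMeasurable
    · refine Filter.Eventually.of_forall fun x => ?_
      rw [Real.norm_of_nonneg (by positivity)]
      exact pow_le_pow_left₀ (norm_nonneg _) (norm_indicator_le_norm_self _ _) 2
    · refine Filter.Eventually.of_forall fun x => ?_
      refine tendsto_const_nhds.congr' ?_
      filter_upwards [Filter.eventually_gt_atTop ⌊jb x⌋₊] with M hM
      rw [Set.indicator_of_notMem (fun h => h.2 hM), norm_zero, zero_pow two_ne_zero]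
  rw [integral_zero] at hlim
  have hlim2 : Filter.Tendsto (fun M : ℕ => C * (n * (Z + 1)) * R * Sg +
      B * √(∫ x, ‖((nz ρ δ ε ζ)ᶜ ∩ {η | ⌊jb η⌋₊ < M}ᶜ).indicator g x‖ ^ 2)) Filter.atTop
      (nhds (C * (n * (Z + 1)) * R * Sg + B * √0)) :=
    tendsto_const_nhds.add (((Real.continuous_sqrt.tendsto 0).comp hlim).const_mul B)
  rw [Real.sqrt_zero, mul_zero, add_zero] at hlim2
  exact ge_of_tendsto' hlim2 hM

end
end


noncomputable section
section
variable {n : ℕ} {m ρ δ ε : ℝ} {σ : (Fin n → ℝ) → (Fin n → ℝ) → ℂ} {χ : (Fin n → ℝ) → ℂ}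

/-- partition weight -/
def kk (ρ δ ε : ℝ) (χ : (Fin n → ℝ) → ℂ) (ξ ζ : (Fin n → ℝ)) : ℝ :=
  nu ρ δ ε ζ * ‖cw χ (sc ρ δ ε ζ) ζ ξ‖ ^ 2 / NN ρ δ ε χ ξ

lemma kk_int {κ0 : ℝ} (E : Env m ρ δ ε κ0 σ χ) (ξ : (Fin n → ℝ)) :
    Integrable (kk ρ δ ε χ ξ) ∧ ∫ ζ, kk ρ δ ε χ ξ ζ = 1 := by
  have hN := E.N_ge ξ
  have hi : Integrable fun ζ => nu ρ δ ε ζ * ‖cw χ (sc ρ δ ε ζ) ζ ξ‖ ^ 2 := by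
    by_contra hcon
    have : NN ρ δ ε χ ξ = 0 := integral_undef hcon
    linarith
  refine ⟨hi.div_const _, ?_⟩
  unfold kk
  rw [integral_div]
  exact div_self (by intro h; change NN ρ δ ε χ ξ = 0 at h; linarith)

lemma kk_nonneg {κ0 : ℝ} (E : Env m ρ δ ε κ0 σ χ) (ξ ζ : (Fin n → ℝ)) : 0 ≤ kk ρ δ ε χ ξ ζ := by
  have hN := E.N_ge ξ
  have := E.D.nu_pos ζ
  unfold kk
  exact div_nonneg (by positivity) (by linarith)

lemma kk_meas (D : Dat m ρ δ ε σ χ) : StronglyMeasurable fun p : (Fin n → ℝ) × (Fin n → ℝ) => kk ρ δ ε χ p.1 p.2 := by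
  unfold kk
  have h1 : Continuous fun p : (Fin n → ℝ) × (Fin n → ℝ) => nu ρ δ ε p.2 * ‖cw χ (sc ρ δ ε p.2) p.2 p.1‖ ^ 2 :=
    (D.nu_cont.comp continuous_snd).mul ((D.cw_cont2.comp
      (f := fun p : (Fin n → ℝ) × (Fin n → ℝ) => (p.2, p.1)) (by fun_prop)).norm.pow 2)
  exact (h1.measurable.div ((NN_meas D).measurable.comp measurable_fst)).stronglyMeasurable

lemma kk_bs {κ0 : ℝ} (E : Env m ρ δ ε κ0 σ χ) (g : (Fin n → ℝ) → ℂ) (ζ x ξ : (Fin n → ℝ)) :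
    (nu ρ δ ε ζ : ℂ) * (bs ρ δ ε σ χ ζ x ξ * GG ρ δ ε χ g ζ ξ) = (kk ρ δ ε χ ξ ζ : ℂ) * (σ x ξ * g ξ) := by
  have hc : cw χ (sc ρ δ ε ζ) ζ ξ * cw χ (sc ρ δ ε ζ) ζ ξ = ((‖cw χ (sc ρ δ ε ζ) ζ ξ‖ ^ 2 : ℝ) : ℂ) := by
    have h1 : (starRingEnd ℂ) (cw χ (sc ρ δ ε ζ) ζ ξ) = cw χ (sc ρ δ ε ζ) ζ ξ := E.D.hχr _
    rw [← Complex.normSq_eq_norm_sq, ← Complex.mul_conj, h1]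
  unfold bs GG kk
  rw [Complex.ofReal_div, Complex.ofReal_mul, ← hc]
  ring

lemma decomp {κ0 A : ℝ} (E : Env m ρ δ ε κ0 σ χ) (hA : ∀ x ξ, ‖σ x ξ‖ ≤ A * jb ξ ^ m)
    {f g : (Fin n → ℝ) → ℂ} (hf : Continuous f) (hfi : Integrable f) (hf2 : Integrable fun x => ‖f x‖ ^ 2)
    (hg : Continuous g) (hgi : Integrable g) (hg2 : Integrable fun x => ‖g x‖ ^ 2)
    (hgm : Integrable fun ξ => jb ξ ^ m * ‖g ξ‖) :
    Integrable (fun ζ => (nu ρ δ ε ζ : ℂ) * Bil (Kb ρ δ ε σ χ ζ) (IFT (GG ρ δ ε χ g ζ)) f) ∧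
    ∫ x, (∫ ξ, expi (dotp x ξ) * σ x ξ * g ξ) * (starRingEnd ℂ) (f x) =
      ∫ ζ, (nu ρ δ ε ζ : ℂ) * Bil (Kb ρ δ ε σ χ ζ) (IFT (GG ρ δ ε χ g ζ)) f := by
  have D := E.D
  obtain ⟨C1, hC1, hk1⟩ := Kb_Wn D
  obtain ⟨X, hX, hGp⟩ := GG_props E
  set Φ : (Fin n → ℝ) × (Fin n → ℝ) → ℂ := fun P => expi (dotp P.1 P.2) * σ P.1 P.2 * g P.2 * (starRingEnd ℂ) (f P.1) with hΦ
  have hΦc : Continuous Φ :=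
    (((Continuous.edot continuous_fst continuous_snd).mul D.hσ.1.continuous).mul
      (hg.comp continuous_snd)).mul (Complex.continuous_conj.comp (hf.comp continuous_fst))
  have hΦi : Integrable Φ ((volume : Measure (Fin n → ℝ)).prod volume) := by
    refine (hfi.norm.mul_prod (hgm.const_mul A)).mono' hΦc.aestronglyMeasurable
      (Filter.Eventually.of_forall fun P => ?_)
    simp only [hΦ]
    rw [norm_mul, norm_mul, norm_mul, norm_expi, one_mul, RCLike.norm_conj]
    calc ‖σ P.1 P.2‖ * ‖g P.2‖ * ‖f P.1‖ ≤ (A * jb P.2 ^ m) * ‖g P.2‖ * ‖f P.1‖ := by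
          gcongr; exact hA _ _
      _ = _ := by ring
  set Ψ : ((Fin n → ℝ) × (Fin n → ℝ)) × (Fin n → ℝ) → ℂ := fun q => (kk ρ δ ε χ q.1.2 q.2 : ℂ) * Φ q.1 with hΨ
  have hkm : StronglyMeasurable fun q : ((Fin n → ℝ) × (Fin n → ℝ)) × (Fin n → ℝ) => kk ρ δ ε χ q.1.2 q.2 :=
    (kk_meas D).comp_measurable (g := fun q : ((Fin n → ℝ) × (Fin n → ℝ)) × (Fin n → ℝ) => (q.1.2, q.2)) (by fun_prop)
  have hΨm : StronglyMeasurable Ψ :=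
    (Complex.continuous_ofReal.comp_stronglyMeasurable hkm).mul
      (hΦc.comp continuous_fst).stronglyMeasurable
  have hΨn : ∀ q, ‖Ψ q‖ = kk ρ δ ε χ q.1.2 q.2 * ‖Φ q.1‖ := fun q => by
    simp only [hΨ]
    rw [norm_mul, Complex.norm_real, Real.norm_of_nonneg (kk_nonneg E _ _)]
  have hΨi : Integrable Ψ (((volume : Measure (Fin n → ℝ)).prod volume).prod volume) := by
    rw [integrable_prod_iff hΨm.aestronglyMeasurable]
    constructor
    · refine Filter.Eventually.of_forall fun P => ?_
      have h1 : Integrable fun ζ => ((kk ρ δ ε χ P.2 ζ : ℝ) : ℂ) := (kk_int E P.2).1.ofReal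
      exact h1.mul_const (Φ P)
    · refine hΦi.norm.congr (Filter.Eventually.of_forall fun P => ?_)
      simp only [hΨn]
      rw [integral_mul_const, (kk_int E P.2).2, one_mul]
  have hζ : ∀ᵐ ζ, ∫ P : (Fin n → ℝ) × (Fin n → ℝ), Ψ (P, ζ) ∂((volume : Measure (Fin n → ℝ)).prod volume) =
      (nu ρ δ ε ζ : ℂ) * Bil (Kb ρ δ ε σ χ ζ) (IFT (GG ρ δ ε χ g ζ)) f := by
    filter_upwards [hΨi.prod_left_ae] with ζ hi
    obtain ⟨g1, g2, g3, g4⟩ := hGp g hgi hg2 ζ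
    obtain ⟨w1, w2⟩ := Wn_int n (D.sc_pos ζ)
    have h1 := phi_bil (b := bs ρ δ ε σ χ ζ) (fun x => (bs_smooth D ζ x).continuous) (bs_int D ζ) (Kb_cont D ζ)
      (w1.const_mul _) (hk1 ζ) g1 g2 hf hf2
    have h2 : (nu ρ δ ε ζ : ℂ) * Bil (Kb ρ δ ε σ χ ζ) (IFT (GG ρ δ ε χ g ζ)) f = _ :=
      congrArg (fun t => (nu ρ δ ε ζ : ℂ) * t) h1.symm
    rw [h2, integral_prod _ hi, ← integral_const_mul]
    congr 1; ext x
    rw [← mul_assoc, ← integral_const_mul, ← integral_mul_const]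
    congr 1; ext ξ
    have := kk_bs E g ζ x ξ
    calc Ψ ((x, ξ), ζ) = expi (dotp x ξ) * ((kk ρ δ ε χ ξ ζ : ℂ) * (σ x ξ * g ξ)) * (starRingEnd ℂ) (f x) := by
          simp only [hΨ, hΦ]; ring
      _ = _ := by rw [← this]; ring
  refine ⟨hΨi.integral_prod_right.congr hζ, ?_⟩
  rw [← integral_congr_ae hζ, ← integral_integral_swap (f := fun P ζ => Ψ (P, ζ)) hΨi]
  have e1 : ∀ P : (Fin n → ℝ) × (Fin n → ℝ), ∫ ζ, Ψ (P, ζ) = Φ P := fun P => by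
    simp only [hΨ]
    rw [integral_mul_const, integral_complex_ofReal, (kk_int E P.2).2]; simp
  simp only [e1]
  rw [integral_prod _ hΦi]
  congr 1; ext x
  rw [← integral_mul_const]

end
end


noncomputable section
section
variable {n : ℕ} {m ρ δ ε : ℝ} {σ : (Fin n → ℝ) → (Fin n → ℝ) → ℂ} {χ : (Fin n → ℝ) → ℂ}

def TT (ρ δ ε p : ℝ) (g : (Fin n → ℝ) → ℂ) (ξ ζ : (Fin n → ℝ)) : ℝ :=
  {ζ : (Fin n → ℝ) | ‖ξ - ζ‖ ≤ 2 * sc ρ δ ε ζ}.indicator (nu ρ δ ε) ζ * (jb ξ ^ p * ‖g ξ‖ ^ 2)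

lemma TT_tonelli (D : Dat m ρ δ ε σ χ) {p : ℝ} {g : (Fin n → ℝ) → ℂ} (hg : Continuous g)
    (hS : Integrable fun ξ => jb ξ ^ p * ‖g ξ‖ ^ 2) :
    Integrable (fun ζ => ∫ ξ, TT ρ δ ε p g ξ ζ) ∧
    ∫ ζ, ∫ ξ, TT ρ δ ε p g ξ ζ ≤ 16 ^ n * ∫ ξ, jb ξ ^ p * ‖g ξ‖ ^ 2 := by
  have hjp : Continuous fun ξ : (Fin n → ℝ) => jb ξ ^ p * ‖g ξ‖ ^ 2 :=
    (jb_cont.rpow_const fun ζ => Or.inl (jb_pos ζ).ne').mul (hg.norm.pow 2)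
  have h0 : ∀ ξ : (Fin n → ℝ), 0 ≤ jb ξ ^ p * ‖g ξ‖ ^ 2 := fun ξ =>
    mul_nonneg (Real.rpow_nonneg (jb_pos ξ).le _) (by positivity)
  have hi0 : ∀ ξ ζ : (Fin n → ℝ), 0 ≤ {ζ : (Fin n → ℝ) | ‖ξ - ζ‖ ≤ 2 * sc ρ δ ε ζ}.indicator (nu ρ δ ε) ζ := fun ξ ζ =>
    Set.indicator_nonneg (fun ζ _ => (D.nu_pos ζ).le) ζ
  have hset : MeasurableSet {q : (Fin n → ℝ) × (Fin n → ℝ) | ‖q.1 - q.2‖ ≤ 2 * sc ρ δ ε q.2} :=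
    (isClosed_le (by fun_prop) (continuous_const.mul (sc_cont.comp continuous_snd))).measurableSet
  have hm : AEStronglyMeasurable (fun q : (Fin n → ℝ) × (Fin n → ℝ) => TT ρ δ ε p g q.1 q.2)
      ((volume : Measure (Fin n → ℝ)).prod volume) := by
    have h1 : AEStronglyMeasurable ({q : (Fin n → ℝ) × (Fin n → ℝ) | ‖q.1 - q.2‖ ≤ 2 * sc ρ δ ε q.2}.indicator
        (fun q => nu ρ δ ε q.2)) ((volume : Measure (Fin n → ℝ)).prod volume) :=
      (D.nu_cont.comp continuous_snd).aestronglyMeasurable.indicator hset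
    refine (h1.mul (hjp.comp continuous_fst).aestronglyMeasurable).congr (Filter.Eventually.of_forall fun q => ?_)
    simp only [TT, Pi.mul_apply, Function.comp]
    congr 1
  have hin : ∀ ξ, ∫ ζ, TT ρ δ ε p g ξ ζ ≤ 16 ^ n * (jb ξ ^ p * ‖g ξ‖ ^ 2) := fun ξ => by
    unfold TT
    rw [integral_mul_const]
    exact mul_le_mul_of_nonneg_right (N2_bound D ξ).2 (h0 ξ)
  have hin0 : ∀ ξ, 0 ≤ ∫ ζ, TT ρ δ ε p g ξ ζ := fun ξ =>
    integral_nonneg fun ζ => mul_nonneg (hi0 ξ ζ) (h0 ξ)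
  have hTn : ∀ ξ ζ, ‖TT ρ δ ε p g ξ ζ‖ = TT ρ δ ε p g ξ ζ := fun ξ ζ =>
    Real.norm_of_nonneg (mul_nonneg (hi0 ξ ζ) (h0 ξ))
  have hT : Integrable (fun q : (Fin n → ℝ) × (Fin n → ℝ) => TT ρ δ ε p g q.1 q.2) ((volume : Measure (Fin n → ℝ)).prod volume) := by
    rw [integrable_prod_iff hm]
    constructor
    · exact Filter.Eventually.of_forall fun ξ => (N2_bound D ξ).1.mul_const (jb ξ ^ p * ‖g ξ‖ ^ 2)
    · simp only [hTn]
      refine (hS.const_mul (16 ^ n)).mono' ?_ (Filter.Eventually.of_forall fun ξ => ?_)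
      · exact hm.integral_prod_right'
      · rw [Real.norm_of_nonneg (hin0 ξ)]; exact hin ξ
  refine ⟨hT.integral_prod_right, ?_⟩
  rw [← integral_integral_swap (f := fun ξ ζ => TT ρ δ ε p g ξ ζ) hT, ← integral_const_mul]
  exact integral_mono hT.integral_prod_left (hS.const_mul _) hin

lemma TT_ge (D : Dat m ρ δ ε σ χ) {p : ℝ} {g : (Fin n → ℝ) → ℂ} (hg : Integrable g) (hg2 : Integrable fun x => ‖g x‖ ^ 2)
    (hS : Integrable fun ξ => jb ξ ^ p * ‖g ξ‖ ^ 2) (ζ : (Fin n → ℝ)) :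
    nu ρ δ ε ζ * (jb ζ ^ p * ∫ ξ, ‖(nz ρ δ ε ζ).indicator g ξ‖ ^ 2) ≤ 2 ^ |p| * ∫ ξ, TT ρ δ ε p g ξ ζ := by
  have hν := D.nu_pos ζ
  have e : (fun ξ => TT ρ δ ε p g ξ ζ) =
      fun ξ => nu ρ δ ε ζ * (nz ρ δ ε ζ).indicator (fun ξ => jb ξ ^ p * ‖g ξ‖ ^ 2) ξ := by
    ext ξ
    unfold TT
    by_cases h : ‖ξ - ζ‖ ≤ 2 * sc ρ δ ε ζ
    · rw [Set.indicator_of_mem (show ξ ∈ nz ρ δ ε ζ from h),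
        Set.indicator_of_mem (show ζ ∈ {ζ : (Fin n → ℝ) | ‖ξ - ζ‖ ≤ 2 * sc ρ δ ε ζ} from h)]
    · rw [Set.indicator_of_notMem (show ξ ∉ nz ρ δ ε ζ from h),
        Set.indicator_of_notMem (show ζ ∉ {ζ : (Fin n → ℝ) | ‖ξ - ζ‖ ≤ 2 * sc ρ δ ε ζ} from h)]
      simp
  rw [e, integral_const_mul]
  have key : jb ζ ^ p * ∫ ξ, ‖(nz ρ δ ε ζ).indicator g ξ‖ ^ 2 ≤
      2 ^ |p| * ∫ ξ, (nz ρ δ ε ζ).indicator (fun ξ => jb ξ ^ p * ‖g ξ‖ ^ 2) ξ := by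
    rw [← integral_const_mul, ← integral_const_mul]
    refine integral_mono ((ind_props hg hg2 (nz_meas ζ)).2.const_mul _)
      ((hS.indicator (nz_meas ζ)).const_mul _) fun ξ => ?_
    by_cases h : ξ ∈ nz ρ δ ε ζ
    · simp only [Set.indicator_of_mem h]
      have c1 : jb ζ ^ p ≤ 2 ^ |p| * jb ξ ^ p :=
        rpow_cmp (jb_pos ξ) (jb_pos ζ) (D.cmp2 h).2 (D.cmp2 h).1 p
      calc jb ζ ^ p * ‖g ξ‖ ^ 2 ≤ (2 ^ |p| * jb ξ ^ p) * ‖g ξ‖ ^ 2 := by gcongr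
        _ = _ := by ring
    · simp only [Set.indicator_of_notMem h, norm_zero]
      simp
  calc _ ≤ nu ρ δ ε ζ * (2 ^ |p| * ∫ ξ, (nz ρ δ ε ζ).indicator (fun ξ => jb ξ ^ p * ‖g ξ‖ ^ 2) ξ) :=
        mul_le_mul_of_nonneg_left key hν.le
    _ = _ := by ring

lemma nu_le (D : Dat m ρ δ ε σ χ) (ζ : (Fin n → ℝ)) : nu ρ δ ε ζ ≤ (ε ^ n)⁻¹ := by
  have hτ : 0 ≤ (ρ + δ) / 2 := by linarith [D.hδ0, D.hδρ]
  have hε := D.hε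
  unfold nu
  refine inv_anti₀ (by positivity) (pow_le_pow_left₀ hε.le ?_ n)
  unfold sc
  exact le_mul_of_one_le_right hε.le (Real.one_le_rpow (jb_ge_one ζ) hτ)

lemma jb_int_neg : Integrable fun ζ : (Fin n → ℝ) => jb ζ ^ (-((n:ℝ) + 1)) := by
  have h := (integrable_one_add_norm (E := (Fin n → ℝ)) (μ := volume) (r := (n:ℝ) + 1) (by simp)).const_mul (2 ^ ((n:ℝ)+1))
  refine h.mono' (jb_cont.rpow_const fun ζ => Or.inl (jb_pos ζ).ne').aestronglyMeasurable
    (Filter.Eventually.of_forall fun ζ => ?_)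
  have hR := jb_pos ζ
  rw [Real.norm_of_nonneg (Real.rpow_nonneg hR.le _)]
  have h1 : 1 + ‖ζ‖ ≤ 2 * jb ζ := by linarith [norm_le_jb ζ, jb_ge_one ζ]
  have h2 : (2 * jb ζ) ^ (-((n:ℝ) + 1)) ≤ (1 + ‖ζ‖) ^ (-((n:ℝ) + 1)) :=
    Real.rpow_le_rpow_of_nonpos (by positivity) h1 (by have : (0:ℝ) ≤ n := Nat.cast_nonneg n; linarith)
  rw [Real.mul_rpow (by norm_num) hR.le] at h2
  calc jb ζ ^ (-((n:ℝ) + 1)) = 2 ^ ((n:ℝ) + 1) * (2 ^ (-((n:ℝ) + 1)) * jb ζ ^ (-((n:ℝ) + 1))) := by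
        rw [← mul_assoc, ← Real.rpow_add (by norm_num)]; simp
    _ ≤ _ := by gcongr

lemma q_lower {κ0 c A : ℝ} {σr : (Fin n → ℝ) → (Fin n → ℝ) → ℝ} (E : Env m ρ δ ε κ0 (fun x ξ => (σr x ξ : ℂ)) χ) (hc : 0 < c)
    (hell : ∀ x ξ, c * jb ξ ^ m ≤ σr x ξ) (hA : ∀ x ξ, |σr x ξ| ≤ A * jb ξ ^ m) (hκ0 : 0 ≤ κ0)
    (hAκ : A * κ0 ≤ c / 2) :
    ∃ C1 > 0, ∃ C2 > 0, ∀ (g : (Fin n → ℝ) → ℂ), Integrable g → Integrable (fun x => ‖g x‖ ^ 2) →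
      Integrable (fun ξ => jb ξ ^ (m - (ρ - δ)) * ‖g ξ‖ ^ 2) → ∀ ζ : (Fin n → ℝ),
      -(C1 * (jb ζ ^ (m - (ρ - δ)) * (∫ ξ, ‖(nz ρ δ ε ζ).indicator g ξ‖ ^ 2)) +
        C2 * jb ζ ^ (-((n:ℝ) + 1)) * ∫ ξ, jb ξ ^ (m - (ρ - δ)) * ‖g ξ‖ ^ 2) ≤
      (Bil (Kb ρ δ ε (fun x ξ => (σr x ξ : ℂ)) χ ζ) (IFT (GG ρ δ ε χ g ζ)) (IFT g)).re := by
  have D := E.D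
  obtain ⟨C1, hC1, b1⟩ := near_bound E hc hell hA hκ0 hAκ
  obtain ⟨C2, hC2, b2⟩ := far_total E (m - (ρ - δ))
  obtain ⟨C3, hC3, hk1⟩ := Kb_Wn D
  obtain ⟨X, hX, hGp⟩ := GG_props E
  refine ⟨C1, hC1, C2, hC2, fun g hg hg2 hS ζ => ?_⟩
  obtain ⟨g1, g2, g3, g4⟩ := hGp g hg hg2 ζ
  obtain ⟨pG1, pG2⟩ := IFT_planch g1 g2
  have hn0 := nz_meas (ρ := ρ) (δ := δ) (ε := ε) ζ
  obtain ⟨a1, a2⟩ := ind_props hg hg2 hn0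
  obtain ⟨d1, d2⟩ := ind_props hg hg2 hn0.compl
  have e := Bil_add (Kb_cont D ζ) ((Wn_int n (D.sc_pos ζ)).1.const_mul _) (hk1 ζ) (IFT_continuous g1) pG1 a1 a2 d1 d2
  have e0 : (fun ξ => (nz ρ δ ε ζ).indicator g ξ + (nz ρ δ ε ζ)ᶜ.indicator g ξ) = g :=
    Set.indicator_self_add_compl _ _
  rw [e0] at e
  rw [e, Complex.add_re]
  have r1 := b1 g hg hg2 ζ
  have r2 := (abs_le.1 ((Complex.abs_re_le_norm _).trans (b2 g hg hg2 hS ζ))).1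
  linarith

lemma assemble {κ0 c A : ℝ} {σr : (Fin n → ℝ) → (Fin n → ℝ) → ℝ} (E : Env m ρ δ ε κ0 (fun x ξ => (σr x ξ : ℂ)) χ) (hc : 0 < c)
    (hell : ∀ x ξ, c * jb ξ ^ m ≤ σr x ξ) (hA : ∀ x ξ, |σr x ξ| ≤ A * jb ξ ^ m) (hκ0 : 0 ≤ κ0)
    (hAκ : A * κ0 ≤ c / 2) :
    ∃ C > 0, ∀ (f g : (Fin n → ℝ) → ℂ), Continuous f → Integrable f → Integrable (fun x => ‖f x‖ ^ 2) →
      Continuous g → Integrable g → Integrable (fun x => ‖g x‖ ^ 2) →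
      Integrable (fun ξ => jb ξ ^ m * ‖g ξ‖) →
      Integrable (fun ξ => jb ξ ^ (m - (ρ - δ)) * ‖g ξ‖ ^ 2) → IFT g = f →
      -C * (∫ ξ, jb ξ ^ (m - (ρ - δ)) * ‖g ξ‖ ^ 2) ≤
      (∫ x, (∫ ξ, expi (dotp x ξ) * (σr x ξ : ℂ) * g ξ) * (starRingEnd ℂ) (f x)).re := by
  have D := E.D
  obtain ⟨C1, hC1, C2, hC2, b⟩ := q_lower E hc hell hA hκ0 hAκ
  have hε := D.hε
  set p := m - (ρ - δ) with hp
  have hJ0 : 0 ≤ ∫ ζ : (Fin n → ℝ), jb ζ ^ (-((n:ℝ) + 1)) := integral_nonneg fun ζ => Real.rpow_nonneg (jb_pos ζ).le _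
  refine ⟨C1 * 2 ^ |p| * 16 ^ n + (ε ^ n)⁻¹ * C2 * ∫ ζ : (Fin n → ℝ), jb ζ ^ (-((n:ℝ) + 1)), by positivity,
    fun f g hf hfi hf2 hg hgi hg2 hgm hS hfg => ?_⟩
  obtain ⟨i1, e1⟩ := decomp E (A := A) (fun x ξ => by rw [Complex.norm_real]; exact hA x ξ) hf hfi hf2 hg hgi hg2 hgm
  rw [e1]
  obtain ⟨t1, t2⟩ := TT_tonelli D hg hS
  set Sg := ∫ ξ, jb ξ ^ p * ‖g ξ‖ ^ 2 with hSg
  have hSg0 : 0 ≤ Sg := integral_nonneg fun ξ => mul_nonneg (Real.rpow_nonneg (jb_pos ξ).le _) (by positivity)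
  have hre : (∫ ζ, (nu ρ δ ε ζ : ℂ) * Bil (Kb ρ δ ε (fun x ξ => (σr x ξ : ℂ)) χ ζ) (IFT (GG ρ δ ε χ g ζ)) f).re =
      ∫ ζ, nu ρ δ ε ζ * (Bil (Kb ρ δ ε (fun x ξ => (σr x ξ : ℂ)) χ ζ) (IFT (GG ρ δ ε χ g ζ)) f).re := by
    have := integral_re i1
    simp only [RCLike.re_eq_complex_re, Complex.re_ofReal_mul] at this
    exact this.symm
  rw [hre]
  have i2 : Integrable fun ζ => nu ρ δ ε ζ *
      (Bil (Kb ρ δ ε (fun x ξ => (σr x ξ : ℂ)) χ ζ) (IFT (GG ρ δ ε χ g ζ)) f).re := by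
    have := i1.re
    simpa only [RCLike.re_eq_complex_re, Complex.re_ofReal_mul] using this
  have i3 : Integrable fun ζ : (Fin n → ℝ) => -(C1 * 2 ^ |p| * (∫ ξ, TT ρ δ ε p g ξ ζ) +
      (ε ^ n)⁻¹ * C2 * Sg * jb ζ ^ (-((n:ℝ) + 1))) :=
    ((t1.const_mul _).add (jb_int_neg.const_mul _)).neg
  have hlow := integral_mono i3 i2 fun ζ => by
    have h1 := b g hgi hg2 hS ζ
    rw [hfg] at h1
    have h2 := TT_ge D hgi hg2 hS ζ
    have h3 := nu_le D ζ
    have hν := D.nu_pos ζ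
    have hR := Real.rpow_nonneg (jb_pos ζ).le (-((n:ℝ) + 1))
    refine le_trans ?_ (mul_le_mul_of_nonneg_left h1 hν.le)
    have h4 : C1 * (nu ρ δ ε ζ * (jb ζ ^ p * ∫ ξ, ‖(nz ρ δ ε ζ).indicator g ξ‖ ^ 2)) ≤
      C1 * (2 ^ |p| * ∫ ξ, TT ρ δ ε p g ξ ζ) := mul_le_mul_of_nonneg_left h2 hC1.le
    have h5 : nu ρ δ ε ζ * (C2 * Sg * jb ζ ^ (-((n:ℝ) + 1))) ≤ (ε ^ n)⁻¹ * (C2 * Sg * jb ζ ^ (-((n:ℝ) + 1))) :=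
      mul_le_mul_of_nonneg_right h3 (by positivity)
    simp only
    linarith
  refine le_trans ?_ hlow
  rw [integral_neg, integral_add (t1.const_mul _) (jb_int_neg.const_mul _), integral_const_mul, integral_const_mul]
  have h6 := mul_le_mul_of_nonneg_left t2 (by positivity : 0 ≤ C1 * 2 ^ |p|)
  linarith

end
end


noncomputable section
section
variable {n : ℕ}

lemma exists_chi : ∃ χ : (Fin n → ℝ) → ℂ, ContDiff ℝ (⊤ : ℕ∞) χ ∧ (∀ t, 1 < ‖t‖ → χ t = 0) ∧
    (∀ t, (starRingEnd ℂ) (χ t) = χ t) ∧ ∫ t, ‖χ t‖ ^ 2 = 1 := by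
  let b : ContDiffBump (0 : (Fin n → ℝ)) := ⟨1/2, 1, by norm_num, by norm_num⟩
  have hb : ContDiff ℝ (⊤ : ℕ∞) b := b.contDiff
  have hb0 : ∀ t : (Fin n → ℝ), 1 < ‖t‖ → b t = 0 := fun t ht => b.zero_of_le_dist (by rw [dist_zero_right]; exact ht.le)
  have hI : 0 < ∫ t, b t ^ 2 := by
    refine Continuous.integral_pos_of_hasCompactSupport_nonneg_nonzero (x := 0) (b.continuous.pow 2) ?_
      (fun t => by positivity) ?_
    · refine HasCompactSupport.intro (isCompact_closedBall (0 : (Fin n → ℝ)) 1) fun t ht => ?_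
      rw [mem_closedBall_zero_iff, not_le] at ht
      rw [hb0 t ht]; norm_num
    · have : b 0 = 1 := b.one_of_mem_closedBall (Metric.mem_closedBall_self (by norm_num))
      rw [this]; norm_num
  set I := ∫ t, b t ^ 2 with hId
  refine ⟨fun t => ((b t / √I : ℝ) : ℂ), ?_, fun t ht => ?_, fun t => Complex.conj_ofReal _, ?_⟩
  · exact Complex.ofRealCLM.contDiff.comp (hb.div_const _)
  · simp only [hb0 t ht]; simp
  · have : ∀ t : (Fin n → ℝ), ‖((b t / √I : ℝ) : ℂ)‖ ^ 2 = b t ^ 2 / I := fun t => by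
      rw [Complex.norm_real, Real.norm_eq_abs, sq_abs, div_pow, Real.sq_sqrt hI.le]
    simp only [this]
    rw [integral_div]; exact div_self hI.ne'

lemma schwartz_jb (g : SchwartzMap (Fin n → ℝ) ℂ) (q : ℝ) : Integrable fun ξ : (Fin n → ℝ) => jb ξ ^ q * ‖g ξ‖ := by
  obtain ⟨k, hk⟩ := exists_nat_ge q
  have h0 := (g.integrable_pow_mul volume 0).const_mul (2 ^ k)
  have h1 := (g.integrable_pow_mul volume k).const_mul (2 ^ k * (n:ℝ) ^ k)
  refine (h0.add h1).mono' ((jb_cont.rpow_const fun ζ => Or.inl (jb_pos ζ).ne').mul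
    g.continuous.norm).aestronglyMeasurable (Filter.Eventually.of_forall fun ξ => ?_)
  have hR := jb_pos ξ
  rw [Real.norm_of_nonneg (mul_nonneg (Real.rpow_nonneg hR.le _) (norm_nonneg _))]
  have a1 : jb ξ ≤ 1 + n * ‖ξ‖ := by
    have := (abs_le.1 (jb_lip ξ 0)).2
    have h : jb (0 : (Fin n → ℝ)) = 1 := by simp [jb, wt]
    rw [h, sub_zero] at this; linarith
  have a2 : jb ξ ^ q ≤ jb ξ ^ k := by
    rw [← Real.rpow_natCast]; exact jb_mono ξ hk
  have hn : (0:ℝ) ≤ n * ‖ξ‖ := by positivity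
  have a3 : (1 + n * ‖ξ‖) ^ k ≤ 2 ^ k * (1 + (n * ‖ξ‖) ^ k) := by
    rcases le_total (n * ‖ξ‖) 1 with h | h
    · calc (1 + n * ‖ξ‖) ^ k ≤ 2 ^ k := pow_le_pow_left₀ (by positivity) (by linarith) k
        _ ≤ _ := le_mul_of_one_le_right (by positivity) (by have := pow_nonneg hn k; linarith)
    · calc (1 + n * ‖ξ‖) ^ k ≤ (2 * (n * ‖ξ‖)) ^ k := pow_le_pow_left₀ (by positivity) (by linarith) k
        _ = 2 ^ k * (n * ‖ξ‖) ^ k := mul_pow _ _ _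
        _ ≤ _ := by gcongr; linarith
  calc jb ξ ^ q * ‖g ξ‖ ≤ (2 ^ k * (1 + (n * ‖ξ‖) ^ k)) * ‖g ξ‖ := by
        refine mul_le_mul_of_nonneg_right (a2.trans ((pow_le_pow_left₀ hR.le a1 k).trans a3)) (norm_nonneg _)
    _ = _ := by simp only [Pi.add_apply]; rw [mul_pow]; ring

lemma schwartz_jb2 (g : SchwartzMap (Fin n → ℝ) ℂ) (q : ℝ) : Integrable fun ξ : (Fin n → ℝ) => jb ξ ^ q * ‖g ξ‖ ^ 2 := by
  obtain ⟨B, hB, hb⟩ := g.decay 0 0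
  refine ((schwartz_jb g q).const_mul B).mono' ((jb_cont.rpow_const fun ζ => Or.inl (jb_pos ζ).ne').mul
    (g.continuous.norm.pow 2)).aestronglyMeasurable (Filter.Eventually.of_forall fun ξ => ?_)
  have hR := Real.rpow_nonneg (jb_pos ξ).le q
  have h1 : ‖g ξ‖ ≤ B := by simpa using hb ξ
  rw [Real.norm_of_nonneg (mul_nonneg hR (by positivity))]
  calc jb ξ ^ q * ‖g ξ‖ ^ 2 = ‖g ξ‖ * (jb ξ ^ q * ‖g ξ‖) := by ring
    _ ≤ _ := mul_le_mul_of_nonneg_right h1 (by positivity)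

lemma schwartz_sq (g : SchwartzMap (Fin n → ℝ) ℂ) : Integrable fun ξ : (Fin n → ℝ) => ‖g ξ‖ ^ 2 := by
  simpa using schwartz_jb2 g 0

end
end

/-- Gårding inequality for elliptic symbols in the Hörmander
calculus on `ℝⁿ`. -/
theorem garding_elliptic (n : ℕ) (hn : 1 ≤ n)
    (m ρ δ : ℝ) (hρ : ρ ≤ 1) (hδρ : δ < ρ) (hδ0 : 0 ≤ δ)
    (σ : (Fin n → ℝ) → (Fin n → ℝ) → ℝ)
    (hσ : SymbolClass m ρ δ (fun x ξ => ((σ x ξ : ℝ) : ℂ)))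
    (c : ℝ) (hc : 0 < c)
    (hell : ∀ x ξ, c * wt ξ ^ (m / 2) ≤ σ x ξ) :
    ∃ C > 0, ∀ f : SchwartzMap (Fin n → ℝ) ℂ,
      -C * sobSq ((m - (ρ - δ)) / 2) (⇑f)
        ≤ (∫ x, OpKN (fun x ξ => ((σ x ξ : ℝ) : ℂ)) (⇑f) x
            * (starRingEnd ℂ) (f x)).re := by
  obtain ⟨A, hA, hb⟩ := symb_bounds hσ 0
  have hA1 : ∀ x ξ, |σ x ξ| ≤ A * jb ξ ^ m := fun x ξ => by
    have := (hb ⟨0, hn⟩ 0 le_rfl x ξ).1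
    simpa using this
  have hell1 : ∀ x ξ, c * jb ξ ^ m ≤ σ x ξ := fun x ξ => by
    rw [← jb_rpow]; exact hell x ξ
  obtain ⟨χ, x1, x2, x3, x4⟩ := exists_chi (n := n)
  set κ0 := min (1/2) (c / (2 * A)) with hκd
  have hκ : 0 < κ0 := lt_min (by norm_num) (by positivity)
  have hAκ : A * κ0 ≤ c / 2 := by
    calc A * κ0 ≤ A * (c / (2 * A)) := mul_le_mul_of_nonneg_left (min_le_right _ _) hA.le
      _ = _ := by field_simp
  obtain ⟨ε0, hε0, hN⟩ := N_close x1.continuous x2 x4 hκ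
  have hnp : (0:ℝ) < n := Nat.cast_pos.2 hn
  have D : Dat m ρ δ (min ε0 (1 / (8 * n))) (fun x ξ => ((σ x ξ : ℝ) : ℂ)) χ :=
    ⟨hn, hρ, hδρ, hδ0, hσ, x1, x2, x3, lt_min hε0 (by positivity), by
      calc min ε0 (1 / (8 * (n:ℝ))) * (8 * n) ≤ (1 / (8 * n)) * (8 * n) :=
            mul_le_mul_of_nonneg_right (min_le_right _ _) (by positivity)
        _ = 1 := by field_simp⟩
  have E : Env m ρ δ (min ε0 (1 / (8 * n))) κ0 (fun x ξ => ((σ x ξ : ℝ) : ℂ)) χ :=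
    ⟨D, hN _ _ _ _ _ D (min_le_left _ _), min_le_left _ _⟩
  obtain ⟨C, hC, h⟩ := assemble E hc hell1 hA1 hκ.le hAκ
  refine ⟨C, hC, fun f => ?_⟩
  obtain ⟨g, hg1, hg2⟩ := schwartz_FT f
  have := h f g f.continuous f.integrable (schwartz_sq f) g.continuous g.integrable (schwartz_sq g)
    (schwartz_jb g m) (schwartz_jb2 g _) hg2
  unfold sobSq OpKN
  simp only [← hg1, jb_rpow]
  exact this
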